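/- arXiv:1708.05343 — 4 statements merged into one kernel-verified Lean document; each statement's English description precedes it below -/
import Mathlib

section
/- If the function V₁(m) belongs to the class 𝒱∞, then the function m ↦ V₁(m) − m² belongs to the class 𝒱. -/
open MeasureTheory Filter

noncomputable section

/-- The Cauchy–Stieltjes kernel density `f(x,m) = V(m)/(V(m)+m(m-x))`. -/
def cskKernel (V : ℝ → ℝ) (m x : ℝ) : ℝ := V m / (V m + m * (m - x))

/-- `ν` is a non-degenerate, compactly supported probability measure on `ℝ` with mean `0`. -/
def IsCSKGenerator (ν : Measure ℝ) : Prop :=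
  IsProbabilityMeasure ν ∧
  (∃ R : ℝ, ν (Set.Icc (-R) R)ᶜ = 0) ∧
  (∀ a : ℝ, ν ≠ Measure.dirac a) ∧
  (∫ x, x ∂ν) = 0

/-- `V` is the variance function of the CSK family generated by `ν`:
`V` is real-analytic near `0`, `V 0 > 0`, and for all `m` near `0` the kernel
`f(x,m)` is a.e. nonnegative, integrates to `1`, and has mean `m`. -/
def IsCSKVarianceFun (ν : Measure ℝ) (V : ℝ → ℝ) : Prop :=
  AnalyticAt ℝ V 0 ∧ 0 < V 0 ∧
  ∃ ε > 0, ∀ m : ℝ, |m| < ε →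
    (∀ᵐ x ∂ν, 0 ≤ cskKernel V m x) ∧
    (∫ x, cskKernel V m x ∂ν) = 1 ∧
    (∫ x, x * cskKernel V m x ∂ν) = m

/-- The class `𝒱` of variance functions of CSK families generated by
non-degenerate compactly supported probability measures with mean `0` and variance `1`. -/
def memV (V : ℝ → ℝ) : Prop :=
  ∃ ν : Measure ℝ, IsCSKGenerator ν ∧ (∫ x, x ^ 2 ∂ν) = 1 ∧ IsCSKVarianceFun ν V

/-- The class `𝒱∞`: those `V` such that `m ↦ V (c * m)` is in `𝒱` for every real `c`. -/
def memVinf (V : ℝ → ℝ) : Prop := ∀ c : ℝ, memV (fun m => V (c * m))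


open scoped CompactlySupported InnerProductSpace in
theorem exists_spectral {H : Type*} [NormedAddCommGroup H] [InnerProductSpace ℂ H] [CompleteSpace H]
    (T : H →L[ℂ] H) (hT : IsSelfAdjoint T) (e : H) (he : ‖e‖ = 1) :
    ∃ ν : Measure ℝ, IsProbabilityMeasure ν ∧ ν (Set.Icc (-‖T‖) ‖T‖)ᶜ = 0 ∧
      ∀ f : ℝ → ℝ, ContinuousOn f (Set.Icc (-‖T‖) ‖T‖) →
        ∫ x, f x ∂ν = (inner ℂ e (cfc f T e)).re := by
  have hnt : Nontrivial H := ⟨⟨e, 0, by rintro rfl; simp at he⟩⟩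
  have hspec : spectrum ℝ T ⊆ Set.Icc (-‖T‖) ‖T‖ := by
    intro x hx
    have := spectrum.norm_le_norm_of_mem hx
    rw [Real.norm_eq_abs] at this
    exact abs_le.mp this
  have hcs : CompactSpace (spectrum ℝ T) := isCompact_iff_compactSpace.mp (spectrum.isCompact T)
  have hmeas : MeasurableSet (spectrum ℝ T) := (spectrum.isCompact T).isClosed.measurableSet
  let Λ₀ : C_c(spectrum ℝ T, ℝ) →ₗ[ℝ] ℝ :=
    { toFun := fun f => (inner ℂ e (cfcHom hT (f : C(spectrum ℝ T, ℝ)) e)).re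
      map_add' := by
        intro f g
        have : ((f + g : C_c(spectrum ℝ T, ℝ)) : C(spectrum ℝ T, ℝ)) = (f : C(spectrum ℝ T, ℝ)) + g := rfl
        rw [this, map_add]
        simp
      map_smul' := by
        intro c f
        have : ((c • f : C_c(spectrum ℝ T, ℝ)) : C(spectrum ℝ T, ℝ)) = c • (f : C(spectrum ℝ T, ℝ)) := rfl
        rw [this, map_smul]
        simp [inner_smul_right_eq_smul] }
  have hpos : ∀ f, 0 ≤ f → 0 ≤ Λ₀ f := by
    intro f hf
    let g : C(spectrum ℝ T, ℝ) := ⟨fun x => Real.sqrt (f x), by fun_prop⟩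
    have hg : (f : C(spectrum ℝ T, ℝ)) = star g * g := by
      ext x
      simp [g]
      rw [Real.mul_self_sqrt (hf x)]
    change 0 ≤ (inner ℂ e (cfcHom hT (f : C(spectrum ℝ T, ℝ)) e)).re
    rw [hg, map_mul, map_star, ContinuousLinearMap.star_eq_adjoint, mul_apply_eq_comp,
      ContinuousLinearMap.adjoint_inner_right]
    exact inner_self_nonneg (𝕜 := ℂ)
  let Λ : C_c(spectrum ℝ T, ℝ) →ₚ[ℝ] ℝ := PositiveLinearMap.mk₀ Λ₀ hpos
  let μ := RealRMK.rieszMeasure Λ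
  have hint : ∀ f : C(spectrum ℝ T, ℝ), ∫ x, f x ∂μ = (inner ℂ e (cfcHom hT f e)).re := by
    intro f
    exact RealRMK.integral_rieszMeasure Λ (CompactlySupportedContinuousMap.continuousMapEquiv f)
  have h1 := hint 1
  simp [map_one, he] at h1
  have hprob : IsProbabilityMeasure μ := by
    constructor
    rw [Measure.real] at h1
    exact (ENNReal.toReal_eq_one_iff _).mp h1
  refine ⟨μ.map Subtype.val, Measure.isProbabilityMeasure_map measurable_subtype_coe.aemeasurable, ?_, ?_⟩
  · rw [Measure.map_apply measurable_subtype_coe measurableSet_Icc.compl]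
    convert measure_empty (μ := μ)
    ext x
    simpa using hspec x.2
  · intro f hf
    rw [(MeasurableEmbedding.subtype_coe hmeas).integral_map, cfc_apply f T hT (hf.mono hspec)]
    exact hint ⟨_, (hf.mono hspec).domRestrict⟩

open scoped InnerProductSpace in
theorem exists_arrow {K : Type*} [NormedAddCommGroup K] [InnerProductSpace ℂ K] [CompleteSpace K]
    (A : K →L[ℂ] K) (hA : IsSelfAdjoint A) (u : K) (hu : ‖u‖ = 1) :
    ∃ ν : Measure ℝ, ∃ R : ℝ, 0 ≤ R ∧ IsProbabilityMeasure ν ∧ ν (Set.Icc (-R) R)ᶜ = 0 ∧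
      ∫ x, x ∂ν = 0 ∧ ∫ x, x ^ 2 ∂ν = 1 ∧
      ∀ (ζ g : ℝ) (v : K), |ζ| * R < 1 → v - (ζ : ℂ) • A v = u → inner ℂ u v = (g : ℂ) →
        1 - ζ ^ 2 * g ≠ 0 → ∫ x, (1 - ζ * x)⁻¹ ∂ν = (1 - ζ ^ 2 * g)⁻¹ := by
  let E := WithLp.prodContinuousLinearEquiv 2 ℂ ℂ K
  let T : WithLp 2 (ℂ × K) →L[ℂ] WithLp 2 (ℂ × K) :=
    (E.symm : (ℂ × K) →L[ℂ] WithLp 2 (ℂ × K)) ∘L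
      ((innerSL ℂ u ∘L ContinuousLinearMap.snd ℂ ℂ K).prod
        (ContinuousLinearMap.toSpanSingleton ℂ u ∘L ContinuousLinearMap.fst ℂ ℂ K +
          A ∘L ContinuousLinearMap.snd ℂ ℂ K)) ∘L (E : WithLp 2 (ℂ × K) →L[ℂ] (ℂ × K))
  have hTfst : ∀ p, (T p).fst = inner ℂ u p.snd := fun p => rfl
  have hTsnd : ∀ p, (T p).snd = p.fst • u + A p.snd := fun p => rfl
  have hT : IsSelfAdjoint T := by
    rw [ContinuousLinearMap.isSelfAdjoint_iff_isSymmetric]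
    intro p q
    have hA' := (ContinuousLinearMap.isSelfAdjoint_iff_isSymmetric.mp hA) p.snd q.snd
    simp only [ContinuousLinearMap.coe_coe] at hA' ⊢
    rw [WithLp.prod_inner_apply, WithLp.prod_inner_apply]
    change inner ℂ (T p).fst q.fst + inner ℂ (T p).snd q.snd =
      inner ℂ p.fst (T q).fst + inner ℂ p.snd (T q).snd
    rw [hTfst, hTsnd, hTfst, hTsnd, inner_add_left, inner_add_right, hA']
    simp only [inner_smul_left, inner_smul_right, RCLike.inner_apply, inner_conj_symm]
    ring
  let e : WithLp 2 (ℂ × K) := WithLp.toLp 2 (1, 0)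
  have hin : ∀ p, inner ℂ e p = p.fst := by
    intro p
    rw [WithLp.prod_inner_apply]
    simp [e]
  have he : ‖e‖ = 1 := by
    have : ‖e‖ ^ 2 = 1 := by
      rw [WithLp.prod_norm_sq_eq_of_L2]; simp [e]
    nlinarith [norm_nonneg e]
  have hTe : T e = WithLp.toLp 2 (0, u) := by
    apply (WithLp.equiv 2 (ℂ × K)).injective
    apply Prod.ext
    · change (T e).fst = 0
      rw [hTfst]; simp [e]
    · change (T e).snd = u
      rw [hTsnd]; simp [e]
  obtain ⟨ν, hν, hsupp, hint⟩ := exists_spectral T hT e he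
  refine ⟨ν, ‖T‖, norm_nonneg _, hν, hsupp, ?_, ?_, ?_⟩
  · rw [hint (fun x => x) (by fun_prop), cfc_id' ℝ T, hin, hTe]; rfl
  · rw [hint (fun x => x ^ 2) (by fun_prop), cfc_pow (fun x => x) 2 T, cfc_id' ℝ T, hin, pow_two, mul_apply_eq_comp, hTfst, hTe]
    simp [hu]
  · intro ζ g v hζ hv hg hne
    have hpos : ∀ x ∈ Set.Icc (-‖T‖) ‖T‖, 0 < 1 - ζ * x := by
      intro x hx
      have : |ζ * x| ≤ |ζ| * ‖T‖ := by
        rw [abs_mul]; gcongr; exact abs_le.mpr hx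
      linarith [le_abs_self (ζ * x)]
    have hcont : ContinuousOn (fun x => (1 - ζ * x)⁻¹) (Set.Icc (-‖T‖) ‖T‖) :=
      ContinuousOn.inv₀ (by fun_prop) (fun x hx => (hpos x hx).ne')
    rw [hint _ hcont, hin]
    have hnt : Nontrivial (WithLp 2 (ℂ × K)) := ⟨⟨e, 0, by intro h; rw [h] at he; simp at he⟩⟩
    have hspec : spectrum ℝ T ⊆ Set.Icc (-‖T‖) ‖T‖ := by
      intro x hx
      have := spectrum.norm_le_norm_of_mem hx
      rw [Real.norm_eq_abs] at this
      exact abs_le.mp this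
    have hmul : cfc (fun x => (1 - ζ * x)⁻¹) T * (1 - ζ • T) = 1 := by
      have h1 : (1 - ζ • T) = cfc (fun x : ℝ => 1 - ζ * x) T := by
        rw [cfc_sub (fun _ => (1:ℝ)) (fun x => ζ * x) T, cfc_const_one ℝ T, cfc_const_mul ζ (fun x => x) T, cfc_id' ℝ T]
      rw [h1, ← cfc_mul _ _ T (hcont.mono hspec) (by fun_prop)]
      rw [← cfc_const_one ℝ T]
      apply cfc_congr
      intro x hx
      exact inv_mul_cancel₀ (hpos x (hspec hx)).ne'
    let a : ℂ := ((1 - ζ ^ 2 * g)⁻¹ : ℝ)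
    let w : WithLp 2 (ℂ × K) := WithLp.toLp 2 (a, (a * ζ) • v)
    have hw : (1 - ζ • T) w = e := by
      have h2 : (1 - ζ • T) w = w - (ζ : ℂ) • T w := by
        simp
      rw [h2]
      apply (WithLp.equiv 2 (ℂ × K)).injective
      apply Prod.ext
      · change w.fst - (ζ : ℂ) * (T w).fst = 1
        rw [hTfst]
        change a - ζ * inner ℂ u ((a * ζ) • v) = 1
        rw [inner_smul_right, hg]
        have hne' : (1 - (ζ : ℂ) ^ 2 * g) ≠ 0 := by exact_mod_cast hne
        simp only [a]
        push_cast
        field_simp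
      · change w.snd - (ζ : ℂ) • (T w).snd = 0
        rw [hTsnd]
        change (a * ζ) • v - (ζ : ℂ) • (a • u + A ((a * ζ) • v)) = 0
        rw [map_smul, ← hv]
        module
    have h3 : cfc (fun x => (1 - ζ * x)⁻¹) T e = w := by
      rw [← hw, ← mul_apply_eq_comp, hmul]; rfl
    rw [h3]
    change a.re = _
    simp only [a, Complex.ofReal_re]

theorem exists_boolean (ω : Measure ℝ) [IsProbabilityMeasure ω] (L : ℝ)
    (hL : ω (Set.Icc (-L) L)ᶜ = 0) :
    ∃ ν : Measure ℝ, ∃ R : ℝ, 0 ≤ R ∧ IsProbabilityMeasure ν ∧ ν (Set.Icc (-R) R)ᶜ = 0 ∧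
      ∫ x, x ∂ν = 0 ∧ ∫ x, x ^ 2 ∂ν = 1 ∧
      ∀ ζ : ℝ, |ζ| * R < 1 → |ζ| * L < 1 → 1 - ζ ^ 2 * ∫ y, (1 - ζ * y)⁻¹ ∂ω ≠ 0 →
        ∫ x, (1 - ζ * x)⁻¹ ∂ν = (1 - ζ ^ 2 * ∫ y, (1 - ζ * y)⁻¹ ∂ω)⁻¹ := by
  have hae : ∀ᵐ y ∂ω, y ∈ Set.Icc (-L) L := by
    rw [ae_iff]; exact hL
  have hX : MemLp (fun y : ℝ => (y : ℂ)) ⊤ ω := by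
    apply memLp_top_of_bound (C := L) (by fun_prop)
    filter_upwards [hae] with y hy
    simpa using abs_le.mpr hy
  let A : Lp ℂ 2 ω →L[ℂ] Lp ℂ 2 ω := (ContinuousLinearMap.mul ℂ ℂ).holderL ω ⊤ 2 2 hX.toLp
  have hAc : ∀ f : Lp ℂ 2 ω, A f =ᵐ[ω] fun y => (y : ℂ) * f y := by
    intro f
    have h1 := (ContinuousLinearMap.mul ℂ ℂ).coeFn_holder (r := 2) hX.toLp f
    filter_upwards [h1, hX.coeFn_toLp] with y h1 h2
    change ((ContinuousLinearMap.mul ℂ ℂ).holder 2 hX.toLp f) y = _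
    rw [h1, h2]; rfl
  have hA : IsSelfAdjoint A := by
    rw [ContinuousLinearMap.isSelfAdjoint_iff_isSymmetric]
    intro f g
    simp only [ContinuousLinearMap.coe_coe]
    rw [L2.inner_def, L2.inner_def]
    apply integral_congr_ae
    filter_upwards [hAc f, hAc g] with y h1 h2
    rw [h1, h2]
    simp only [RCLike.inner_apply, map_mul, Complex.conj_ofReal]
    ring
  have h1m : MemLp (fun _ : ℝ => (1 : ℂ)) 2 ω := memLp_const 1
  let u : Lp ℂ 2 ω := h1m.toLp
  have hu : ‖u‖ = 1 := by
    simp only [u, Lp.norm_toLp]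
    rw [eLpNorm_const _ (by norm_num) (IsProbabilityMeasure.ne_zero ω)]
    simp
  obtain ⟨ν, R, hR, hν, hs, hm, hv, hz⟩ := exists_arrow A hA u hu
  refine ⟨ν, R, hR, hν, hs, hm, hv, ?_⟩
  intro ζ hζR hζL hne
  have hpos : ∀ x ∈ Set.Icc (-L) L, 1 - |ζ| * L ≤ 1 - ζ * x := by
    intro x hx
    have : |ζ * x| ≤ |ζ| * L := by
      rw [abs_mul]; gcongr; exact abs_le.mpr hx
    linarith [le_abs_self (ζ * x)]
  have hvm : MemLp (fun y : ℝ => (((1 - ζ * y)⁻¹ : ℝ) : ℂ)) 2 ω := by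
    apply MemLp.of_bound (by fun_prop) ((1 - |ζ| * L)⁻¹)
    filter_upwards [hae] with y hy
    have := hpos y hy
    rw [Complex.norm_real, Real.norm_eq_abs, abs_of_nonneg (inv_nonneg.mpr (by linarith))]
    exact inv_anti₀ (by linarith) this
  refine hz ζ _ hvm.toLp hζR ?_ ?_ hne
  · apply Lp.ext
    filter_upwards [Lp.coeFn_sub hvm.toLp ((ζ : ℂ) • A hvm.toLp), Lp.coeFn_smul (ζ : ℂ) (A hvm.toLp),
      hAc hvm.toLp, hvm.coeFn_toLp, h1m.coeFn_toLp, hae] with y e1 e2 e3 e4 e5 hy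
    have := hpos y hy
    have h0 : (1 - ζ * y) ≠ 0 := by linarith
    have h0' : (1 - (ζ:ℂ) * y) ≠ 0 := by exact_mod_cast h0
    rw [e1, Pi.sub_apply, e2, Pi.smul_apply, e3, e4, e5]
    push_cast
    rw [smul_eq_mul]
    field_simp
  · rw [L2.inner_def, ← integral_complex_ofReal]
    apply integral_congr_ae
    filter_upwards [hvm.coeFn_toLp, h1m.coeFn_toLp] with y e4 e5
    rw [e4, e5]
    simp

theorem complexify (V : ℝ → ℝ) (hV : AnalyticAt ℝ V 0) :
    ∃ W : ℂ → ℂ, AnalyticAt ℂ W 0 ∧ ∀ᶠ x : ℝ in nhds 0, W x = V x := by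
  obtain ⟨p, r, hp⟩ := hV
  obtain ⟨ρ, hρ0, hρ⟩ := ENNReal.lt_iff_exists_nnreal_btwn.mp hp.r_pos
  obtain ⟨C, hC0, hC⟩ := p.norm_mul_pow_le_of_lt_radius (hρ.trans_le hp.r_le)
  let Q : FormalMultilinearSeries ℂ ℂ ℂ :=
    FormalMultilinearSeries.ofScalars ℂ (fun n => (p.coeff n : ℂ))
  have hQ : (ρ : ENNReal) ≤ Q.radius := by
    apply Q.le_radius_of_bound C
    intro n
    have : ‖Q n‖ = ‖p n‖ := by
      simp only [Q, FormalMultilinearSeries.ofScalars_norm, Complex.norm_real]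
      exact (FormalMultilinearSeries.norm_apply_eq_norm_coef (p := p) (n := n)).symm
    rw [this]; exact hC n
  have hQ0 : 0 < Q.radius := hρ0.trans_le hQ
  have hQs := Q.hasFPowerSeriesOnBall hQ0
  refine ⟨Q.sum, ⟨Q, hQs.hasFPowerSeriesAt⟩, ?_⟩
  have hnear : ∀ᶠ x : ℝ in nhds 0, |x| < ρ := by
    have : Continuous (fun x : ℝ => |x|) := by fun_prop
    exact this.continuousAt.eventually_lt_const (by simpa using hρ0)
  filter_upwards [hnear] with x hx
  have h1 := hp.hasSum (y := x) (by
    rw [Metric.mem_eball, edist_zero_right]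
    refine lt_trans ?_ hρ
    rw [← ofReal_norm, ENNReal.ofReal_lt_coe_iff (by positivity)]
    exact hx)
  have h2 := hQs.hasSum (y := (x : ℂ)) (by
    rw [Metric.mem_eball, edist_zero_right]
    refine lt_of_lt_of_le ?_ hQ
    rw [← ofReal_norm, ENNReal.ofReal_lt_coe_iff (by positivity)]
    simpa using hx)
  simp only [zero_add] at h1 h2
  have h3 := (Complex.hasSum_ofReal.mpr h1)
  refine h2.unique ?_
  have hfun : (fun n => Q n fun _ => (x : ℂ)) = fun n => ((p n fun _ => x : ℝ) : ℂ) := by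
    ext n
    simp [Q, FormalMultilinearSeries.ofScalars_apply_eq, FormalMultilinearSeries.apply_eq_pow_smul_coeff, mul_comm]
  rw [hfun]
  exact h3

theorem resolvent_series (ω : Measure ℝ) [IsProbabilityMeasure ω] (R : ℝ) (hR : 0 ≤ R)
    (hs : ω (Set.Icc (-R) R)ᶜ = 0) (ζ : ℂ) (hζ : ‖ζ‖ * R < 1) :
    HasSum (fun n : ℕ => ((∫ y, y ^ n ∂ω : ℝ) : ℂ) * ζ ^ n) (∫ y : ℝ, (1 - ζ * y)⁻¹ ∂ω) := by
  have hae : ∀ᵐ y ∂ω, y ∈ Set.Icc (-R) R := by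
    rw [ae_iff]; exact hs
  have hb : ∀ n : ℕ, ∀ᵐ y : ℝ ∂ω, ‖(ζ * (y:ℂ)) ^ n‖ ≤ (‖ζ‖ * R) ^ n := by
    intro n
    filter_upwards [hae] with y hy
    rw [norm_pow, norm_mul, Complex.norm_real, Real.norm_eq_abs]
    gcongr
    exact abs_le.mpr hy
  have hint : ∀ n : ℕ, Integrable (fun y : ℝ => (ζ * (y:ℂ)) ^ n) ω := fun n =>
    Integrable.of_bound (by fun_prop) _ (hb n)
  have key := hasSum_integral_of_summable_integral_norm hint (by
    refine Summable.of_nonneg_of_le (fun n => by positivity) (fun n => ?_)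
      (summable_geometric_of_lt_one (by positivity) hζ)
    calc ∫ y : ℝ, ‖(ζ * (y:ℂ)) ^ n‖ ∂ω ≤ ∫ y, (‖ζ‖ * R) ^ n ∂ω :=
          integral_mono_ae (hint n).norm (integrable_const _) (hb n)
      _ = _ := by simp)
  have e1 : (fun n : ℕ => ((∫ y, y ^ n ∂ω : ℝ) : ℂ) * ζ ^ n) =
      fun n => ∫ y : ℝ, (ζ * (y:ℂ)) ^ n ∂ω := by
    ext n
    rw [← integral_complex_ofReal, mul_comm, ← integral_const_mul]
    congr 1; ext y
    push_cast; ring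
  have e2 : ∫ y : ℝ, (1 - ζ * y)⁻¹ ∂ω = ∫ y : ℝ, ∑' n : ℕ, (ζ * (y:ℂ)) ^ n ∂ω := by
    apply integral_congr_ae
    filter_upwards [hb 1] with y hy
    rw [tsum_geometric_of_norm_lt_one]
    simpa using lt_of_le_of_lt hy (by simpa using hζ)
  rw [e1, e2]
  exact key

theorem supp_of_moments (ω : Measure ℝ) [IsProbabilityMeasure ω] (R : ℝ)
    (hs : ω (Set.Icc (-R) R)ᶜ = 0) (C L : ℝ) (hL : 0 < L)
    (hm : ∀ n : ℕ, |∫ y, y ^ n ∂ω| ≤ C * L ^ n) : ω (Set.Icc (-L) L)ᶜ = 0 := by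
  have hae : ∀ᵐ y ∂ω, y ∈ Set.Icc (-R) R := by
    rw [ae_iff]; exact hs
  have key : ∀ L' > L, ω {y | L' ≤ |y|} = 0 := by
    intro L' hL'
    have hb : ∀ n : ℕ, ω.real {y | L' ≤ |y|} ≤ C * ((L / L') ^ 2) ^ n := by
      intro n
      have hint : Integrable (fun y : ℝ => y ^ (2 * n)) ω := by
        apply Integrable.of_bound (by fun_prop) (R ^ (2 * n))
        filter_upwards [hae] with y hy
        rw [norm_pow]; gcongr
        exact abs_le.mpr hy
      have h1 := mul_meas_ge_le_integral_of_nonneg (μ := ω) (f := fun y : ℝ => y ^ (2 * n))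
        (ae_of_all _ (fun y => by change 0 ≤ y ^ (2 * n); rw [pow_mul]; positivity)) hint (L' ^ (2 * n))
      have h2 : ω.real {y | L' ≤ |y|} ≤ ω.real {y | L' ^ (2 * n) ≤ y ^ (2 * n)} := by
        apply measureReal_mono
        · intro y hy
          change L' ^ (2 * n) ≤ y ^ (2 * n)
          rw [← Even.pow_abs (even_two_mul n) y]
          have : L' ≤ |y| := hy
          exact pow_le_pow_left₀ (hL.trans hL').le this _
        · finiteness
      have h3 := (le_abs_self _).trans (hm (2 * n))
      have h4 : 0 < L' ^ (2 * n) := pow_pos (hL.trans hL') _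
      have h5 : L' ^ (2 * n) * ω.real {y | L' ≤ |y|} ≤ C * L ^ (2 * n) := by
        refine le_trans ?_ (h1.trans h3)
        gcongr
      rw [← pow_mul, div_pow, ← mul_div_assoc, le_div_iff₀ h4]
      linarith
    have hlt : (L / L') ^ 2 < 1 := by
      have : L / L' < 1 := (div_lt_one (hL.trans hL')).mpr hL'
      have h0 : 0 < L / L' := div_pos hL (hL.trans hL')
      nlinarith
    have ht : Tendsto (fun n : ℕ => C * ((L / L') ^ 2) ^ n) atTop (nhds (C * 0)) :=
      (tendsto_pow_atTop_nhds_zero_of_lt_one (by positivity) hlt).const_mul C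
    have h6 := ge_of_tendsto' ht hb
    rw [mul_zero] at h6
    have h7 : ω.real {y | L' ≤ |y|} = 0 := le_antisymm h6 measureReal_nonneg
    rwa [measureReal_eq_zero_iff] at h7
  have hsub : (Set.Icc (-L) L)ᶜ ⊆ ⋃ n : ℕ, {y : ℝ | L + 1 / ((n : ℝ) + 1) ≤ |y|} := by
    intro y hy
    have hy' : L < |y| := by
      by_contra h
      exact hy (abs_le.mp (not_lt.mp h))
    obtain ⟨n, hn⟩ := exists_nat_one_div_lt (sub_pos.mpr hy')
    exact Set.mem_iUnion.mpr ⟨n, by change L + 1 / ((n : ℝ) + 1) ≤ |y|; linarith⟩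
  refine measure_mono_null hsub (measure_iUnion_null fun n => key _ ?_)
  have : 0 < 1 / ((n : ℝ) + 1) := by positivity
  linarith

theorem uniform_inverse (W : ℂ → ℂ) (hW : AnalyticAt ℂ W 0) (hW0 : W 0 = 1) :
    ∃ δ > 0, ∃ ρ > 0, ∀ s : ℝ, 0 ≤ s → s ≤ 1 → ∀ K : ℂ → ℂ,
      (∀ᶠ M in nhds (0 : ℂ), K (M / (W M + s * M ^ 2)) = (W M + s * M ^ 2) ^ 2 / W M) →
      ∃ Φ : ℂ → ℂ, DifferentiableOn ℂ Φ (Metric.ball 0 ρ) ∧ (∀ z ∈ Metric.ball 0 ρ, ‖Φ z‖ ≤ 2) ∧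
        (∀ᶠ z in nhds (0 : ℂ), Φ z = K z) ∧
        ∀ M : ℂ, ‖M‖ < δ → ‖W M - 1‖ ≤ 1 / 20 ∧ ‖M / (W M + s * M ^ 2)‖ < ρ / 4 ∧
          Φ (M / (W M + s * M ^ 2)) = (W M + s * M ^ 2) ^ 2 / W M := by
  have e1 : ∀ᶠ M in nhds (0 : ℂ), AnalyticAt ℂ W M := hW.eventually_analyticAt
  have e2 : ∀ᶠ M in nhds (0 : ℂ), ‖W M - 1‖ < 1 / 20 := by
    have : ContinuousAt (fun M => ‖W M - 1‖) 0 := (hW.continuousAt.sub continuousAt_const).norm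
    exact this.eventually_lt_const (by simp [hW0])
  have e3 : ∀ᶠ M in nhds (0 : ℂ), ‖M * deriv W M‖ < 1 / 20 := by
    have : ContinuousAt (fun M => ‖M * deriv W M‖) 0 :=
      (continuousAt_id.mul hW.deriv.continuousAt).norm
    exact this.eventually_lt_const (by simp)
  have e4 : ∀ᶠ M in nhds (0 : ℂ), ‖M ^ 2‖ < 1 / 20 := by
    have : ContinuousAt (fun M : ℂ => ‖M ^ 2‖) 0 := by fun_prop
    exact this.eventually_lt_const (by simp)
  obtain ⟨d, hd, hball⟩ := Metric.eventually_nhds_iff_ball.mp (e1.and (e2.and (e3.and e4)))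
  refine ⟨d / 32, by positivity, d / 4, by positivity, ?_⟩
  intro s hs0 hs1 K hK
  set D : ℂ → ℂ := fun M => W M + s * M ^ 2 with hD
  set q : ℂ → ℂ := fun M => M / D M with hq
  have ht : ∀ M ∈ Metric.ball (0:ℂ) d, ‖(s : ℂ) * M ^ 2‖ ≤ 1 / 20 := by
    intro M hM
    obtain ⟨-, -, -, h4⟩ := hball M hM
    rw [norm_mul, Complex.norm_real, Real.norm_eq_abs, abs_of_nonneg hs0]
    nlinarith [norm_nonneg (M ^ 2)]
  have hD1 : ∀ M ∈ Metric.ball (0:ℂ) d, ‖D M - 1‖ ≤ 1 / 10 := by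
    intro M hM
    obtain ⟨-, h2, -, -⟩ := hball M hM
    have : D M - 1 = (W M - 1) + s * M ^ 2 := by simp only [hD]; ring
    rw [this]
    linarith [norm_add_le (W M - 1) (s * M ^ 2), ht M hM]
  have hDlow : ∀ M ∈ Metric.ball (0:ℂ) d, 9 / 10 ≤ ‖D M‖ := by
    intro M hM
    have h := norm_sub_norm_le (1 : ℂ) (1 - D M)
    have h' := hD1 M hM
    rw [norm_sub_rev] at h'
    simp only [norm_one, sub_sub_cancel] at h
    linarith
  have hDup : ∀ M ∈ Metric.ball (0:ℂ) d, ‖D M‖ ≤ 11 / 10 := by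
    intro M hM
    have h := norm_add_le (1 : ℂ) (D M - 1)
    have h' := hD1 M hM
    simp only [norm_one, add_sub_cancel] at h
    linarith
  have hDne : ∀ M ∈ Metric.ball (0:ℂ) d, D M ≠ 0 := by
    intro M hM h
    have := hDlow M hM
    rw [h, norm_zero] at this
    linarith
  have hWlow : ∀ M ∈ Metric.ball (0:ℂ) d, 19 / 20 ≤ ‖W M‖ := by
    intro M hM
    obtain ⟨-, h2, -, -⟩ := hball M hM
    have h := norm_sub_norm_le (1 : ℂ) (1 - W M)
    rw [norm_sub_rev] at h2
    simp only [norm_one, sub_sub_cancel] at h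
    linarith
  have hWne : ∀ M ∈ Metric.ball (0:ℂ) d, W M ≠ 0 := by
    intro M hM h
    have := hWlow M hM
    rw [h, norm_zero] at this
    linarith
  have hDd : ∀ M ∈ Metric.ball (0:ℂ) d, HasDerivAt D (deriv W M + s * (2 * M)) M := by
    intro M hM
    have h1 := (hball M hM).1.differentiableAt.hasDerivAt
    have h2 : HasDerivAt (fun M : ℂ => (s : ℂ) * M ^ 2) (s * (2 * M)) M := by
      simpa using (hasDerivAt_pow 2 M).const_mul (s : ℂ)
    exact h1.add h2
  let q' : ℂ → ℂ := fun M => (1 * D M - M * (deriv W M + s * (2 * M))) / D M ^ 2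
  have hqd : ∀ M ∈ Metric.ball (0:ℂ) d, HasDerivAt q (q' M) M := fun M hM =>
    (hasDerivAt_id M).div (hDd M hM) (hDne M hM)
  have hq' : ∀ M ∈ Metric.ball (0:ℂ) d, ‖q' M - 1‖ ≤ 1 / 2 := by
    intro M hM
    obtain ⟨-, h2, h3, -⟩ := hball M hM
    have h5 := ht M hM
    have hne := hDne M hM
    have heq : q' M - 1 = ((W M - 1) - s * M ^ 2 - M * deriv W M - (D M - 1) * (D M + 1)) / D M ^ 2 := by
      simp only [q']
      field_simp
      simp only [hD]
      ring
    rw [heq, norm_div, norm_pow, div_le_iff₀ (by have := hDlow M hM; positivity)]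
    have h6 : ‖(D M - 1) * (D M + 1)‖ ≤ 1 / 10 * (21 / 10) := by
      rw [norm_mul]
      have := norm_add_le (D M) 1
      rw [norm_one] at this
      have h7 := hD1 M hM
      have h8 := hDup M hM
      gcongr
      linarith
    have h9 := norm_sub_le ((W M - 1) - s * M ^ 2 - M * deriv W M) ((D M - 1) * (D M + 1))
    have h10 := norm_sub_le ((W M - 1) - s * M ^ 2) (M * deriv W M)
    have h11 := norm_sub_le (W M - 1) (s * M ^ 2)
    have h12 := hDlow M hM
    nlinarith
  have hq'ne : ∀ M ∈ Metric.ball (0:ℂ) d, q' M ≠ 0 := by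
    intro M hM h
    have := hq' M hM
    rw [h] at this
    norm_num at this
  have happ : ApproximatesLinearOn q ((ContinuousLinearEquiv.refl ℂ ℂ : ℂ ≃L[ℂ] ℂ) : ℂ →L[ℂ] ℂ)
      (Metric.ball 0 d) (1 / 2) := by
    intro x hx y hy
    have := (convex_ball (0:ℂ) d).norm_image_sub_le_of_norm_hasDerivWithin_le
      (f := fun M => q M - M) (f' := fun M => q' M - 1) (C := 1 / 2)
      (fun M hM => ((hqd M hM).sub (hasDerivAt_id M)).hasDerivWithinAt) hq' hy hx
    convert this using 2
    · simp; ring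
    · simp
  have hN : ‖(((ContinuousLinearEquiv.refl ℂ ℂ).symm : ℂ ≃L[ℂ] ℂ) : ℂ →L[ℂ] ℂ)‖₊ = 1 := by
    have : (((ContinuousLinearEquiv.refl ℂ ℂ).symm : ℂ ≃L[ℂ] ℂ) : ℂ →L[ℂ] ℂ)
      = ContinuousLinearMap.id ℂ ℂ := rfl
    rw [this]; exact ContinuousLinearMap.nnnorm_id
  have hc : Subsingleton ℂ ∨ (1 / 2 : NNReal) <
      ‖(((ContinuousLinearEquiv.refl ℂ ℂ).symm : ℂ ≃L[ℂ] ℂ) : ℂ →L[ℂ] ℂ)‖₊⁻¹ := by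
    right; rw [hN, inv_one]; exact NNReal.half_lt_self one_ne_zero
  let P := happ.toOpenPartialHomeomorph q (Metric.ball 0 d) hc Metric.isOpen_ball
  have hPs : P.source = Metric.ball 0 d := rfl
  have hPc : ∀ M, P M = q M := fun M => rfl
  have hq0 : q 0 = 0 := by simp [hq]
  have htgt : Metric.ball (0:ℂ) (d / 4) ⊆ P.target := by
    have h1 := happ.closedBall_subset_target hc Metric.isOpen_ball (b := 0) (ε := d / 2)
      (by positivity) (Metric.closedBall_subset_ball (by linarith))
    refine subset_trans ?_ h1
    rw [hN, hq0]
    intro z hz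
    rw [mem_ball_zero_iff] at hz
    rw [mem_closedBall_zero_iff]
    norm_num
    linarith
  have h0t : (0:ℂ) ∈ P.target := htgt (Metric.mem_ball_self (by positivity))
  have hsymm0 : P.symm 0 = 0 := by
    have := P.left_inv (x := 0) (by rw [hPs]; exact Metric.mem_ball_self hd)
    rwa [hPc, hq0] at this
  have hmem : ∀ z ∈ Metric.ball (0:ℂ) (d / 4), P.symm z ∈ Metric.ball (0:ℂ) d := fun z hz =>
    P.map_target (htgt hz)
  refine ⟨fun z => D (P.symm z) ^ 2 / W (P.symm z), ?_, ?_, ?_, ?_⟩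
  · intro z hz
    apply DifferentiableAt.differentiableWithinAt
    have hM := hmem z hz
    have h1 : DifferentiableAt ℂ P.symm z :=
      (P.hasDerivAt_symm (htgt hz) (hq'ne _ hM) (hqd _ hM)).differentiableAt
    have h2 : DifferentiableAt ℂ (fun z => D (P.symm z)) z :=
      (hDd _ hM).differentiableAt.comp z h1
    have h3 : DifferentiableAt ℂ (fun z => W (P.symm z)) z :=
      (hball _ hM).1.differentiableAt.comp z h1
    exact (h2.pow 2).div h3 (hWne _ hM)
  · intro z hz
    have hM := hmem z hz
    rw [norm_div, norm_pow, div_le_iff₀ (by linarith [hWlow _ hM])]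
    nlinarith [hWlow _ hM, hDup _ hM, norm_nonneg (D (P.symm z))]
  · have hcont : Tendsto P.symm (nhds 0) (nhds 0) := by
      have := (P.continuousAt_symm h0t)
      rw [ContinuousAt, hsymm0] at this
      exact this
    filter_upwards [hcont.eventually hK, Metric.ball_mem_nhds (0:ℂ) (show 0 < d / 4 by positivity)] with z h1 h2
    have h3 : P.symm z / (W (P.symm z) + s * P.symm z ^ 2) = z := P.right_inv (htgt h2)
    rw [h3] at h1
    exact h1.symm
  · intro M hM
    have hMd : M ∈ Metric.ball (0:ℂ) d := by
      rw [mem_ball_zero_iff]; linarith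
    refine ⟨(hball M hMd).2.1.le, ?_, ?_⟩
    · change ‖M / D M‖ < _
      rw [norm_div, div_lt_iff₀ (by linarith [hDlow M hMd])]
      nlinarith [hDlow M hMd]
    · have h3 : P.symm (M / (W M + s * M ^ 2)) = M := P.left_inv hMd
      simp only [h3]
      rfl

theorem uniform_support (V : ℝ → ℝ) (hV : AnalyticAt ℝ V 0) (hV0 : V 0 = 1) :
    ∃ δ > 0, ∃ L > 0, ∀ s : ℝ, 0 ≤ s → s ≤ 1 → ∀ ω : Measure ℝ, IsProbabilityMeasure ω →
      ∀ R : ℝ, ω (Set.Icc (-R) R)ᶜ = 0 →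
      (∀ᶠ M : ℝ in nhds 0, ∫ y, (1 - M / (V M + s * M ^ 2) * y)⁻¹ ∂ω =
        (V M + s * M ^ 2) ^ 2 / V M) →
      ω (Set.Icc (-L) L)ᶜ = 0 ∧ ∀ M : ℝ, |M| < δ → 1 / 2 < V M ∧
        |M / (V M + s * M ^ 2)| * L ≤ 1 / 2 ∧
        ∫ y, (1 - M / (V M + s * M ^ 2) * y)⁻¹ ∂ω = (V M + s * M ^ 2) ^ 2 / V M := by
  obtain ⟨W, hW, hWV⟩ := complexify V hV
  have hW0 : W 0 = 1 := by
    have := hWV.self_of_nhds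
    simpa [hV0] using this
  obtain ⟨δ, hδ, ρ, hρ, hunif⟩ := uniform_inverse W hW hW0
  obtain ⟨δ', hδ', hWV'⟩ := Metric.eventually_nhds_iff_ball.mp hWV
  refine ⟨min δ δ', lt_min hδ hδ', 2 / ρ, by positivity, ?_⟩
  intro s hs0 hs1 ω hω R₀ hR₀ hid
  obtain ⟨R, hR0, hR⟩ : ∃ R : ℝ, 0 ≤ R ∧ ω (Set.Icc (-R) R)ᶜ = 0 := by
    refine ⟨max R₀ 0, le_max_right _ _, measure_mono_null ?_ hR₀⟩
    apply Set.compl_subset_compl.mpr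
    apply Set.Icc_subset_Icc
    · exact neg_le_neg (le_max_left _ _)
    · exact le_max_left _ _
  let w : ℕ → ℂ := fun n => ((∫ y, y ^ n ∂ω : ℝ) : ℂ)
  let K : ℂ → ℂ := fun ζ => ∫ y : ℝ, (1 - ζ * y)⁻¹ ∂ω
  let Q : FormalMultilinearSeries ℂ ℂ ℂ := FormalMultilinearSeries.ofScalars ℂ w
  have hKQ : HasFPowerSeriesAt K Q 0 := by
    rw [hasFPowerSeriesAt_iff]
    have hnear : ∀ᶠ z : ℂ in nhds 0, ‖z‖ * R < 1 := by
      have : ContinuousAt (fun z : ℂ => ‖z‖ * R) 0 := by fun_prop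
      exact this.eventually_lt_const (by simp)
    filter_upwards [hnear] with z hz
    have h := resolvent_series ω R hR0 hR z hz
    simp only [zero_add, Q, FormalMultilinearSeries.coeff_ofScalars, smul_eq_mul]
    simp only [mul_comm (z ^ _)]
    exact h
  have hKreal : ∀ x : ℝ, K x = ((∫ y, (1 - x * y)⁻¹ ∂ω : ℝ) : ℂ) := by
    intro x
    simp only [K]
    rw [← integral_complex_ofReal]
    congr 1; ext y; push_cast; rfl
  have hDan : AnalyticAt ℂ (fun M : ℂ => W M + s * M ^ 2) 0 := by
    apply hW.add
    fun_prop
  have hqan : AnalyticAt ℂ (fun M : ℂ => M / (W M + s * M ^ 2)) 0 :=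
    analyticAt_id.div hDan (by simp [hW0])
  have hFan : AnalyticAt ℂ (fun M : ℂ => (W M + s * M ^ 2) ^ 2 / W M) 0 :=
    (hDan.pow 2).div hW (by simp [hW0])
  have hKan : AnalyticAt ℂ (fun M : ℂ => K (M / (W M + s * M ^ 2))) 0 := by
    apply AnalyticAt.fun_comp (g := K) _ hqan
    simpa using hKQ.analyticAt
  have hKid : ∀ᶠ M in nhds (0 : ℂ), K (M / (W M + s * M ^ 2)) = (W M + s * M ^ 2) ^ 2 / W M := by
    rw [← hKan.frequently_eq_iff_eventually_eq hFan]
    have ht : Tendsto (fun x : ℝ => (x : ℂ)) (nhdsWithin 0 {0}ᶜ) (nhdsWithin 0 {0}ᶜ) := by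
      apply tendsto_nhdsWithin_of_tendsto_nhds_of_eventually_within
      · have : ContinuousAt (fun x : ℝ => (x : ℂ)) 0 := by fun_prop
        have h2 : Tendsto (fun x : ℝ => (x : ℂ)) (nhds 0) (nhds 0) := by
          simpa [ContinuousAt] using this
        exact h2.mono_left nhdsWithin_le_nhds
      · filter_upwards [self_mem_nhdsWithin] with x hx
        simpa using hx
    apply ht.frequently
    apply Eventually.frequently
    apply Eventually.filter_mono nhdsWithin_le_nhds
    filter_upwards [hWV, hid] with M h1 h2
    rw [h1]
    have := hKreal (M / (V M + s * M ^ 2))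
    rw [h2] at this
    push_cast at this
    exact this
  obtain ⟨Φ, hΦd, hΦb, hΦK, hΦ⟩ := hunif s hs0 hs1 K hKid
  have hρ2 : (0:ℝ) < ρ / 2 := by positivity
  let r : NNReal := ⟨ρ / 2, hρ2.le⟩
  have hΦps : HasFPowerSeriesOnBall Φ (cauchyPowerSeries Φ 0 r) 0 r :=
    DifferentiableOn.hasFPowerSeriesOnBall
      (hΦd.mono (Metric.closedBall_subset_ball (by change ρ / 2 < ρ; linarith))) hρ2
  have hpQ : cauchyPowerSeries Φ 0 r = Q :=
    hΦps.hasFPowerSeriesAt.eq_formalMultilinearSeries_of_eventually hKQ hΦK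
  rw [hpQ] at hΦps
  have hmom : ∀ n : ℕ, |∫ y, y ^ n ∂ω| ≤ 2 * (2 / ρ) ^ n := by
    intro n
    have h1 := hΦps.factorial_smul 1 n
    rw [← iteratedDeriv_eq_iteratedFDeriv] at h1
    have h2 := Complex.norm_iteratedDeriv_le_of_forall_mem_sphere_norm_le (c := 0) (R := ρ / 2)
      (C := 2) (f := Φ) n hρ2
      ((hΦd.mono (by
        rw [closure_ball _ hρ2.ne']
        exact Metric.closedBall_subset_ball (by linarith))).diffContOnCl)
      (fun z hz => hΦb z (by
        rw [mem_sphere_zero_iff_norm] at hz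
        rw [mem_ball_zero_iff]; linarith))
    rw [← h1] at h2
    have h3 : Q n (fun _ => 1) = w n := by
      simp [Q]
    rw [h3, nsmul_eq_mul, norm_mul, Complex.norm_natCast, Complex.norm_real, Real.norm_eq_abs,
      mul_div_assoc] at h2
    have h4 : (0:ℝ) < n.factorial := by exact_mod_cast n.factorial_pos
    have h5 := le_of_mul_le_mul_left h2 h4
    have h6 : 2 * (2 / ρ) ^ n = 2 / (ρ / 2) ^ n := by
      rw [div_pow, div_pow]; field_simp
    rw [h6]
    exact h5
  have hsupp := supp_of_moments ω R hR 2 (2 / ρ) (by positivity) hmom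
  refine ⟨hsupp, ?_⟩
  intro M hM
  have hMV : W M = V M := hWV' M (by
    rw [mem_ball_zero_iff]; exact lt_of_lt_of_le hM (min_le_right _ _))
  obtain ⟨h1, h2, h3⟩ := hΦ M (by
    rw [Complex.norm_real]; exact lt_of_lt_of_le hM (min_le_left _ _))
  rw [hMV] at h1 h2 h3
  have h1' : |V M - 1| ≤ 1 / 20 := by
    have : ((V M : ℂ) - 1) = ((V M - 1 : ℝ) : ℂ) := by push_cast; rfl
    rwa [this, Complex.norm_real] at h1
  have hqr : (M : ℂ) / ((V M : ℂ) + s * (M : ℂ) ^ 2) = ((M / (V M + s * M ^ 2) : ℝ) : ℂ) := by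
    push_cast; rfl
  rw [hqr] at h2 h3
  have hsmall : |M / (V M + s * M ^ 2)| * (2 / ρ) ≤ 1 / 2 := by
    rw [Complex.norm_real, Real.norm_eq_abs] at h2
    calc |M / (V M + s * M ^ 2)| * (2 / ρ) ≤ ρ / 4 * (2 / ρ) := by gcongr
      _ = 1 / 2 := by field_simp; norm_num
  refine ⟨by linarith [(abs_le.mp h1').1], hsmall, ?_⟩
  have h4 := hΦps.hasSum (y := ((M / (V M + s * M ^ 2) : ℝ) : ℂ)) (by
    rw [Metric.mem_eball, edist_zero_right, ← ofReal_norm,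
      ENNReal.ofReal_lt_coe_iff (by positivity)]
    change _ < ρ / 2
    linarith)
  have h5 := resolvent_series ω (2 / ρ) (by positivity) hsupp ((M / (V M + s * M ^ 2) : ℝ) : ℂ) (by
    rw [Complex.norm_real, Real.norm_eq_abs]; linarith)
  have h6 : (fun n => Q n fun _ => ((M / (V M + s * M ^ 2) : ℝ) : ℂ)) =
      fun n => w n * ((M / (V M + s * M ^ 2) : ℝ) : ℂ) ^ n := by
    ext n
    simp only [Q, FormalMultilinearSeries.ofScalars_apply_eq, smul_eq_mul]
  rw [h6, zero_add] at h4
  have h7 := h5.unique h4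
  rw [h3] at h7
  have h8 := hKreal (M / (V M + s * M ^ 2))
  simp only [K] at h8
  rw [h8] at h7
  exact_mod_cast h7

theorem omega_of_memV (V : ℝ → ℝ) (hVc : ContinuousAt V 0) (hV0 : 0 < V 0) (c : ℝ) (hc : 0 < c)
    (h : memV (fun m => V (c * m))) :
    ∃ ω : Measure ℝ, IsProbabilityMeasure ω ∧ ∃ R : ℝ, 0 ≤ R ∧ ω (Set.Icc (-R) R)ᶜ = 0 ∧
      ∀ᶠ M : ℝ in nhdsWithin 0 {0}ᶜ, ∫ y, (1 - M / (V M + (c⁻¹) ^ 2 * M ^ 2) * y)⁻¹ ∂ω =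
        (V M + (c⁻¹) ^ 2 * M ^ 2) ^ 2 / V M := by
  obtain ⟨ν, ⟨hν, ⟨R₀, hR₀⟩, -, hmean⟩, hvar, -, -, ε, hε, hker⟩ := h
  obtain ⟨R, hR0, hR⟩ : ∃ R : ℝ, 0 ≤ R ∧ ν (Set.Icc (-R) R)ᶜ = 0 := by
    refine ⟨max R₀ 0, le_max_right _ _, measure_mono_null ?_ hR₀⟩
    apply Set.compl_subset_compl.mpr
    apply Set.Icc_subset_Icc
    · exact neg_le_neg (le_max_left _ _)
    · exact le_max_left _ _
  have hae : ∀ᵐ x ∂ν, |x| ≤ R := by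
    have : ∀ᵐ x ∂ν, x ∈ Set.Icc (-R) R := by rw [ae_iff]; exact hR
    filter_upwards [this] with x hx using abs_le.mpr hx
  have hi1 : Integrable (fun x : ℝ => x) ν := Integrable.of_bound (by fun_prop) R hae
  have hi2 : Integrable (fun x : ℝ => x ^ 2) ν := by
    apply Integrable.of_bound (by fun_prop) (R ^ 2)
    filter_upwards [hae] with x hx
    rw [norm_pow]; gcongr; exact hx
  let ν₂ : Measure ℝ := ν.withDensity (fun x => ENNReal.ofReal (x ^ 2))
  have hν₂ : IsProbabilityMeasure ν₂ := by
    constructor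
    simp only [ν₂]
    rw [withDensity_apply _ MeasurableSet.univ, Measure.restrict_univ,
      ← ofReal_integral_eq_lintegral_ofReal hi2 (ae_of_all _ fun x => sq_nonneg x), hvar,
      ENNReal.ofReal_one]
  have hmeas : Measurable (fun x : ℝ => c⁻¹ * x) := by fun_prop
  have hωint : ∀ f : ℝ → ℝ, Measurable f → ∫ y, f y ∂(ν₂.map (fun x => c⁻¹ * x)) =
      ∫ x, x ^ 2 * f (c⁻¹ * x) ∂ν := by
    intro f hf
    rw [integral_map hmeas.aemeasurable hf.aestronglyMeasurable]
    simp only [ν₂]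
    rw [integral_withDensity_eq_integral_toReal_smul (by fun_prop)
      (ae_of_all _ fun x => ENNReal.ofReal_lt_top)]
    congr 1; ext x
    rw [ENNReal.toReal_ofReal (sq_nonneg x), smul_eq_mul]
  refine ⟨ν₂.map (fun x => c⁻¹ * x), Measure.isProbabilityMeasure_map hmeas.aemeasurable,
    c⁻¹ * R, by positivity, ?_, ?_⟩
  · rw [Measure.map_apply hmeas measurableSet_Icc.compl]
    apply withDensity_absolutelyContinuous
    refine measure_mono_null ?_ hR
    intro x hx hx'
    apply hx
    have hc' : 0 < c⁻¹ := by positivity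
    constructor
    · have := hx'.1; nlinarith
    · have := hx'.2; nlinarith
  · have e1 : ∀ᶠ M : ℝ in nhds 0, |c⁻¹ * M| < ε := by
      have : ContinuousAt (fun M : ℝ => |c⁻¹ * M|) 0 := by fun_prop
      exact this.eventually_lt_const (by simpa using hε)
    have e2 : ∀ᶠ M : ℝ in nhds 0, V 0 / 2 < V M := hVc.eventually_const_lt (by linarith)
    have e3 : ∀ᶠ M : ℝ in nhds 0, |M| * (c⁻¹ * R) < V 0 / 4 := by
      have : ContinuousAt (fun M : ℝ => |M| * (c⁻¹ * R)) 0 := by fun_prop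
      exact this.eventually_lt_const (by simp; linarith)
    filter_upwards [nhdsWithin_le_nhds e1, nhdsWithin_le_nhds e2, nhdsWithin_le_nhds e3,
      self_mem_nhdsWithin] with M h1 h2 h3 hM0
    have hM0 : M ≠ 0 := hM0
    obtain ⟨-, hone, -⟩ := hker _ h1
    have hcm : c * (c⁻¹ * M) = M := by field_simp
    set s := (c⁻¹) ^ 2 with hs
    have hs0 : 0 < s := by positivity
    set D := V M + s * M ^ 2 with hD
    have hVM : 0 < V M := by linarith
    have hDV : V M ≤ D := by rw [hD]; nlinarith [mul_nonneg hs0.le (sq_nonneg M)]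
    have hD0 : 0 < D := by linarith
    set q := M / D with hq
    have hqb : |q| * (c⁻¹ * R) ≤ 1 / 2 := by
      rw [hq, abs_div, abs_of_pos hD0, div_mul_eq_mul_div, div_le_iff₀ hD0]
      linarith
    have hu : ∀ x : ℝ, |x| ≤ R → 1 / 2 ≤ 1 - q * (c⁻¹ * x) := by
      intro x hx
      have : |q * (c⁻¹ * x)| ≤ |q| * (c⁻¹ * R) := by
        rw [abs_mul, abs_mul, abs_of_pos (show 0 < c⁻¹ by positivity)]
        gcongr
      linarith [le_abs_self (q * (c⁻¹ * x))]
    have hinv : ∀ x : ℝ, |x| ≤ R → |(1 - q * (c⁻¹ * x))⁻¹| ≤ 2 := by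
      intro x hx
      have := hu x hx
      rw [abs_of_pos (by positivity)]
      rw [inv_le_comm₀ (by positivity) (by norm_num)]
      linarith
    rw [hωint _ (by fun_prop)]
    have hiA : Integrable (fun x : ℝ => x ^ 2 * (1 - q * (c⁻¹ * x))⁻¹) ν := by
      apply Integrable.of_bound (by fun_prop) (R ^ 2 * 2)
      filter_upwards [hae] with x hx
      rw [Real.norm_eq_abs, abs_mul, abs_pow]
      gcongr
      exact hinv x hx
    have hI1 : ∫ x, (1 - q * (c⁻¹ * x))⁻¹ ∂ν = D / V M := by
      have h5 : ∫ x, cskKernel (fun m => V (c * m)) (c⁻¹ * M) x ∂ν =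
          ∫ x, V M / D * (1 - q * (c⁻¹ * x))⁻¹ ∂ν := by
        apply integral_congr_ae
        filter_upwards [hae] with x hx
        have := hu x hx
        have hne : 1 - q * (c⁻¹ * x) ≠ 0 := by linarith
        simp only [cskKernel, hcm]
        have h6 : V M + c⁻¹ * M * (c⁻¹ * M - x) = D * (1 - q * (c⁻¹ * x)) := by
          have hDq : D * q = M := by rw [hq]; field_simp
          have h61 : D * (1 - q * (c⁻¹ * x)) = D - (D * q) * (c⁻¹ * x) := by ring
          rw [h61, hDq, hD, hs]
          ring
        rw [h6, div_mul_eq_div_div, div_eq_mul_inv]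
      rw [h5, integral_const_mul] at hone
      field_simp at hone ⊢
      linarith
    have hI2 : ∫ x, (1 - q * (c⁻¹ * x))⁻¹ ∂ν =
        1 + q ^ 2 * s * ∫ x, x ^ 2 * (1 - q * (c⁻¹ * x))⁻¹ ∂ν := by
      have h7 : ∫ x, (1 - q * (c⁻¹ * x))⁻¹ ∂ν =
          ∫ x, ((1 + q * c⁻¹ * x) + q ^ 2 * s * (x ^ 2 * (1 - q * (c⁻¹ * x))⁻¹)) ∂ν := by
        apply integral_congr_ae
        filter_upwards [hae] with x hx
        have := hu x hx
        have hne : 1 - q * (c⁻¹ * x) ≠ 0 := by linarith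
        have h8 : (1 - q * (c⁻¹ * x)) * (1 - q * (c⁻¹ * x))⁻¹ = 1 := mul_inv_cancel₀ hne
        simp only [hs]
        linear_combination (1 + q * (c⁻¹ * x)) * h8
      have hi3 : Integrable (fun x : ℝ => 1 + q * c⁻¹ * x) ν :=
        (integrable_const _).add (hi1.const_mul _)
      rw [h7, integral_add hi3 (hiA.const_mul _),
        integral_add (integrable_const _) (hi1.const_mul _), integral_const_mul, integral_const_mul,
        hmean]
      simp
    rw [hI1] at hI2
    have hqsq : q ^ 2 = M ^ 2 / D ^ 2 := by rw [hq, div_pow]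
    have hDVs : D / V M - 1 = s * M ^ 2 / V M := by
      rw [hD]; field_simp; ring
    have h9 : M ^ 2 / D ^ 2 * s * ∫ x, x ^ 2 * (1 - q * (c⁻¹ * x))⁻¹ ∂ν = s * M ^ 2 / V M := by
      rw [← hDVs, ← hqsq]; linarith
    have hM2 : 0 < M ^ 2 := by positivity
    generalize (∫ x, x ^ 2 * (1 - q * (c⁻¹ * x))⁻¹ ∂ν) = I at h9 ⊢
    field_simp at h9 ⊢
    linarith

theorem V_zero_eq_one (V : ℝ → ℝ) (hVc : ContinuousAt V 0) (hV0 : 0 < V 0) (s : ℝ)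
    (ω : Measure ℝ) [IsProbabilityMeasure ω] (R : ℝ) (hR : ω (Set.Icc (-R) R)ᶜ = 0)
    (h : ∀ᶠ M : ℝ in nhdsWithin 0 {0}ᶜ, ∫ y, (1 - M / (V M + s * M ^ 2) * y)⁻¹ ∂ω =
        (V M + s * M ^ 2) ^ 2 / V M) : V 0 = 1 := by
  have hae : ∀ᵐ x ∂ω, |x| ≤ R := by
    have : ∀ᵐ x ∂ω, x ∈ Set.Icc (-R) R := by rw [ae_iff]; exact hR
    filter_upwards [this] with x hx using abs_le.mpr hx
  have hD : ContinuousAt (fun M => V M + s * M ^ 2) 0 := hVc.add (by fun_prop)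
  have hq : ContinuousAt (fun M => M / (V M + s * M ^ 2)) 0 :=
    continuousAt_id.div hD (by simpa using hV0.ne')
  have hF : ContinuousAt (fun M => (V M + s * M ^ 2) ^ 2 / V M) 0 := (hD.pow 2).div hVc hV0.ne'
  have hG : ContinuousAt (fun M => ∫ y, (1 - M / (V M + s * M ^ 2) * y)⁻¹ ∂ω) 0 := by
    apply continuousAt_of_dominated (bound := fun _ => 2)
    · exact Eventually.of_forall fun M => by fun_prop
    · have e1 : ∀ᶠ M in nhds (0:ℝ), |M / (V M + s * M ^ 2)| * R < 1 / 2 := by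
        have : ContinuousAt (fun M => |M / (V M + s * M ^ 2)| * R) 0 := hq.abs.mul continuousAt_const
        exact this.eventually_lt_const (by simp)
      filter_upwards [e1] with M hM
      filter_upwards [hae] with y hy
      have h1 : |M / (V M + s * M ^ 2) * y| ≤ |M / (V M + s * M ^ 2)| * R := by
        rw [abs_mul]; gcongr
      have h2 := le_abs_self (M / (V M + s * M ^ 2) * y)
      rw [Real.norm_eq_abs, abs_of_pos (by rw [inv_pos]; linarith), inv_le_comm₀ (by linarith) (by norm_num)]
      linarith
    · exact integrable_const _
    · refine ae_of_all _ fun y => ?_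
      apply ContinuousAt.inv₀
      · exact continuousAt_const.sub (hq.mul continuousAt_const)
      · simp
  have h1 : Tendsto (fun M => ∫ y, (1 - M / (V M + s * M ^ 2) * y)⁻¹ ∂ω) (nhdsWithin 0 {0}ᶜ) _ :=
    hG.tendsto.mono_left nhdsWithin_le_nhds
  have h2 : Tendsto (fun M => (V M + s * M ^ 2) ^ 2 / V M) (nhdsWithin 0 {0}ᶜ) _ :=
    hF.tendsto.mono_left nhdsWithin_le_nhds
  have h3 := tendsto_nhds_unique (h1.congr' h) h2
  simp at h3
  field_simp at h3
  exact h3.symm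

theorem limit_omega (V : ℝ → ℝ) (δ L : ℝ) (hL : 0 < L) (s : ℕ → ℝ)
    (hs : Tendsto s atTop (nhds 0)) (ω : ℕ → Measure ℝ) (hω : ∀ n, IsProbabilityMeasure (ω n))
    (hsupp : ∀ n, ω n (Set.Icc (-L) L)ᶜ = 0)
    (h : ∀ n, ∀ M : ℝ, |M| < δ → 1 / 2 < V M ∧ |M / (V M + s n * M ^ 2)| * L ≤ 1 / 2 ∧
      ∫ y, (1 - M / (V M + s n * M ^ 2) * y)⁻¹ ∂(ω n) = (V M + s n * M ^ 2) ^ 2 / V M) :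
    ∃ ω₀ : Measure ℝ, IsProbabilityMeasure ω₀ ∧ ω₀ (Set.Icc (-L) L)ᶜ = 0 ∧
      ∀ M : ℝ, |M| < δ → 1 / 2 < V M ∧ |M / V M| * L ≤ 1 / 2 ∧
        ∫ y, (1 - M / V M * y)⁻¹ ∂ω₀ = V M := by
  have hme : MeasurableEmbedding (Subtype.val : Set.Icc (-L) L → ℝ) :=
    MeasurableEmbedding.subtype_coe measurableSet_Icc
  have hP : ∀ n, IsProbabilityMeasure ((ω n).comap (Subtype.val : Set.Icc (-L) L → ℝ)) := by
    intro n
    have := hω n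
    constructor
    rw [hme.comap_apply, Set.image_univ, Subtype.range_coe]
    exact (prob_compl_eq_zero_iff measurableSet_Icc).mp (hsupp n)
  let P : ℕ → ProbabilityMeasure (Set.Icc (-L) L) := fun n => ⟨_, hP n⟩
  have hint : ∀ n, ∀ f : ℝ → ℝ, ∫ y, f y ∂(ω n) = ∫ e, f e.1 ∂(P n : Measure (Set.Icc (-L) L)) := by
    intro n f
    have h1 : ∫ e, f e.1 ∂(P n : Measure (Set.Icc (-L) L)) = ∫ y in Set.Icc (-L) L, f y ∂(ω n) :=
      integral_subtype_comap measurableSet_Icc f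
    rw [h1, Measure.restrict_eq_self_of_ae_mem]
    rw [ae_iff]; exact hsupp n
  let U : Ultrafilter ℕ := Ultrafilter.of atTop
  have hU : (U : Filter ℕ) ≤ atTop := Ultrafilter.of_le atTop
  have : CompactSpace (Set.Icc (-L) L) := isCompact_iff_compactSpace.mp isCompact_Icc
  obtain ⟨Q, -, hQ⟩ := isCompact_univ.ultrafilter_le_nhds (U.map P) (by simp)
  have hQ' : Tendsto P U (nhds Q) := hQ
  rw [ProbabilityMeasure.tendsto_iff_forall_integral_tendsto] at hQ'
  refine ⟨(Q : Measure (Set.Icc (-L) L)).map Subtype.val,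
    Measure.isProbabilityMeasure_map measurable_subtype_coe.aemeasurable, ?_, ?_⟩
  · rw [Measure.map_apply measurable_subtype_coe measurableSet_Icc.compl]
    convert measure_empty (μ := (Q : Measure (Set.Icc (-L) L)))
    ext e
    simpa using e.2
  intro M hM
  have hV : 1 / 2 < V M := (h 0 M hM).1
  have hV0 : V M ≠ 0 := by linarith
  have hDt : Tendsto (fun n => V M + s n * M ^ 2) atTop (nhds (V M)) := by
    simpa using (tendsto_const_nhds (x := V M)).add (hs.mul_const (M ^ 2))
  have hqt : Tendsto (fun n => M / (V M + s n * M ^ 2)) atTop (nhds (M / V M)) :=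
    tendsto_const_nhds.div hDt hV0
  have hq : |M / V M| * L ≤ 1 / 2 :=
    le_of_tendsto (hqt.abs.mul_const L) (Eventually.of_forall fun n => (h n M hM).2.1)
  refine ⟨hV, hq, ?_⟩
  rw [hme.integral_map]
  have hpos : ∀ q : ℝ, |q| * L ≤ 1 / 2 → ∀ e : Set.Icc (-L) L, 1 / 2 ≤ 1 - q * e.1 := by
    intro q hq e
    have h1 : |q * e.1| ≤ |q| * L := by
      rw [abs_mul]; gcongr; exact abs_le.mpr e.2
    linarith [le_abs_self (q * e.1)]
  have hcont : ∀ q : ℝ, |q| * L ≤ 1 / 2 →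
      Continuous (fun e : Set.Icc (-L) L => (1 - q * e.1)⁻¹) := by
    intro q hq
    apply Continuous.inv₀ (by fun_prop)
    intro e
    have := hpos q hq e
    linarith
  have h1 := hQ' (BoundedContinuousFunction.mkOfCompact ⟨_, hcont _ hq⟩)
  simp only [BoundedContinuousFunction.mkOfCompact_apply, ContinuousMap.coe_mk] at h1
  have hbd : ∀ n, |∫ e, (1 - M / (V M + s n * M ^ 2) * e.1)⁻¹ ∂(P n : Measure (Set.Icc (-L) L)) -
      ∫ e, (1 - M / V M * e.1)⁻¹ ∂(P n : Measure (Set.Icc (-L) L))| ≤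
      4 * |M / (V M + s n * M ^ 2) - M / V M| * L := by
    intro n
    have hqn := (h n M hM).2.1
    have hi : ∀ q : ℝ, |q| * L ≤ 1 / 2 → Integrable (fun e : Set.Icc (-L) L => (1 - q * e.1)⁻¹)
        (P n : Measure (Set.Icc (-L) L)) := fun q hq =>
      (BoundedContinuousFunction.mkOfCompact ⟨_, hcont q hq⟩).integrable _
    rw [← integral_sub (hi _ hqn) (hi _ hq), ← Real.norm_eq_abs]
    refine (norm_integral_le_of_norm_le_const (C := 4 * |M / (V M + s n * M ^ 2) - M / V M| * L)
      (ae_of_all _ fun e => ?_)).trans (by simp)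
    have ha := hpos _ hqn e
    have hb := hpos _ hq e
    generalize M / (V M + s n * M ^ 2) = a at ha ⊢
    generalize M / V M = b at hb ⊢
    have he : |e.1| ≤ L := abs_le.mpr e.2
    rw [Real.norm_eq_abs, inv_sub_inv (by linarith) (by linarith), abs_div,
      abs_of_pos (a := (1 - a * e.1) * (1 - b * e.1)) (by nlinarith),
      div_le_iff₀ (by nlinarith)]
    have h2 : |1 - b * e.1 - (1 - a * e.1)| = |a - b| * |e.1| := by rw [← abs_mul]; congr 1; ring
    rw [h2]
    have h3 : |a - b| * |e.1| ≤ |a - b| * L := by gcongr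
    have h4 : 1 / 4 ≤ (1 - a * e.1) * (1 - b * e.1) := by nlinarith
    have h5 : 0 ≤ |a - b| * L := by positivity
    nlinarith
  have h2 : Tendsto (fun n => ∫ e, (1 - M / (V M + s n * M ^ 2) * e.1)⁻¹
      ∂(P n : Measure (Set.Icc (-L) L))) U (nhds (V M)) := by
    have h3 : Tendsto (fun n => (V M + s n * M ^ 2) ^ 2 / V M) U (nhds (V M)) := by
      have := ((hDt.pow 2).div_const (V M)).mono_left hU
      rwa [show V M ^ 2 / V M = V M by field_simp] at this
    refine h3.congr fun n => ?_
    rw [← (h n M hM).2.2, hint n]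
  have h4 : Tendsto (fun n => 4 * |M / (V M + s n * M ^ 2) - M / V M| * L) U (nhds 0) := by
    have := (((hqt.sub_const (M / V M)).abs.const_mul 4).mul_const L).mono_left hU
    simpa using this
  have h5 := squeeze_zero (fun n => abs_nonneg _) hbd h4
  have h5' := (tendsto_zero_iff_abs_tendsto_zero _).mpr h5
  have h6 := h2.sub h5'
  simp only [sub_sub_cancel, sub_zero] at h6
  exact tendsto_nhds_unique h1 h6

theorem final_step (V : ℝ → ℝ) (hVa : AnalyticAt ℝ V 0) (hV0 : V 0 = 1) (δ L : ℝ) (hδ : 0 < δ)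
    (ω : Measure ℝ) [IsProbabilityMeasure ω] (hL : ω (Set.Icc (-L) L)ᶜ = 0)
    (h : ∀ M : ℝ, |M| < δ → 1 / 2 < V M ∧ |M / V M| * L ≤ 1 / 2 ∧
        ∫ y, (1 - M / V M * y)⁻¹ ∂ω = V M) :
    memV (fun m => V m - m ^ 2) := by
  obtain ⟨ν, R, hR0, hν, hR, hmean, hvar, hid⟩ := exists_boolean ω L hL
  have hae : ∀ᵐ x ∂ν, |x| ≤ R := by
    have : ∀ᵐ x ∂ν, x ∈ Set.Icc (-R) R := by rw [ae_iff]; exact hR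
    filter_upwards [this] with x hx using abs_le.mpr hx
  have hVc := hVa.continuousAt
  refine ⟨ν, ⟨hν, ⟨R, hR⟩, ?_, hmean⟩, hvar, hVa.sub (by fun_prop), by simp [hV0], ?_⟩
  · rintro a rfl
    simp at hmean hvar
    subst hmean
    norm_num at hvar
  have e1 : ∀ᶠ M : ℝ in nhds 0, |M| < δ := by
    have : ContinuousAt (fun M : ℝ => |M|) 0 := by fun_prop
    exact this.eventually_lt_const (by simpa using hδ)
  have e2 : ∀ᶠ M : ℝ in nhds 0, |M / V M| * R < 1 / 2 := by
    have : ContinuousAt (fun M : ℝ => |M / V M| * R) 0 :=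
      (continuousAt_id.div hVc (by rw [hV0]; norm_num)).abs.mul continuousAt_const
    exact this.eventually_lt_const (by simp)
  have e3 : ∀ᶠ M : ℝ in nhds 0, 0 < V M - M ^ 2 := by
    have : ContinuousAt (fun M : ℝ => V M - M ^ 2) 0 := hVc.sub (by fun_prop)
    exact this.eventually_const_lt (by simp [hV0])
  obtain ⟨ε, hε, hall⟩ := Metric.eventually_nhds_iff.mp (e1.and (e2.and e3))
  refine ⟨ε, hε, fun m hm => ?_⟩
  obtain ⟨hmδ, hmR, hpos⟩ := hall (y := m) (by simpa [Real.dist_eq] using hm)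
  obtain ⟨hVm, hqL, hI⟩ := h m hmδ
  have hV : 0 < V m := by linarith
  set q := m / V m with hq
  have hVq : V m * q = m := by rw [hq]; field_simp
  have hu : ∀ x : ℝ, |x| ≤ R → 1 / 2 ≤ 1 - q * x := by
    intro x hx
    have h1 : |q * x| ≤ |q| * R := by rw [abs_mul]; gcongr
    linarith [le_abs_self (q * x)]
  have hk : ∀ x : ℝ, |x| ≤ R → cskKernel (fun m => V m - m ^ 2) m x =
      (V m - m ^ 2) / V m * (1 - q * x)⁻¹ := by
    intro x hx
    have h2 : V m - m ^ 2 + m * (m - x) = V m * (1 - q * x) := by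
      linear_combination (-x) * (-hVq)
    simp only [cskKernel]
    rw [h2, div_mul_eq_div_div, div_eq_mul_inv]
  have hq2 : q ^ 2 * V m = m ^ 2 / V m := by rw [hq]; field_simp
  have h1q : 1 - q ^ 2 * V m = (V m - m ^ 2) / V m := by rw [hq2]; field_simp
  have hJ : ∫ x, (1 - q * x)⁻¹ ∂ν = ((V m - m ^ 2) / V m)⁻¹ := by
    have := hid q (by linarith) (by linarith) (by rw [hI, h1q]; positivity)
    rw [this, hI, h1q]
  have hone : ∫ x, cskKernel (fun m => V m - m ^ 2) m x ∂ν = 1 := by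
    rw [integral_congr_ae (hae.mono hk), integral_const_mul, hJ]
    exact mul_inv_cancel₀ (by positivity)
  refine ⟨?_, hone, ?_⟩
  · filter_upwards [hae] with x hx
    rw [hk x hx]
    have := hu x hx
    have : 0 < 1 - q * x := by linarith
    positivity
  · rcases eq_or_ne m 0 with rfl | hm0
    · have : ∀ x : ℝ, x * cskKernel (fun m => V m - m ^ 2) 0 x = x := by
        intro x; simp [cskKernel, hV0]
      simp only [this, hmean]
    · have hiK : Integrable (fun x => cskKernel (fun m => V m - m ^ 2) m x) ν := by
        by_contra hcon
        rw [integral_undef hcon] at hone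
        norm_num at hone
      have h3 : ∫ x, x * cskKernel (fun m => V m - m ^ 2) m x ∂ν =
          ∫ x, (V m / m * cskKernel (fun m => V m - m ^ 2) m x - (V m - m ^ 2) / m) ∂ν := by
        apply integral_congr_ae
        filter_upwards [hae] with x hx
        have := hu x hx
        have hne : 1 - q * x ≠ 0 := by linarith
        have h8 : (1 - q * x) * (1 - q * x)⁻¹ = 1 := mul_inv_cancel₀ hne
        rw [hk x hx]
        have h9 : V m / m * (1 - q * x) = V m / m - x := by
          rw [hq]; field_simp
        have h10 : x * (1 - q * x)⁻¹ = V m / m * (1 - q * x)⁻¹ - V m / m := by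
          linear_combination ((1 - q * x)⁻¹) * h9 - V m / m * h8
        have h11 : (V m - m ^ 2) / V m * (V m / m) = (V m - m ^ 2) / m := by field_simp
        linear_combination (V m - m ^ 2) / V m * h10 - h11
      rw [h3, integral_sub (hiK.const_mul _) (integrable_const _), integral_const_mul, hone]
      simp
      field_simp
      ring

/-- If `V₁ ∈ 𝒱∞` then `m ↦ V₁(m) − m² ∈ 𝒱`. -/
theorem memV_sub_sq (V₁ : ℝ → ℝ) (h₁ : memVinf V₁) :
    memV (fun m => V₁ m - m ^ 2) := by
  have hone : memV V₁ := by simpa using h₁ 1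
  obtain ⟨-, -, -, hVa, hVpos, -⟩ := id hone
  have hVc := hVa.continuousAt
  have hV0 : V₁ 0 = 1 := by
    obtain ⟨ω, hω, R, -, hR, h⟩ := omega_of_memV V₁ hVc hVpos 1 one_pos (h₁ 1)
    exact V_zero_eq_one V₁ hVc hVpos _ ω R hR h
  obtain ⟨δ, hδ, L, hL, hunif⟩ := uniform_support V₁ hVa hV0
  have hn : ∀ n : ℕ, ∃ ω : Measure ℝ, IsProbabilityMeasure ω ∧ ω (Set.Icc (-L) L)ᶜ = 0 ∧
      ∀ M : ℝ, |M| < δ → 1 / 2 < V₁ M ∧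
        |M / (V₁ M + (((n : ℝ) + 1)⁻¹) ^ 2 * M ^ 2)| * L ≤ 1 / 2 ∧
        ∫ y, (1 - M / (V₁ M + (((n : ℝ) + 1)⁻¹) ^ 2 * M ^ 2) * y)⁻¹ ∂ω =
          (V₁ M + (((n : ℝ) + 1)⁻¹) ^ 2 * M ^ 2) ^ 2 / V₁ M := by
    intro n
    have hc : (0 : ℝ) < (n : ℝ) + 1 := by positivity
    obtain ⟨ω, hω, R, -, hR, h⟩ := omega_of_memV V₁ hVc hVpos _ hc (h₁ _)
    have hle : (((n : ℝ) + 1)⁻¹) ^ 2 ≤ 1 := by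
      apply pow_le_one₀ (by positivity)
      apply inv_le_one_of_one_le₀
      linarith [(Nat.cast_nonneg n : (0 : ℝ) ≤ n)]
    obtain ⟨ha, hb⟩ := hunif _ (by positivity) hle ω hω R hR (by
      rw [eventually_nhdsWithin_iff] at h
      filter_upwards [h] with M hM
      rcases eq_or_ne M 0 with rfl | hM0
      · simp [hV0]
      · exact hM hM0)
    exact ⟨ω, hω, ha, hb⟩
  choose ω hω hsupp hid using hn
  have hs : Tendsto (fun n : ℕ => (((n : ℝ) + 1)⁻¹) ^ 2) atTop (nhds 0) := by
    have := (tendsto_one_div_add_atTop_nhds_zero_nat (𝕜 := ℝ)).pow 2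
    simpa using this
  obtain ⟨ω₀, hω₀, hsupp₀, hid₀⟩ := limit_omega V₁ δ L hL _ hs ω hω hsupp hid
  exact final_step V₁ hVa hV0 δ L hδ ω₀ hsupp₀ hid₀
end
end

section
/- If the function V(m) belongs to the class 𝒱, then the function m ↦ V(m) + m² belongs to the class 𝒱∞. -/
open MeasureTheory Filter

noncomputable section

open scoped ENNReal CompactlySupported


instance cskFact : Fact (0 < (1:ℝ)) := ⟨one_pos⟩
abbrev CSKF : Type := Lp ℂ 2 (AddCircle.haarAddCircle : Measure (AddCircle (1:ℝ)))

instance cskFact2 : Fact ((2:ℝ≥0∞) ≠ ∞) := ⟨by norm_num⟩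

theorem cskSep (ν : Measure ℝ) [IsProbabilityMeasure ν] : TopologicalSpace.SeparableSpace (Lp CSKF 2 ν) := inferInstance

theorem csk_orth_countable {G : Type} [NormedAddCommGroup G] [InnerProductSpace ℂ G] 
    [TopologicalSpace.SeparableSpace G] (w : Set G) (hw : Orthonormal ℂ ((↑) : w → G)) : w.Countable := by
  have hd : ∀ x y : w, x ≠ y → 1 ≤ dist (x:G) y := by
    intro x y hxy
    have h1 : ‖(x:G) - y‖ ^ 2 = 2 := by
      rw [@norm_sub_sq ℂ, hw.1 x, hw.1 y, hw.2 hxy]; norm_num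
    rw [dist_eq_norm]
    nlinarith [norm_nonneg ((x:G)-y)]
  have : DiscreteTopology w := by
    refine DiscreteTopology.of_forall_le_dist one_pos ?_
    intro x y hxy
    exact hd x y hxy
  have := UniformSpace.secondCountable_of_separable G
  have : Countable w := countable_of_Lindelof_of_discrete
  exact Set.countable_coe_iff.mp this

theorem csk_embed (G : Type) [NormedAddCommGroup G] [InnerProductSpace ℂ G] [CompleteSpace G]
    [TopologicalSpace.SeparableSpace G] :
    ∃ (J : G →ₗᵢ[ℂ] CSKF) (Ω : CSKF), ‖Ω‖ = 1 ∧ ∀ g, inner ℂ (J g) Ω = 0 := by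
  obtain ⟨w, b, hb⟩ := exists_hilbertBasis ℂ G
  have hw : w.Countable := csk_orth_countable w (by rw [← hb]; exact b.orthonormal)
  have : Countable w := hw.to_subtype
  obtain ⟨e, he⟩ := exists_injective_nat w
  have ho : Orthonormal ℂ (fourierLp (T := 1) 2) := orthonormal_fourier
  have ho' : Orthonormal ℂ (fun i : w => (fourierLp (T := 1) 2 (e i + 1 : ℤ) : CSKF)) :=
    ho.comp (fun i : w => (e i + 1 : ℤ)) (by
      intro a b h; simp at h; exact he h)
  refine ⟨ho'.orthogonalFamily.linearIsometry.comp b.repr.toLinearIsometry, fourierLp 2 0, ho.1 0, ?_⟩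
  intro g
  have hs := ho'.orthogonalFamily.hasSum_linearIsometry (b.repr g)
  have h2 : HasSum (fun i : w => (0:ℂ)) (inner ℂ (fourierLp (T := 1) 2 0 : CSKF) 
      (ho'.orthogonalFamily.linearIsometry (b.repr g))) := by
    have h3 := hs.mapL (innerSL ℂ (fourierLp (T := 1) 2 0 : CSKF))
    have h4 : ∀ i : w, (innerSL ℂ (fourierLp (T := 1) 2 0 : CSKF)) ((LinearIsometry.toSpanSingleton ℂ CSKF (ho'.1 i)) (b.repr g i)) = 0 := by
      intro i
      rw [innerSL_apply_apply, LinearIsometry.toSpanSingleton_apply, inner_smul_right,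
        ho.2 (by positivity), mul_zero]
    simp only [h4] at h3
    exact h3
  rw [← inner_conj_symm]
  have h5 := h2.unique hasSum_zero
  rw [map_eq_zero]
  exact h5

theorem csk_spectral {H : Type} [NormedAddCommGroup H] [InnerProductSpace ℂ H] [CompleteSpace H]
    (A : H →L[ℂ] H) (hA : IsSelfAdjoint A) (Ω : H) (hΩ : ‖Ω‖ = 1) :
    ∃ μ : Measure ℝ, IsProbabilityMeasure μ ∧ μ (Set.Icc (-‖A‖) ‖A‖)ᶜ = 0 ∧
      ∀ f : ℝ → ℝ, ContinuousOn f (spectrum ℝ A) → 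
        ∫ x, f x ∂μ = (inner ℂ (cfc f A Ω) Ω).re := by
  have : Nontrivial H := ⟨Ω, 0, by rintro rfl; simp at hΩ⟩
  have hc : IsCompact (spectrum ℝ A) := ContinuousFunctionalCalculus.isCompact_spectrum A
  have : CompactSpace (spectrum ℝ A) := isCompact_iff_compactSpace.mp hc
  let L : C_c(spectrum ℝ A, ℝ) →ₗ[ℝ] ℝ :=
    { toFun := fun g => (inner ℂ (cfcHom (R := ℝ) hA (g : C(spectrum ℝ A, ℝ)) Ω) Ω).re
      map_add' := by
        intro g g'
        have : ((g + g' : C_c(spectrum ℝ A, ℝ)) : C(spectrum ℝ A, ℝ)) = 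
          (g : C(spectrum ℝ A, ℝ)) + (g' : C(spectrum ℝ A, ℝ)) := by ext; simp
        rw [this, map_add]; simp
      map_smul' := by
        intro c g
        have : ((c • g : C_c(spectrum ℝ A, ℝ)) : C(spectrum ℝ A, ℝ)) = 
          c • (g : C(spectrum ℝ A, ℝ)) := by ext; simp
        rw [this, map_smul, _root_.smul_apply, ← Complex.coe_smul, inner_smul_left]
        simp }
  let Λ : C_c(spectrum ℝ A, ℝ) →ₚ[ℝ] ℝ := PositiveLinearMap.mk₀ L (by
    intro g hg
    have h1 : 0 ≤ cfcHom (R := ℝ) hA (g : C(spectrum ℝ A, ℝ)) := by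
      rw [cfcHom_nonneg_iff]; intro x; exact hg x
    rw [ContinuousLinearMap.nonneg_iff_isPositive] at h1
    exact h1.re_inner_nonneg_left Ω)
  have hint : ∀ f : ℝ → ℝ, ContinuousOn f (spectrum ℝ A) → 
      ∫ x : spectrum ℝ A, f x ∂(RealRMK.rieszMeasure Λ) = (inner ℂ (cfc f A Ω) Ω).re := by
    intro f hf
    let g : C_c(spectrum ℝ A, ℝ) := ⟨⟨_, hf.domRestrict⟩, HasCompactSupport.of_compactSpace _⟩
    have h := RealRMK.integral_rieszMeasure Λ g
    have h2 : Λ g = (inner ℂ (cfc f A Ω) Ω).re := by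
      rw [cfc_apply f A hA hf]; rfl
    rw [← h2, ← h]; rfl
  have hprob : IsProbabilityMeasure (RealRMK.rieszMeasure Λ) := by
    have h := hint (fun _ => 1) continuousOn_const
    rw [cfc_const_one ℝ A] at h
    have h3 : (inner ℂ Ω Ω : ℂ).re = 1 := by
      rw [inner_self_eq_norm_sq_to_K, hΩ]; simp
    simp only [one_apply_eq_self, h3] at h
    simp only [integral_const, smul_eq_mul, mul_one] at h
    constructor
    rw [Measure.real, ENNReal.toReal_eq_one_iff] at h
    exact h
  refine ⟨(RealRMK.rieszMeasure Λ).map Subtype.val, ?_, ?_, ?_⟩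
  · exact Measure.isProbabilityMeasure_map (by fun_prop)
  · rw [Measure.map_apply (by fun_prop) measurableSet_Icc.compl]
    convert measure_empty (μ := RealRMK.rieszMeasure Λ)
    ext x
    have h := spectrum.norm_le_norm_of_mem (𝕜 := ℝ) x.2
    simp only [Real.norm_eq_abs, abs_le] at h
    simpa using h
  · intro f hf
    rw [← hint f hf]
    exact (MeasurableEmbedding.subtype_coe hc.measurableSet).integral_map f

theorem csk_spectral2 {H : Type} [NormedAddCommGroup H] [InnerProductSpace ℂ H] [CompleteSpace H]
    (A : H →L[ℂ] H) (hA : IsSelfAdjoint A) (Ω : H) (hΩ : ‖Ω‖ = 1) :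
    ∃ μ : Measure ℝ, IsProbabilityMeasure μ ∧ μ (Set.Icc (-‖A‖) ‖A‖)ᶜ = 0 ∧
      ∫ x, x ∂μ = (inner ℂ (A Ω) Ω).re ∧ ∫ x, x ^ 2 ∂μ = (inner ℂ (A Ω) (A Ω)).re ∧
      ∀ (w : ℝ) (ψ : H), ‖A‖ < |w| → (w : ℂ) • ψ - A ψ = Ω →
        ∫ x, (w - x)⁻¹ ∂μ = (inner ℂ ψ Ω).re := by
  obtain ⟨μ, hμ, hμs, hμi⟩ := csk_spectral A hA Ω hΩ
  refine ⟨μ, hμ, hμs, ?_, ?_, ?_⟩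
  · have := hμi (fun x => x) continuousOn_id
    rw [this, cfc_id' ℝ A]
  · have := hμi (fun x => x ^ 2) (by fun_prop)
    rw [this, cfc_pow_id A 2 hA, pow_two]
    change (inner ℂ (A (A Ω)) Ω).re = _
    have h3 : inner ℂ (A (A Ω)) Ω = inner ℂ (A Ω) (A Ω) := by
      nth_rewrite 1 [← hA.adjoint_eq]
      rw [ContinuousLinearMap.adjoint_inner_left]
    rw [h3]
  · intro w ψ hw hψ1
    have : Nontrivial H := ⟨Ω, 0, by rintro rfl; simp at hΩ⟩
    have hne : ∀ x ∈ spectrum ℝ A, w - x ≠ 0 := by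
      intro x hx h0
      have h1 := spectrum.norm_le_norm_of_mem hx
      rw [Real.norm_eq_abs, ← sub_eq_zero.mp h0] at h1
      linarith
    have hcf : ContinuousOn (fun x => (w - x)⁻¹) (spectrum ℝ A) :=
      ContinuousOn.inv₀ (by fun_prop) hne
    rw [hμi _ hcf]
    have h5 : cfc (fun x => (w - x)⁻¹) A * cfc (fun x => w - x) A = 1 := by
      rw [← cfc_mul _ _ A hcf (by fun_prop)]
      rw [← cfc_const_one ℝ A]
      refine cfc_congr fun x hx => ?_
      exact inv_mul_cancel₀ (hne x hx)
    have h6 : cfc (fun x => w - x) A = algebraMap ℝ _ w - A := by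
      rw [cfc_sub (fun _ => w) (fun x => x) A, cfc_const _ A, cfc_id' ℝ A]
    have h7 : cfc (fun x => w - x) A ψ = Ω := by
      rw [h6, ← hψ1]
      simp [Algebra.algebraMap_eq_smul_one]
    have h8 : cfc (fun x => (w - x)⁻¹) A Ω = ψ := by
      rw [← h7]
      exact congrArg (fun B : H →L[ℂ] H => B ψ) h5
    rw [h8]

theorem csk_fock_abs {G F : Type} [NormedAddCommGroup G] [InnerProductSpace ℂ G] [CompleteSpace G]
    [NormedAddCommGroup F] [InnerProductSpace ℂ F] [CompleteSpace F]
    (J : G →ₗᵢ[ℂ] F) (Ω : F) (hΩ : ‖Ω‖ = 1) (hJ : ∀ g, inner ℂ (J g) Ω = 0)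
    (E : F →L[ℂ] G) (X : G →L[ℂ] G) (hX : IsSelfAdjoint X)
    (hXX : ∀ v, E.adjoint (X (X (E v))) = v) (c : ℝ) :
    ∃ A : F →L[ℂ] F, IsSelfAdjoint A ∧ inner ℂ (A Ω) Ω = 0 ∧ inner ℂ (A Ω) (A Ω) = 1 ∧
      ∀ (r m : ℝ) (N : F →L[ℂ] G), r ≠ 0 → ‖N‖ < 1 → (∀ v, E.adjoint (N v) = 0) →
        (∀ v, E.adjoint (X (N v)) = (m : ℂ) • v) →
        (∀ v, (c : ℂ) • (X (N v) - (m : ℂ) • E v) = (r : ℂ) • N v - X (E v)) →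
        ∃ ψ, ((r + m : ℝ) : ℂ) • ψ - A ψ = Ω ∧ inner ℂ ψ Ω = ((r⁻¹ : ℝ) : ℂ) := by
  let K : G →L[ℂ] F := J.toContinuousLinearMap
  let P : G →L[ℂ] G := 1 - E ∘L E.adjoint
  let l : F →L[ℂ] F := K ∘L X ∘L E
  let T : G →L[ℂ] G := P ∘L X ∘L P
  have hXa : X.adjoint = X := hX.adjoint_eq
  have hP : P.adjoint = P := by
    simp only [P, map_sub, ContinuousLinearMap.adjoint_comp, ContinuousLinearMap.adjoint_adjoint]
    congr 1
    exact ContinuousLinearMap.adjoint_id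
  have hT : T.adjoint = T := by
    simp only [T, ContinuousLinearMap.adjoint_comp, hP, hXa, ContinuousLinearMap.comp_assoc]
  have hKΩ : K.adjoint Ω = 0 := by
    refine ext_inner_left ℂ fun g => ?_
    rw [ContinuousLinearMap.adjoint_inner_right, inner_zero_right]
    exact hJ g
  have hKK : ∀ g, K.adjoint (K g) = g := by
    intro g
    refine ext_inner_left ℂ fun g' => ?_
    rw [ContinuousLinearMap.adjoint_inner_right]
    exact J.inner_map_map g' g
  let A : F →L[ℂ] F := l + l.adjoint + (c : ℂ) • (K ∘L T ∘L K.adjoint)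
  have hA : ∀ v, A v = K (X (E v)) + E.adjoint (X (K.adjoint v)) + (c : ℂ) • K (T (K.adjoint v)) := by
    intro v
    simp [A, l, ContinuousLinearMap.adjoint_comp, hXa]
  have hAΩ : A Ω = K (X (E Ω)) := by rw [hA, hKΩ]; simp
  refine ⟨A, ?_, ?_, ?_, ?_⟩
  · rw [ContinuousLinearMap.isSelfAdjoint_iff']
    simp only [A, map_add, map_smulₛₗ, ContinuousLinearMap.adjoint_comp, 
      ContinuousLinearMap.adjoint_adjoint, hT, ContinuousLinearMap.comp_assoc, Complex.conj_ofReal]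
    rw [add_comm l]
  · rw [hAΩ]; exact hJ _
  · rw [hAΩ]
    have h1 : inner ℂ (K (X (E Ω))) (K (X (E Ω))) = inner ℂ (X (E Ω)) (X (E Ω)) := J.inner_map_map _ _
    rw [h1]
    nth_rewrite 1 [← hXa]
    rw [ContinuousLinearMap.adjoint_inner_left, ← ContinuousLinearMap.adjoint_inner_right, hXX,
      inner_self_eq_norm_sq_to_K, hΩ]
    simp
  · intro r m N hr hN h0 hm hc
    have hr' : (r : ℂ) ≠ 0 := by exact_mod_cast hr
    let Q : F →L[ℂ] F := K ∘L N
    have hQ : ‖Q‖ < 1 := by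
      refine lt_of_le_of_lt ?_ hN
      refine ContinuousLinearMap.opNorm_le_bound _ (norm_nonneg _) fun v => ?_
      have : ‖Q v‖ = ‖N v‖ := J.norm_map _
      rw [this]
      exact N.le_opNorm v
    let U := Units.oneSub Q hQ
    let ψ : F := (↑U⁻¹ : F →L[ℂ] F) ((r : ℂ)⁻¹ • Ω)
    have h1 : ψ - K (N ψ) = (r : ℂ)⁻¹ • Ω := by
      have : ((U : F →L[ℂ] F) * (↑U⁻¹ : F →L[ℂ] F)) ((r : ℂ)⁻¹ • Ω) = (r : ℂ)⁻¹ • Ω := by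
        rw [Units.mul_inv]; rfl
      exact this
    clear_value ψ
    have h2 : K.adjoint ψ = N ψ := by
      have := congrArg K.adjoint h1
      rw [map_sub, hKK, map_smul, hKΩ, smul_zero, sub_eq_zero] at this
      exact this
    have h3 : T (N ψ) = X (N ψ) - (m : ℂ) • E ψ := by
      simp [T, P, h0, hm]
    have h4 : (r : ℂ) • K (N ψ) = (r : ℂ) • ψ - Ω := by
      rw [← sub_sub_cancel ψ (K (N ψ)), h1, smul_sub, smul_inv_smul₀ hr']
    refine ⟨ψ, ?_, ?_⟩
    · rw [hA, h2, hm, h3, ← map_smul K (c : ℂ), hc, map_sub, map_smul, h4]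
      push_cast
      module
    · have : ψ = K (N ψ) + (r : ℂ)⁻¹ • Ω := by rw [← h1]; abel
      rw [congrArg (fun z => inner ℂ z Ω) this, inner_add_left, inner_smul_left, inner_self_eq_norm_sq_to_K, hΩ]
      have h5 : inner ℂ (K (N ψ)) Ω = 0 := hJ _
      rw [h5]; simp

theorem csk_mul (ν : Measure ℝ) [IsProbabilityMeasure ν] {E : Type} [NormedAddCommGroup E]
    [InnerProductSpace ℂ E] (h : ℝ → ℝ) (hm : Measurable h) (C : ℝ)
    (hb : ∀ᵐ x ∂ν, |h x| ≤ C) :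
    ∃ M : Lp E 2 ν →L[ℂ] Lp E 2 ν, ∀ u, M u =ᵐ[ν] fun x => (h x : ℂ) • u x := by
  have hh : MemLp (fun x => (h x : ℂ)) ∞ ν := by
    refine memLp_top_of_bound (by fun_prop) C ?_
    filter_upwards [hb] with x hx
    simpa using hx
  refine ⟨(ContinuousLinearMap.lsmul ℂ ℂ).holderL ν ∞ 2 2 (hh.toLp _), fun u => ?_⟩
  have h1 := ContinuousLinearMap.coeFn_holder (r := 2) (ContinuousLinearMap.lsmul ℂ ℂ) (hh.toLp _) u
  filter_upwards [h1, hh.coeFn_toLp] with x h1 h2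
  rw [← h2]
  exact h1

theorem csk_mul_sa (ν : Measure ℝ) {E : Type} [NormedAddCommGroup E]
    [InnerProductSpace ℂ E] [CompleteSpace E] (h : ℝ → ℝ)
    (M : Lp E 2 ν →L[ℂ] Lp E 2 ν) (hM : ∀ u, M u =ᵐ[ν] fun x => (h x : ℂ) • u x) :
    IsSelfAdjoint M := by
  rw [ContinuousLinearMap.isSelfAdjoint_iff_isSymmetric]
  intro u v
  change inner ℂ (M u) v = inner ℂ u (M v)
  rw [L2.inner_def, L2.inner_def]
  refine integral_congr_ae ?_
  filter_upwards [hM u, hM v] with x h1 h2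
  rw [h1, h2, inner_smul_left, inner_smul_right, Complex.conj_ofReal]

theorem csk_const_adj (ν : Measure ℝ) [IsProbabilityMeasure ν] {E : Type} [NormedAddCommGroup E]
    [InnerProductSpace ℂ E] [CompleteSpace E] (h : ℝ → ℝ) (u : Lp E 2 ν) (v : E)
    (hu : u =ᵐ[ν] fun x => (h x : ℂ) • v) :
    (Lp.constL 2 ν ℂ : E →L[ℂ] Lp E 2 ν).adjoint u = ((∫ x, h x ∂ν : ℝ) : ℂ) • v := by
  refine ext_inner_right ℂ fun w => ?_
  rw [ContinuousLinearMap.adjoint_inner_left, L2.inner_def, inner_smul_left, Complex.conj_ofReal,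
    ← integral_complex_ofReal, ← integral_mul_const]
  refine integral_congr_ae ?_
  have h3 : (Lp.constL 2 ν ℂ : E →L[ℂ] Lp E 2 ν) w =ᵐ[ν] fun _ => w := Lp.coeFn_const ..
  filter_upwards [hu, h3] with x h1 h2
  rw [h1, h2, inner_smul_left, Complex.conj_ofReal]

theorem csk_fock (ν : Measure ℝ) [IsProbabilityMeasure ν] (R : ℝ) (hR : ∀ᵐ x ∂ν, |x| ≤ R)
    (h2 : ∫ x, x ^ 2 ∂ν = 1) (c : ℝ) :
    ∃ (μ : Measure ℝ) (R' : ℝ), IsProbabilityMeasure μ ∧ μ (Set.Icc (-R') R')ᶜ = 0 ∧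
      ∫ x, x ∂μ = 0 ∧ ∫ x, x ^ 2 ∂μ = 1 ∧ ∀ (r m : ℝ) (g : ℝ → ℝ), Measurable g → r ≠ 0 →
        (∀ᵐ x ∂ν, |g x| ≤ 1 / 2) → (∀ᵐ x ∂ν, (r - c * x) * g x = x - c * m) →
        ∫ x, g x ∂ν = 0 → ∫ x, x * g x ∂ν = m → R' < |r + m| →
        ∫ x, (r + m - x)⁻¹ ∂μ = r⁻¹ := by
  have := cskSep ν
  obtain ⟨J, Ω, hΩ, hJ⟩ := csk_embed (Lp CSKF 2 ν)
  obtain ⟨X, hX⟩ := csk_mul ν (E := CSKF) (fun x => x) measurable_id R hR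
  let E : CSKF →L[ℂ] Lp CSKF 2 ν := Lp.constL 2 ν ℂ
  have hE : ∀ v, E v =ᵐ[ν] fun _ => v := fun v => Lp.coeFn_const ..
  have hXX : ∀ v, E.adjoint (X (X (E v))) = v := by
    intro v
    have := csk_const_adj ν (fun x => x ^ 2) (X (X (E v))) v (by
      filter_upwards [hX (X (E v)), hX (E v), hE v] with x h1 h2 h3
      rw [h1, h2, h3, smul_smul]; push_cast; ring_nf)
    rw [h2] at this
    simpa using this
  obtain ⟨A, hA, hA1, hA2, hA3⟩ := csk_fock_abs J Ω hΩ hJ E X (csk_mul_sa ν _ X hX) hXX c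
  obtain ⟨μ, hμ, hμs, hμ1, hμ2, hμi⟩ := csk_spectral2 A hA Ω hΩ
  refine ⟨μ, ‖A‖, hμ, hμs, ?_, ?_, ?_⟩
  · rw [hμ1, hA1]; simp
  · rw [hμ2, hA2]; simp
  · intro r m g hg hr hg2 hgc hg0 hgm hw
    obtain ⟨M, hM⟩ := csk_mul ν (E := CSKF) g hg _ hg2
    have hME : ∀ v, M (E v) =ᵐ[ν] fun x => (g x : ℂ) • v := by
      intro v
      filter_upwards [hM (E v), hE v] with x h1 h2
      rw [h1, h2]
    have hXME : ∀ v, X (M (E v)) =ᵐ[ν] fun x => ((x * g x : ℝ) : ℂ) • v := by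
      intro v
      filter_upwards [hX (M (E v)), hME v] with x h1 h2
      rw [h1, h2, smul_smul]; push_cast; rfl
    obtain ⟨ψ, hψ1, hψ2⟩ := hA3 r m (M ∘L E) hr (by
        refine lt_of_le_of_lt (b := 1 / 2) ?_ (by norm_num)
        refine ContinuousLinearMap.opNorm_le_bound _ (by norm_num) fun v => ?_
        have h1 : ‖M (E v)‖ ≤ 1 / 2 * ‖E v‖ := by
          refine Lp.norm_le_mul_norm_of_ae_le_mul ?_
          filter_upwards [hME v, hE v, hg2] with x h1 h2 h3
          rw [h1, h2, norm_smul]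
          gcongr
          simpa using h3
        have h2 : ‖E v‖ ≤ ‖v‖ := by
          have := Lp.norm_le_of_ae_bound (f := E v) (norm_nonneg v) (by
            filter_upwards [hE v] with x h1
            rw [h1])
          simpa [measureUnivNNReal] using this
        calc ‖(M ∘L E) v‖ ≤ 1 / 2 * ‖E v‖ := h1
          _ ≤ _ := by gcongr)
      (by
        intro v
        have := csk_const_adj ν g (M (E v)) v (hME v)
        rw [hg0] at this
        simpa using this)
      (by
        intro v
        have := csk_const_adj ν (fun x => x * g x) (X (M (E v))) v (hXME v)
        rw [hgm] at this
        exact this)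
      (by
        intro v
        change (c : ℂ) • (X (M (E v)) - (m : ℂ) • E v) = (r : ℂ) • M (E v) - X (E v)
        refine Lp.ext ?_
        filter_upwards [Lp.coeFn_smul (c : ℂ) (X (M (E v)) - (m : ℂ) • E v),
          Lp.coeFn_sub (X (M (E v))) ((m : ℂ) • E v), Lp.coeFn_smul (m : ℂ) (E v),
          Lp.coeFn_sub ((r : ℂ) • M (E v)) (X (E v)), Lp.coeFn_smul (r : ℂ) (M (E v)),
          hX (E v), hE v, hME v, hXME v, hgc] with x h1 h2 h3 h4 h5 h6 h7 h8 h9 h10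
        rw [h1, Pi.smul_apply, h2, Pi.sub_apply, h3, Pi.smul_apply, h4, Pi.sub_apply, h5,
          Pi.smul_apply, h6, h7, h8, h9]
        have h11 : ((r : ℂ) - c * x) * g x = x - c * m := by exact_mod_cast h10
        rw [smul_smul, ← sub_smul, ← sub_smul, smul_smul]
        congr 1
        push_cast
        linear_combination -h11)
    rw [hμi (r + m) ψ hw hψ1, hψ2]; simp

theorem csk_integrable (ν : Measure ℝ) [IsProbabilityMeasure ν] (h : ℝ → ℝ) (hm : Measurable h)
    (C : ℝ) (hb : ∀ᵐ x ∂ν, |h x| ≤ C) : Integrable h ν :=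
  Integrable.of_bound hm.aestronglyMeasurable C (by simpa using hb)

theorem csk_kernel_meas (V : ℝ → ℝ) (m : ℝ) : Measurable (fun x => cskKernel V m x) := by
  unfold cskKernel
  fun_prop

/-- Bounds on the kernel denominators. -/
theorem csk_den (v m R x : ℝ) (hv : 0 < v) (hx : |x| ≤ R) (h : |m| * (|m| + R) < v / 2) :
    v / 2 < v + m * (m - x) := by
  have h1 : |m * (m - x)| ≤ |m| * (|m| + R) := by
    rw [abs_mul]
    gcongr
    exact (abs_sub _ _).trans (by linarith)
  have := neg_abs_le (m * (m - x))
  linarith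

theorem csk_kernel_bound (V : ℝ → ℝ) (m R x : ℝ) (hv : 0 < V m) (hx : |x| ≤ R)
    (h : |m| * (|m| + R) < V m / 2) : |cskKernel V m x| ≤ 2 := by
  have h1 := csk_den (V m) m R x hv hx h
  unfold cskKernel
  rw [abs_of_nonneg (by apply div_nonneg <;> linarith), div_le_iff₀ (by linarith)]
  linarith

theorem csk_V0 (ν : Measure ℝ) [IsProbabilityMeasure ν] (V : ℝ → ℝ) (R : ℝ)
    (hR : ∀ᵐ x ∂ν, |x| ≤ R) (h1 : ∫ x, x ∂ν = 0) (h2 : ∫ x, x ^ 2 ∂ν = 1)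
    (hV : IsCSKVarianceFun ν V) : V 0 = 1 := by
  obtain ⟨han, hpos, ε, hε, hk⟩ := hV
  have hc : ContinuousAt V 0 := han.continuousAt
  have ev1 : ∀ᶠ m in nhds (0 : ℝ), 0 < V m := hc.eventually (lt_mem_nhds hpos)
  have ev2 : ∀ᶠ m in nhds (0 : ℝ), |m| * (|m| + R) - V m / 2 < 0 := by
    have : ContinuousAt (fun m => |m| * (|m| + R) - V m / 2) 0 := by fun_prop
    exact this.eventually (gt_mem_nhds (by simpa using hpos))
  have ev3 : ∀ᶠ m in nhds (0 : ℝ), |m| < ε := by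
    have : ContinuousAt (fun m : ℝ => |m|) 0 := by fun_prop
    exact this.eventually (gt_mem_nhds (by simpa using hε))
  have lim1 : Tendsto (fun m => ∫ x, x ^ 2 * cskKernel V m x ∂ν) (nhds 0)
      (nhds (∫ x, x ^ 2 ∂ν)) := by
    refine tendsto_integral_filter_of_dominated_convergence (fun _ => R ^ 2 * 2) ?_ ?_ ?_ ?_
    · refine Eventually.of_forall fun m => ?_
      have := csk_kernel_meas V m
      exact Measurable.aestronglyMeasurable (by fun_prop)
    · filter_upwards [ev1, ev2] with m e1 e2
      filter_upwards [hR] with x hx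
      have := csk_kernel_bound V m R x e1 hx (by linarith)
      rw [Real.norm_eq_abs, abs_mul, abs_pow]
      gcongr
    · exact integrable_const _
    · refine Eventually.of_forall fun x => ?_
      have : ContinuousAt (fun m => x ^ 2 * cskKernel V m x) 0 := by
        unfold cskKernel
        refine ContinuousAt.mul (by fun_prop) (ContinuousAt.div hc (by fun_prop) ?_)
        simpa using hpos.ne'
      have h3 := this.tendsto
      simpa [cskKernel, hpos.ne'] using h3
  have lim2 : Tendsto (fun m => V m + m ^ 2) (nhds 0) (nhds (V 0)) := by
    have : ContinuousAt (fun m => V m + m ^ 2) 0 := by fun_prop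
    simpa using this.tendsto
  have heq : ∀ᶠ m in nhdsWithin (0 : ℝ) {0}ᶜ,
      ∫ x, x ^ 2 * cskKernel V m x ∂ν = V m + m ^ 2 := by
    filter_upwards [ev1.filter_mono nhdsWithin_le_nhds, ev2.filter_mono nhdsWithin_le_nhds,
      ev3.filter_mono nhdsWithin_le_nhds, self_mem_nhdsWithin] with m e1 e2 e3 e4
    have hm : m ≠ 0 := e4
    obtain ⟨-, k1, k2⟩ := hk m e3
    have hmeas := csk_kernel_meas V m
    have i1 : Integrable (fun x => x * cskKernel V m x) ν := by
      refine csk_integrable ν _ (by fun_prop) (R * 2) ?_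
      filter_upwards [hR] with x hx
      have := csk_kernel_bound V m R x e1 hx (by linarith)
      rw [abs_mul]
      have := abs_nonneg x
      gcongr
      linarith
    have i2 : Integrable (fun x : ℝ => x) ν := csk_integrable ν _ (by fun_prop) R hR
    have h4 : ∀ᵐ x ∂ν, x ^ 2 * cskKernel V m x =
        ((V m + m ^ 2) / m) * (x * cskKernel V m x) - (V m / m) * x := by
      filter_upwards [hR] with x hx
      have := csk_den (V m) m R x e1 hx (by linarith)
      have hd : V m + m * (m - x) ≠ 0 := by linarith
      unfold cskKernel
      field_simp
      ring
    rw [integral_congr_ae h4, integral_sub (i1.const_mul _) (i2.const_mul _),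
      integral_const_mul, integral_const_mul, k2, h1]
    field_simp
    ring
  have l1 := lim1.mono_left (nhdsWithin_le_nhds (s := {0}ᶜ))
  have l2 := lim2.mono_left (nhdsWithin_le_nhds (s := {0}ᶜ))
  rw [h2] at l1
  exact tendsto_nhds_unique l2 (l1.congr' heq)

/-- If `V ∈ 𝒱` then `m ↦ V(m) + m² ∈ 𝒱∞`. -/
theorem memVinf_add_sq (V : ℝ → ℝ) (hV : memV V) :
    memVinf (fun m => V m + m ^ 2) := by
  obtain ⟨ν, ⟨hprob, ⟨R, hR0⟩, -, h1⟩, h2, hVF⟩ := hV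
  intro c
  have hR : ∀ᵐ x ∂ν, |x| ≤ R := by
    have : ∀ᵐ x ∂ν, x ∈ Set.Icc (-R) R := hR0
    filter_upwards [this] with x hx
    exact abs_le.mpr hx
  have hV0 := csk_V0 ν V R hR h1 h2 hVF
  obtain ⟨han, hpos, ε, hε, hk⟩ := hVF
  obtain ⟨μ, R', hμ, hμs, hμ1, hμ2, hμi⟩ := csk_fock ν R hR h2 c
  have hR' : ∀ᵐ x ∂μ, |x| ≤ R' := by
    have : ∀ᵐ x ∂μ, x ∈ Set.Icc (-R') R' := hμs
    filter_upwards [this] with x hx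
    exact abs_le.mpr hx
  have hanc : AnalyticAt ℝ (fun m => V (c * m)) 0 := by
    have h3 : AnalyticAt ℝ (fun m : ℝ => c * m) 0 := by fun_prop
    exact AnalyticAt.fun_comp (by simpa using han) h3
  have hc : ContinuousAt (fun m => V (c * m)) 0 := hanc.continuousAt
  have ev1 : ∀ᶠ m in nhds (0 : ℝ), 1 / 2 < V (c * m) :=
    hc.eventually (lt_mem_nhds (by simp [hV0]; norm_num))
  have ev2 : ∀ᶠ m in nhds (0 : ℝ), |c * m| * (|c * m| + R) < 1 / 4 := by
    have : ContinuousAt (fun m : ℝ => |c * m| * (|c * m| + R)) 0 := by fun_prop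
    exact this.eventually (gt_mem_nhds (by simp))
  have ev3 : ∀ᶠ m in nhds (0 : ℝ), |c * m| < ε := by
    have : ContinuousAt (fun m : ℝ => |c * m|) 0 := by fun_prop
    exact this.eventually (gt_mem_nhds (by simpa using hε))
  have ev4 : ∀ᶠ m in nhds (0 : ℝ), |m| * (|c * m| + R) < 1 / 8 := by
    have : ContinuousAt (fun m : ℝ => |m| * (|c * m| + R)) 0 := by fun_prop
    exact this.eventually (gt_mem_nhds (by simp))
  have ev5 : ∀ᶠ m in nhds (0 : ℝ), |m| * (|m| + R') < 1 / 4 := by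
    have : ContinuousAt (fun m : ℝ => |m| * (|m| + R')) 0 := by fun_prop
    exact this.eventually (gt_mem_nhds (by simp))
  obtain ⟨δ, hδ, hall⟩ := Metric.eventually_nhds_iff.mp
    (ev1.and (ev2.and (ev3.and (ev4.and ev5))))
  refine ⟨μ, ⟨hμ, ⟨R', hμs⟩, ?_, hμ1⟩, hμ2, ?_, ?_, δ, hδ, ?_⟩
  · rintro a rfl
    rw [integral_dirac] at hμ1 hμ2
    rw [hμ1] at hμ2
    norm_num at hμ2
  · have h3 : AnalyticAt ℝ (fun m : ℝ => (c * m) ^ 2) 0 := by fun_prop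
    exact hanc.add h3
  · simp [hV0]
  intro m hm
  obtain ⟨e1, e2, e3, e4, e5⟩ := hall (y := m) (by simpa using hm)
  set M := c * m with hM
  have hkm := csk_kernel_meas (fun m => (fun m => V m + m ^ 2) (c * m)) m
  -- the new variance at `m`
  have hW : 1 / 2 < V M + M ^ 2 := by nlinarith [sq_nonneg M]
  have hden : ∀ᵐ x ∂μ, 0 < V M + M ^ 2 + m * (m - x) := by
    filter_upwards [hR'] with x hx
    have := csk_den (V M + M ^ 2) m R' x (by linarith) hx (by linarith)
    linarith
  refine ⟨?_, ?_⟩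
  · filter_upwards [hden] with x hx
    exact div_nonneg (by change 0 ≤ V M + M ^ 2; linarith) hx.le
  rcases eq_or_ne m 0 with rfl | hm0
  · have h3 : ∀ x, cskKernel (fun m => (fun m => V m + m ^ 2) (c * m)) 0 x = 1 := by
      intro x
      simp [cskKernel, hV0]
    simp [h3, hμ1]
  have hint : ∫ x, cskKernel (fun m => (fun m => V m + m ^ 2) (c * m)) m x ∂μ = 1 := by
    obtain ⟨-, k1, k2⟩ := hk M e3
    have hden2 : ∀ᵐ x ∂ν, 1 / 4 < V M + M * (M - x) := by
      filter_upwards [hR] with x hx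
      have := csk_den (V M) M R x (by linarith) hx (by linarith)
      linarith
    have hr : (V M + M ^ 2) / m ≠ 0 := div_ne_zero (by linarith) hm0
    have hgc : ∀ᵐ x ∂ν, ((V M + M ^ 2) / m - c * x) * (m * (x - M) / (V M + M * (M - x)))
        = x - c * m := by
      filter_upwards [hden2] with x hx
      have hd : V M + M * (M - x) ≠ 0 := by linarith
      have h5 : (V M + M ^ 2) / m - c * x = (V M + M * (M - x)) / m := by
        field_simp
        rw [hM]; ring
      rw [h5, ← hM]
      field_simp
    have hgb : ∀ᵐ x ∂ν, |m * (x - M) / (V M + M * (M - x))| ≤ 1 / 2 := by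
      filter_upwards [hden2, hR] with x hx hx2
      rw [abs_div, abs_of_pos (show 0 < V M + M * (M - x) by linarith), div_le_iff₀ (by linarith),
        abs_mul]
      have h6 : |x - M| ≤ |M| + R := (abs_sub _ _).trans (by linarith)
      have h7 : |m| * |x - M| ≤ |m| * (|M| + R) := by gcongr
      linarith
    have hfm := csk_kernel_meas V M
    have i0 : Integrable (fun x => cskKernel V M x) ν := by
      by_contra hn
      rw [integral_undef hn] at k1
      norm_num at k1
    have i1 : Integrable (fun x => x * cskKernel V M x) ν := by
      refine csk_integrable ν _ (by fun_prop) (R * 2) ?_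
      filter_upwards [hR] with x hx
      have := csk_kernel_bound V M R x (by linarith) hx (by linarith)
      rw [abs_mul]
      have := abs_nonneg x
      gcongr
      linarith
    have i2 : Integrable (fun x : ℝ => x) ν := csk_integrable ν _ (by fun_prop) R hR
    have hgi : Integrable (fun x => m * (x - M) / (V M + M * (M - x))) ν :=
      csk_integrable ν _ (by fun_prop) _ hgb
    have hxgi : Integrable (fun x => x * (m * (x - M) / (V M + M * (M - x)))) ν := by
      refine csk_integrable ν _ (by fun_prop) (R * (1 / 2)) ?_
      filter_upwards [hR, hgb] with x hx hx2
      rw [abs_mul]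
      have := abs_nonneg x
      gcongr
      linarith
    have hg0 : ∫ x, m * (x - M) / (V M + M * (M - x)) ∂ν = 0 := by
      have h5 : ∀ x, m * (x - M) / (V M + M * (M - x)) =
          m / V M * (x * cskKernel V M x - M * cskKernel V M x) := by
        intro x
        have : V M ≠ 0 := by linarith
        unfold cskKernel
        rw [← sub_mul, div_mul_eq_mul_div, ← mul_assoc, ← mul_div_assoc, div_right_comm,
          mul_div_cancel_right₀ _ this]
      simp only [h5]
      rw [integral_const_mul, integral_sub i1 (i0.const_mul _), integral_const_mul, k1, k2]
      ring
    have hgm : ∫ x, x * (m * (x - M) / (V M + M * (M - x))) ∂ν = m := by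
      rcases eq_or_ne c 0 with hc0 | hc0
      · have hM0 : M = 0 := by rw [hM, hc0, zero_mul]
        have h5 : ∀ x, x * (m * (x - M) / (V M + M * (M - x))) = m * x ^ 2 := by
          intro x
          rw [hM0, hV0]; ring
        simp only [h5]
        rw [integral_const_mul, h2, mul_one]
      · have h6 := integral_congr_ae hgc
        have h7 : ∀ x, ((V M + M ^ 2) / m - c * x) * (m * (x - M) / (V M + M * (M - x))) =
            (V M + M ^ 2) / m * (m * (x - M) / (V M + M * (M - x)))
              - c * (x * (m * (x - M) / (V M + M * (M - x)))) := by
          intro x; ring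
        simp only [h7] at h6
        rw [integral_sub (hgi.const_mul _) (hxgi.const_mul _), integral_const_mul,
          integral_const_mul, hg0, integral_sub i2 (integrable_const _), h1, integral_const] at h6
        simp at h6
        exact h6.resolve_right hc0
    have h8 : R' < |(V M + M ^ 2) / m + m| := by
      have h9 : (V M + M ^ 2) / m + m = (V M + M ^ 2 + m ^ 2) / m := by field_simp
      have h10 : 0 < |m| := abs_pos.mpr hm0
      rw [h9, abs_div, lt_div_iff₀ h10, abs_of_pos (show 0 < V M + M ^ 2 + m ^ 2 by nlinarith [sq_nonneg m])]
      nlinarith [sq_nonneg m]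
    have h11 := hμi ((V M + M ^ 2) / m) m _ (by fun_prop) hr hgb hgc hg0 hgm h8
    have h12 : ∀ x, cskKernel (fun m => (fun m => V m + m ^ 2) (c * m)) m x =
        (V M + M ^ 2) / m * ((V M + M ^ 2) / m + m - x)⁻¹ := by
      intro x
      have h13 : (V M + M ^ 2) / m + m - x = (V M + M ^ 2 + m * (m - x)) / m := by
        field_simp
        ring
      rw [h13, inv_div, div_mul_div_comm, mul_comm m, mul_div_mul_right _ _ hm0]
      rfl
    simp only [h12]
    rw [integral_const_mul, h11, mul_inv_cancel₀ hr]
  refine ⟨hint, ?_⟩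
  have i0 : Integrable (fun x => cskKernel (fun m => (fun m => V m + m ^ 2) (c * m)) m x) μ := by
    by_contra hn
    rw [integral_undef hn] at hint
    norm_num at hint
  have h5 : ∀ᵐ x ∂μ, x * cskKernel (fun m => (fun m => V m + m ^ 2) (c * m)) m x =
      (V M + M ^ 2 + m ^ 2) / m * cskKernel (fun m => (fun m => V m + m ^ 2) (c * m)) m x
        - (V M + M ^ 2) / m := by
    filter_upwards [hden] with x hx
    have hd := hx.ne'
    have h6 : cskKernel (fun m => (fun m => V m + m ^ 2) (c * m)) m x =
      (V M + M ^ 2) / (V M + M ^ 2 + m * (m - x)) := rfl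
    rw [h6]
    field_simp
    ring
  rw [integral_congr_ae h5, integral_sub (i0.const_mul _) (integrable_const _),
    integral_const_mul, hint, integral_const]
  simp
  field_simp
  ring
end
end

section
/- The map sending the function V(m) to the function m ↦ V(m) − m² is a bijection from the class 𝒱∞ onto the class 𝒱. -/
open MeasureTheory Filter

noncomputable section

theorem hasSum_of_eq {f g : ℕ → ℝ} {a : ℝ} (h : HasSum g a) (e : ∀ n, f n = g n) : HasSum f a := by
  rwa [funext e]

open PowerSeries Topology

/-- `f` is near `0` the sum of the power series `P`. -/
def HasPS (f : ℝ → ℝ) (P : PowerSeries ℝ) : Prop :=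
  ∀ᶠ z in 𝓝 (0 : ℝ), HasSum (fun n => coeff n P * z ^ n) (f z)

theorem HasPS.fps {f : ℝ → ℝ} {P : PowerSeries ℝ} (h : HasPS f P) :
    HasFPowerSeriesAt f (FormalMultilinearSeries.ofScalars ℝ (fun n => coeff n P)) 0 := by
  rw [hasFPowerSeriesAt_iff]
  filter_upwards [h] with z hz
  simpa [FormalMultilinearSeries.coeff_ofScalars, mul_comm] using hz

theorem HasPS.analyticAt {f : ℝ → ℝ} {P : PowerSeries ℝ} (h : HasPS f P) : AnalyticAt ℝ f 0 :=
  h.fps.analyticAt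

theorem AnalyticAt.exists_hasPS {f : ℝ → ℝ} (h : AnalyticAt ℝ f 0) : ∃ P, HasPS f P := by
  obtain ⟨p, hp⟩ := h
  refine ⟨PowerSeries.mk fun n => p.coeff n, ?_⟩
  rw [hasFPowerSeriesAt_iff] at hp
  unfold HasPS
  filter_upwards [hp] with z hz
  simpa [mul_comm] using hz

theorem HasPS.congr {f g : ℝ → ℝ} {P : PowerSeries ℝ} (h : HasPS f P) (hfg : f =ᶠ[𝓝 0] g) :
    HasPS g P := by
  unfold HasPS at *
  filter_upwards [h, hfg] with z hz e
  rwa [← e]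

theorem HasPS.unique {f : ℝ → ℝ} {P Q : PowerSeries ℝ} (h : HasPS f P) (h' : HasPS f Q) :
    P = Q := by
  have := h.fps.eq_formalMultilinearSeries h'.fps
  ext n
  have h2 := congrArg (fun p => p.coeff n) this
  simpa [FormalMultilinearSeries.coeff_ofScalars] using h2

theorem HasPS.add {f g : ℝ → ℝ} {P Q : PowerSeries ℝ} (h : HasPS f P) (h' : HasPS g Q) :
    HasPS (fun z => f z + g z) (P + Q) := by
  unfold HasPS at *
  filter_upwards [h, h'] with z hz hz'
  simpa [add_mul] using hz.add hz'

theorem HasPS.mul {f g : ℝ → ℝ} {P Q : PowerSeries ℝ} (h : HasPS f P) (h' : HasPS g Q) :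
    HasPS (fun z => f z * g z) (P * Q) := by
  unfold HasPS at *
  filter_upwards [h, h'] with z hz hz'
  have s1 := hz.summable.norm
  have s2 := hz'.summable.norm
  have := tsum_mul_tsum_eq_tsum_sum_antidiagonal_of_summable_norm s1 s2
  rw [← hz.tsum_eq, ← hz'.tsum_eq, this]
  have s3 := (summable_norm_sum_mul_antidiagonal_of_summable_norm s1 s2).of_norm
  refine hasSum_of_eq s3.hasSum fun n => ?_
  rw [coeff_mul, Finset.sum_mul]
  refine Finset.sum_congr rfl fun x hx => ?_
  rw [← Finset.HasAntidiagonal.mem_antidiagonal.mp hx, pow_add]; ring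

theorem hasPS_const (a : ℝ) : HasPS (fun _ => a) (C a) := by
  refine Filter.Eventually.of_forall fun z => ?_
  convert hasSum_single (f := fun n => coeff n (C a : PowerSeries ℝ) * z ^ n) 0 ?_ using 1
  · simp
  · intro n hn; simp [coeff_C, hn]

theorem hasPS_one : HasPS (fun _ => 1) 1 := by simpa using hasPS_const 1

theorem hasPS_id : HasPS (fun z => z) X := by
  refine Filter.Eventually.of_forall fun z => ?_
  convert hasSum_single (f := fun n => coeff n (X : PowerSeries ℝ) * z ^ n) 1 ?_ using 1
  · simp
  · intro n hn; simp [coeff_X, hn]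

theorem HasPS.zero {f : ℝ → ℝ} {P : PowerSeries ℝ} (h : HasPS f P) : f 0 = coeff 0 P := by
  have h0 := h.self_of_nhds
  refine h0.unique ?_
  convert hasSum_single (f := fun n => coeff n P * (0:ℝ) ^ n) 0 ?_ using 1
  · simp
  · intro n hn; simp [hn]

theorem HasPS.bound {f : ℝ → ℝ} {P : PowerSeries ℝ} (h : HasPS f P) :
    ∃ K R : ℝ, 0 < R ∧ ∀ n, |coeff n P| ≤ K * R ^ n := by
  obtain ⟨r, hr, hb⟩ := Metric.eventually_nhds_iff.1 h
  have hs := (hb (y := r / 2) (by simp [abs_of_pos hr]; linarith)).summable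
  obtain ⟨K, hK⟩ := hs.tendsto_atTop_zero.norm.bddAbove_range
  refine ⟨K, (r / 2)⁻¹, by positivity, fun n => ?_⟩
  have := hK ⟨n, rfl⟩
  simp only [norm_mul, norm_pow, Real.norm_eq_abs] at this
  rw [abs_of_pos (by positivity : 0 < r / 2)] at this
  rw [inv_pow, ← div_eq_mul_inv, le_div_iff₀ (by positivity)]
  exact this

theorem HasPS.of_bound {P : PowerSeries ℝ} {K R : ℝ} (hR : 0 < R)
    (h : ∀ n, |coeff n P| ≤ K * R ^ n) : HasPS (fun z => ∑' n, coeff n P * z ^ n) P := by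
  unfold HasPS
  have : ∀ᶠ z in 𝓝 (0:ℝ), |z| < R⁻¹ := by
    refine Metric.eventually_nhds_iff.2 ⟨R⁻¹, by positivity, fun y hy => by simpa using hy⟩
  filter_upwards [this] with z hz
  refine Summable.hasSum (Summable.of_norm_bounded (g := fun n => K * (R * |z|) ^ n) ?_ ?_)
  · refine (summable_geometric_of_lt_one (by positivity) ?_).mul_left _
    rw [← mul_inv_cancel₀ hR.ne']; gcongr
  · intro n
    rw [norm_mul, norm_pow, mul_pow, ← mul_assoc]
    exact mul_le_mul_of_nonneg_right (h n) (by positivity)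

theorem HasPS.tails {f : ℝ → ℝ} {b : ℕ → ℝ} (h : HasPS f (PowerSeries.mk b)) :
    ∃ F : ℕ → ℝ → ℝ, F 0 = f ∧ ∀ e, HasPS (F e) (PowerSeries.mk fun n => b (e + n)) ∧
      ∀ᶠ z in 𝓝 (0:ℝ), F e z = b e + z * F (e + 1) z := by
  obtain ⟨K, R, hR, hb⟩ := h.bound
  have hg : ∀ e, HasPS _ (PowerSeries.mk fun n => b (e + n)) := fun e =>
    HasPS.of_bound (K := K * R ^ e) hR (fun n => by
      have := hb (e + n)
      simp only [coeff_mk] at this ⊢; rw [pow_add] at this; linarith)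
  set F : ℕ → ℝ → ℝ := fun e z => ∑' n, coeff n (PowerSeries.mk fun n => b (e + n)) * z ^ n
  have key : ∀ e, ∀ᶠ z in 𝓝 (0:ℝ), F e z = b e + z * F (e + 1) z := by
    intro e
    have h1 := hg e
    have h2 := hg (e + 1)
    unfold HasPS at h1 h2
    filter_upwards [h1, h2] with z h1 h2
    refine h1.unique ?_
    rw [← hasSum_nat_add_iff' 1]
    simp only [Finset.range_one, Finset.sum_singleton, pow_zero, mul_one, add_sub_cancel_left,
      coeff_mk, add_zero]
    refine hasSum_of_eq (h2.mul_left z) fun n => ?_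
    rw [coeff_mk, add_assoc e 1 n, add_comm 1 n]; ring
  have e0 : F 0 =ᶠ[𝓝 0] f := by
    have h1 := hg 0
    unfold HasPS at h1 h
    filter_upwards [h1, h] with z h1 h2
    refine h1.unique ?_
    simpa only [zero_add] using h2
  refine ⟨fun e => if e = 0 then f else F e, by simp, fun e => ⟨?_, ?_⟩⟩
  · rcases e with _ | e
    · simpa using h
    · exact hg (e + 1)
  · rcases e with _ | e
    · filter_upwards [e0, key 0] with z a b; simp [← a, b]
    · simpa using key (e + 1)

/-- analytic local inverse -/
theorem exists_local_inverse {φ : ℝ → ℝ} (h : AnalyticAt ℝ φ 0) (h0 : φ 0 = 0)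
    (h1 : HasDerivAt φ 1 0) :
    ∃ ψ : ℝ → ℝ, AnalyticAt ℝ ψ 0 ∧ ψ 0 = 0 ∧ (∀ᶠ z in 𝓝 (0:ℝ), φ (ψ z) = z) ∧
      (∀ᶠ z in 𝓝 (0:ℝ), ψ (φ z) = z) := by
  have hd : deriv φ 0 ≠ 0 := by rw [h1.deriv]; norm_num
  have A := h.analyticAt_localInverse hd
  have B := HasStrictDerivAt.eventually_right_inverse h.hasStrictDerivAt hd
  have D := HasStrictDerivAt.eventually_left_inverse h.hasStrictDerivAt hd
  rw [h0] at A B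
  refine ⟨_, A, ?_, B, D⟩
  have := D.self_of_nhds
  rwa [h0] at this

/-- positive semidefinite (Hankel) sequences -/
def PSD (s : ℕ → ℝ) : Prop :=
  ∀ (n : ℕ) (a : ℕ → ℝ), 0 ≤ ∑ i ∈ Finset.range n, ∑ j ∈ Finset.range n, a i * a j * s (i + j)

/-- the linear functional on polynomials with moments `s` -/
def momL (s : ℕ → ℝ) : Polynomial ℝ →ₗ[ℝ] ℝ :=
  Polynomial.lsum (fun n => s n • LinearMap.id)

theorem momL_X_pow (s : ℕ → ℝ) (n : ℕ) : momL s (Polynomial.X ^ n) = s n := by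
  simp only [momL, Polynomial.lsum_apply]
  rw [Polynomial.X_pow_eq_monomial, Polynomial.sum_monomial_index] <;> simp

theorem momL_one (s : ℕ → ℝ) : momL s 1 = s 0 := by
  simpa using momL_X_pow s 0

theorem PSD.momL_sq {s : ℕ → ℝ} (hs : PSD s) (q : Polynomial ℝ) : 0 ≤ momL s (q * q) := by
  have h := hs (q.natDegree + 1) q.coeff
  convert h using 1
  conv_lhs => rw [q.as_sum_range_C_mul_X_pow]
  rw [Finset.sum_mul_sum, map_sum]
  refine Finset.sum_congr rfl fun i _ => ?_
  rw [map_sum]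
  refine Finset.sum_congr rfl fun j _ => ?_
  have : Polynomial.C (q.coeff i) * Polynomial.X ^ i * (Polynomial.C (q.coeff j) * Polynomial.X ^ j)
      = (q.coeff i * q.coeff j) • (Polynomial.X ^ (i + j) : Polynomial ℝ) := by
    rw [Polynomial.smul_eq_C_mul, map_mul, pow_add]; ring
  rw [this, map_smul, momL_X_pow, smul_eq_mul]

theorem PSD.momL_cs {s : ℕ → ℝ} (hs : PSD s) (p q : Polynomial ℝ) :
    momL s (p * q) ^ 2 ≤ momL s (p * p) * momL s (q * q) := by
  have h : ∀ t : ℝ, 0 ≤ momL s (p * p) * (t * t) + (2 * momL s (p * q)) * t + momL s (q * q) := by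
    intro t
    have := hs.momL_sq (t • p + q)
    have e : (t • p + q) * (t • p + q) = (t * t) • (p * p) + (2 * t) • (p * q) + q * q := by
      simp only [Polynomial.smul_eq_C_mul, map_mul]
      rw [show (Polynomial.C (2:ℝ)) = 2 from rfl]; ring
    rw [e, map_add, map_add, map_smul, map_smul, smul_eq_mul, smul_eq_mul] at this
    linarith
  have := discrim_le_zero h
  unfold discrim at this
  nlinarith

theorem momL_bound {s : ℕ → ℝ} {K R : ℝ} (hb : ∀ n, |s n| ≤ K * R ^ n)
    (q : Polynomial ℝ) : ∃ K', ∀ k, |momL s (Polynomial.X ^ k * q)| ≤ K' * R ^ k := by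
  induction q using Polynomial.induction_on' with
  | add p q hp hq =>
    obtain ⟨A, hA⟩ := hp
    obtain ⟨B, hB⟩ := hq
    refine ⟨A + B, fun k => ?_⟩
    rw [mul_add, map_add, add_mul]
    exact (abs_add_le _ _).trans (add_le_add (hA k) (hB k))
  | monomial n a =>
    refine ⟨|a| * K * R ^ n, fun k => ?_⟩
    have : Polynomial.X ^ k * Polynomial.monomial n a
      = a • (Polynomial.X ^ (n + k) : Polynomial ℝ) := by
      rw [Polynomial.smul_eq_C_mul, ← Polynomial.C_mul_X_pow_eq_monomial, pow_add]; ring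
    rw [this, map_smul, momL_X_pow, smul_eq_mul, abs_mul]
    calc |a| * |s (n + k)| ≤ |a| * (K * R ^ (n + k)) := by gcongr; exact hb _
      _ = _ := by rw [pow_add]; ring

theorem PSD.momL_X_sq {s : ℕ → ℝ} (hs : PSD s) {K R : ℝ} (hR : 0 < R)
    (hb : ∀ n, |s n| ≤ K * R ^ n) (q : Polynomial ℝ) :
    momL s (Polynomial.X ^ 2 * (q * q)) ≤ R ^ 2 * momL s (q * q) := by
  set a : ℕ → ℝ := fun k => momL s (Polynomial.X ^ (2 * k) * (q * q)) with ha
  have a0 : a 0 = momL s (q * q) := by simp [ha]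
  have apos : ∀ k, 0 ≤ a k := fun k => by
    have := hs.momL_sq (Polynomial.X ^ k * q)
    simp only [ha]; convert this using 2; ring
  have acs : ∀ k, a k ^ 2 ≤ a 0 * a (2 * k) := fun k => by
    have := hs.momL_cs q (Polynomial.X ^ (2 * k) * q)
    rw [a0]
    simp only [ha]; convert this using 3
    · ring
    · ring_nf
  obtain ⟨K', hK'⟩ := momL_bound hb (q * q)
  have ab : ∀ k, a k ≤ K' * (R ^ 2) ^ k := fun k => by
    rw [← pow_mul]; exact (le_abs_self _).trans (hK' _)
  change a 1 ≤ R ^ 2 * _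
  rw [← a0]
  rcases (apos 0).eq_or_lt with h0 | h0
  · have := acs 1
    rw [← h0, zero_mul] at this
    have : a 1 = 0 := by nlinarith
    rw [this, ← h0]; simp
  · have key : ∀ k, (a 1 / a 0) ^ (2 ^ k) ≤ a (2 ^ k) / a 0 := by
      intro k
      induction k with
      | zero => simp
      | succ k ih =>
        rw [pow_succ 2 k, pow_mul]
        calc ((a 1 / a 0) ^ 2 ^ k) ^ 2 ≤ (a (2 ^ k) / a 0) ^ 2 := by
              gcongr
              exact pow_nonneg (div_nonneg (apos _) (apos _)) _
          _ = a (2 ^ k) ^ 2 / a 0 / a 0 := by field_simp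
          _ ≤ a 0 * a (2 * 2 ^ k) / a 0 / a 0 := by gcongr; exact acs _
          _ = _ := by rw [mul_comm 2 (2 ^ k)]; field_simp
    by_contra hlt
    push Not at hlt
    have hx : 1 < a 1 / a 0 / R ^ 2 := by
      rw [lt_div_iff₀ (by positivity), lt_div_iff₀ h0]; linarith
    have hle : ∀ k : ℕ, (a 1 / a 0 / R ^ 2) ^ (2 ^ k) ≤ K' / a 0 := by
      intro k
      rw [div_pow, div_le_iff₀ (by positivity)]
      refine (key k).trans ?_
      rw [div_mul_eq_mul_div]
      gcongr
      exact ab _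
    have ht := (tendsto_pow_atTop_atTop_of_one_lt hx).comp
      (tendsto_pow_atTop_atTop_of_one_lt (one_lt_two : (1:ℕ) < 2))
    obtain ⟨k, hk⟩ := (ht.eventually_gt_atTop (K' / a 0)).exists
    exact absurd (hle k) (not_le.2 hk)

theorem PSD.momL_pos {s : ℕ → ℝ} (hs : PSD s) {K R : ℝ} (hR : 0 < R)
    (hb : ∀ n, |s n| ≤ K * R ^ n) (i j : ℕ) :
    0 ≤ momL s ((Polynomial.C R - Polynomial.X) ^ i * (Polynomial.C R + Polynomial.X) ^ j) := by
  set p : Polynomial ℝ := Polynomial.C R - Polynomial.X with hp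
  set q : Polynomial ℝ := Polynomial.C R + Polynomial.X with hq
  have hpq : ∀ u : Polynomial ℝ, 0 ≤ momL s (p * q * (u * u)) := by
    intro u
    have := hs.momL_X_sq hR hb u
    have e : p * q * (u * u) = (R ^ 2) • (u * u) - Polynomial.X ^ 2 * (u * u) := by
      rw [Polynomial.smul_eq_C_mul, map_pow, hp, hq]; ring
    rw [e, map_sub, map_smul, smul_eq_mul]; linarith
  have hpp : ∀ u : Polynomial ℝ, 0 ≤ momL s (p * (u * u)) := by
    intro u
    have e : (2 * R) • (p * (u * u)) = (p * u) * (p * u) + p * q * (u * u) := by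
      rw [Polynomial.smul_eq_C_mul, map_mul, hp, hq, show (Polynomial.C (2:ℝ)) = 2 from rfl]; ring
    have := congrArg (momL s) e
    rw [map_smul, map_add, smul_eq_mul] at this
    have h1 := hpq u
    have h2 := hs.momL_sq (p * u)
    by_contra hc
    push Not at hc
    nlinarith
  have hqq : ∀ u : Polynomial ℝ, 0 ≤ momL s (q * (u * u)) := by
    intro u
    have e : (2 * R) • (q * (u * u)) = (q * u) * (q * u) + p * q * (u * u) := by
      rw [Polynomial.smul_eq_C_mul, map_mul, hp, hq, show (Polynomial.C (2:ℝ)) = 2 from rfl]; ring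
    have := congrArg (momL s) e
    rw [map_smul, map_add, smul_eq_mul] at this
    have h1 := hpq u
    have h2 := hs.momL_sq (q * u)
    by_contra hc
    push Not at hc
    nlinarith
  rcases Nat.even_or_odd' i with ⟨i', rfl | rfl⟩ <;> rcases Nat.even_or_odd' j with ⟨j', rfl | rfl⟩
  · convert hs.momL_sq (p ^ i' * q ^ j') using 2; ring
  · convert hqq (p ^ i' * q ^ j') using 2; ring
  · convert hpp (p ^ i' * q ^ j') using 2; ring
  · convert hpq (p ^ i' * q ^ j') using 2; ring

/-- positivity of a functional on `[0,1]` -/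
def PosL (L : Polynomial ℝ →ₗ[ℝ] ℝ) : Prop :=
  ∀ i j : ℕ, 0 ≤ L (Polynomial.X ^ i * (1 - Polynomial.X) ^ j)

theorem PosL.bern {L : Polynomial ℝ →ₗ[ℝ] ℝ} (h : PosL L) (n k : ℕ) :
    0 ≤ L (bernsteinPolynomial ℝ n k) := by
  have : bernsteinPolynomial ℝ n k
      = (n.choose k : ℝ) • (Polynomial.X ^ k * (1 - Polynomial.X) ^ (n - k)) := by
    rw [bernsteinPolynomial, Polynomial.smul_eq_C_mul, Polynomial.C_eq_natCast]; ring
  rw [this, map_smul, smul_eq_mul]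
  exact mul_nonneg (by positivity) (h _ _)

theorem abs_pow_sub_pow_le_mul {a b : ℝ} (ha : 0 ≤ a) (ha1 : a ≤ 1) (hb : 0 ≤ b) (hb1 : b ≤ 1) (j : ℕ) :
    |a ^ j - b ^ j| ≤ j * |a - b| := by
  induction j with
  | zero => simp
  | succ j ih =>
    have : a ^ (j + 1) - b ^ (j + 1) = a * (a ^ j - b ^ j) + (a - b) * b ^ j := by ring
    rw [this]
    refine (abs_add_le _ _).trans ?_
    rw [abs_mul, abs_mul, abs_of_nonneg ha, abs_of_nonneg (pow_nonneg hb j)]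
    have h1 : a * |a ^ j - b ^ j| ≤ 1 * (j * |a - b|) := by gcongr
    have h2 : |a - b| * b ^ j ≤ |a - b| * 1 := by gcongr; exact pow_le_one₀ hb hb1
    push_cast
    linarith

theorem PosL.conv (j : ℕ) : ∀ {L : Polynomial ℝ →ₗ[ℝ] ℝ}, PosL L →
    Tendsto (fun n : ℕ => ∑ k ∈ Finset.range (n + 1),
      ((k : ℝ) / n) ^ j * L (bernsteinPolynomial ℝ n k)) atTop (𝓝 (L (Polynomial.X ^ j))) := by
  induction j with
  | zero =>
    intro L h
    simp only [pow_zero, one_mul, ← map_sum, bernsteinPolynomial.sum]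
    exact tendsto_const_nhds
  | succ j ih =>
    intro L h
    set L' : Polynomial ℝ →ₗ[ℝ] ℝ := L ∘ₗ LinearMap.mulLeft ℝ Polynomial.X with hL'
    have hL'a : ∀ p, L' p = L (Polynomial.X * p) := fun p => by simp [hL']
    have h' : PosL L' := fun a b => by
      rw [hL'a]; convert h (a + 1) b using 2; ring
    rw [← tendsto_add_atTop_iff_nat 1]
    have e : ∀ n : ℕ, ∑ k ∈ Finset.range (n + 1 + 1),
        ((k : ℝ) / ((n + 1 : ℕ) : ℝ)) ^ (j + 1) * L (bernsteinPolynomial ℝ (n + 1) k)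
        = ∑ k ∈ Finset.range (n + 1), (((k:ℝ) + 1) / (n + 1)) ^ j *
          L' (bernsteinPolynomial ℝ n k) := by
      intro n
      rw [Finset.sum_range_succ']
      simp only [Nat.cast_zero, zero_div, ne_eq, Nat.succ_ne_zero, not_false_eq_true, zero_pow,
        zero_mul, add_zero]
      refine Finset.sum_congr rfl fun k hk => ?_
      rw [pow_succ, mul_assoc]
      push_cast
      congr 1
      rw [hL'a, ← smul_eq_mul, ← map_smul]
      congr 1
      rw [bernsteinPolynomial, bernsteinPolynomial, Polynomial.smul_eq_C_mul]
      have hc : ((n + 1).choose (k + 1) : ℝ) * (((k:ℝ) + 1) / (n + 1)) = n.choose k := by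
        have := Nat.add_one_mul_choose_eq n k
        have h2 : ((n:ℝ) + 1) * n.choose k = (n + 1).choose (k + 1) * ((k:ℝ) + 1) := by
          exact_mod_cast this
        field_simp
        linarith
      rw [← Polynomial.C_eq_natCast, ← Polynomial.C_eq_natCast, ← hc, map_mul,
        Nat.add_sub_add_right]
      ring
    have lim := ih h'
    rw [hL'a, ← pow_succ'] at lim
    have hdiff : Tendsto (fun n : ℕ => ∑ k ∈ Finset.range (n + 1),
        ((((k:ℝ) + 1) / (n + 1)) ^ j - ((k:ℝ) / n) ^ j) * L' (bernsteinPolynomial ℝ n k))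
        atTop (𝓝 0) := by
      have hz : Tendsto (fun n : ℕ => (j * L' 1) * (1 / ((n:ℝ) + 1))) atTop (𝓝 0) := by
        simpa using tendsto_one_div_add_atTop_nhds_zero_nat.const_mul ((j * L' 1 : ℝ))
      refine squeeze_zero_norm' ?_ hz
      filter_upwards [eventually_gt_atTop 0] with n hn
      have hn' : (0:ℝ) < n := by exact_mod_cast hn
      calc _ ≤ ∑ k ∈ Finset.range (n + 1),
          ‖((((k:ℝ) + 1) / (n + 1)) ^ j - ((k:ℝ) / n) ^ j) * L' (bernsteinPolynomial ℝ n k)‖ :=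
            norm_sum_le _ _
        _ ≤ ∑ k ∈ Finset.range (n + 1), (j * (1 / ((n:ℝ) + 1))) * L' (bernsteinPolynomial ℝ n k) := by
            refine Finset.sum_le_sum fun k hk => ?_
            have hk' : (k:ℝ) ≤ n := by
              exact_mod_cast Nat.lt_succ_iff.mp (Finset.mem_range.mp hk)
            rw [norm_mul, Real.norm_of_nonneg (h'.bern n k), Real.norm_eq_abs]
            refine mul_le_mul_of_nonneg_right ?_ (h'.bern n k)
            refine (abs_pow_sub_pow_le_mul (by positivity) ?_ (by positivity) ?_ j).trans ?_
            · rw [div_le_one (by positivity)]; linarith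
            · rw [div_le_one (by positivity)]; linarith
            · gcongr
              have : ((k:ℝ) + 1) / (n + 1) - k / n = ((n - k) / n) * (1 / (n + 1)) := by
                field_simp; ring
              rw [this, abs_of_nonneg (mul_nonneg (div_nonneg (by linarith) hn'.le) (by positivity))]
              have : ((n:ℝ) - k) / n ≤ 1 := by
                rw [div_le_one hn']; linarith [(Nat.cast_nonneg k : (0:ℝ) ≤ k)]
              exact mul_le_of_le_one_left (by positivity) this
        _ = _ := by
            rw [← Finset.mul_sum, ← map_sum, bernsteinPolynomial.sum]; ring
    have := lim.add hdiff
    rw [add_zero] at this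
    refine this.congr fun n => ?_
    rw [e n, ← Finset.sum_add_distrib]
    refine Finset.sum_congr rfl fun k _ => ?_
    ring

theorem PosL.exists_measure {L : Polynomial ℝ →ₗ[ℝ] ℝ} (h : PosL L) (h1 : L 1 = 1) :
    ∃ μ : ProbabilityMeasure unitInterval,
      ∀ j : ℕ, ∫ x, (x : ℝ) ^ j ∂(μ : Measure unitInterval) = L (Polynomial.X ^ j) := by
  let pt : ℕ → ℕ → unitInterval := fun n k => Set.projIcc 0 1 zero_le_one ((k:ℝ) / n)
  let m : ℕ → Measure unitInterval := fun n => ∑ k ∈ Finset.range (n + 1),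
    ENNReal.ofReal (L (bernsteinPolynomial ℝ n k)) • Measure.dirac (pt n k)
  have hm : ∀ n, IsProbabilityMeasure (m n) := fun n => ⟨by
    simp only [m, Measure.finsetSum_apply, Measure.smul_apply, measure_univ, smul_eq_mul, mul_one]
    rw [← ENNReal.ofReal_sum_of_nonneg (fun k _ => h.bern n k), ← map_sum, bernsteinPolynomial.sum,
      h1, ENNReal.ofReal_one]⟩
  let ms : ℕ → ProbabilityMeasure unitInterval := fun n => ⟨m n, hm n⟩
  let U : Ultrafilter ℕ := Ultrafilter.of atTop
  have hU : (U : Filter ℕ) ≤ atTop := Ultrafilter.of_le _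
  obtain ⟨μ, -, hμ⟩ := isCompact_univ.ultrafilter_le_nhds (U.map ms) (by simp)
  have hμ' : Tendsto ms U (𝓝 μ) := hμ
  refine ⟨μ, fun j => ?_⟩
  rw [ProbabilityMeasure.tendsto_iff_forall_integral_tendsto] at hμ'
  let f : BoundedContinuousFunction unitInterval ℝ :=
    BoundedContinuousFunction.mkOfCompact ⟨fun x => (x:ℝ) ^ j, by fun_prop⟩
  have l1 := hμ' f
  have l2 := (h.conv j).mono_left hU
  refine tendsto_nhds_unique l1 (l2.congr' ?_)
  refine Filter.Eventually.filter_mono hU ?_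
  filter_upwards [eventually_gt_atTop 0] with n hn
  have hn' : (0:ℝ) < n := by exact_mod_cast hn
  change _ = ∫ x, (x:ℝ) ^ j ∂(m n)
  simp only [m]
  have hintg : ∀ μ : Measure unitInterval, IsFiniteMeasure μ →
      Integrable (fun x : unitInterval => (x:ℝ) ^ j) μ := fun μ _ =>
    f.integrable μ
  rw [integral_finsetSum_measure]
  · refine Finset.sum_congr rfl fun k hk => ?_
    have hk' : (k:ℝ) ≤ n := by
      exact_mod_cast Nat.lt_succ_iff.mp (Finset.mem_range.mp hk)
    rw [integral_smul_measure, integral_dirac, ENNReal.toReal_ofReal (h.bern n k), smul_eq_mul,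
      mul_comm]
    congr 2
    simp only [pt]
    rw [Set.projIcc_of_mem zero_le_one ⟨by positivity, by rw [div_le_one hn']; exact hk'⟩]
  · intro k _
    exact (hintg _ inferInstance).smul_measure ENNReal.ofReal_ne_top

theorem PSD.exists_measure {s : ℕ → ℝ} (hs : PSD s) (h0 : s 0 = 1) {K R : ℝ} (hR : 0 < R)
    (hb : ∀ n, |s n| ≤ K * R ^ n) :
    ∃ ν : Measure ℝ, IsProbabilityMeasure ν ∧ ν (Set.Icc (-R) R)ᶜ = 0 ∧
      ∀ n : ℕ, ∫ x, x ^ n ∂ν = s n := by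
  let A : Polynomial ℝ := Polynomial.C (2 * R)⁻¹ * (Polynomial.C R + Polynomial.X)
  let L : Polynomial ℝ →ₗ[ℝ] ℝ := momL s ∘ₗ (Polynomial.aeval A).toLinearMap
  have hL : ∀ p, L p = momL s (Polynomial.aeval A p) := fun p => rfl
  have hRR : (2 * R)⁻¹ * (2 * R) = 1 := inv_mul_cancel₀ (by positivity)
  have hA1 : 1 - A = Polynomial.C (2 * R)⁻¹ * (Polynomial.C R - Polynomial.X) := by
    have : (1 : Polynomial ℝ) = Polynomial.C (2 * R)⁻¹ * (2 * Polynomial.C R) := by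
      rw [show (2 : Polynomial ℝ) = Polynomial.C 2 from rfl, ← Polynomial.C_mul, ← Polynomial.C_mul,
        hRR, Polynomial.C_1]
    rw [this]; simp only [A]; ring
  have hpos : PosL L := fun i j => by
    rw [hL]
    simp only [map_mul, map_pow, Polynomial.aeval_X, map_sub, map_one]
    rw [hA1]
    have := hs.momL_pos hR hb j i
    have e : A ^ i * (Polynomial.C (2 * R)⁻¹ * (Polynomial.C R - Polynomial.X)) ^ j
      = ((2 * R)⁻¹ ^ (i + j)) • ((Polynomial.C R - Polynomial.X) ^ j
        * (Polynomial.C R + Polynomial.X) ^ i) := by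
      rw [Polynomial.smul_eq_C_mul, map_pow]; simp only [A]; rw [mul_pow, mul_pow]; ring
    rw [e, map_smul, smul_eq_mul]
    positivity
  obtain ⟨μ, hμ⟩ := hpos.exists_measure (by rw [hL]; simp [momL_one, h0])
  have hall : ∀ p : Polynomial ℝ, ∫ x, p.eval (x : ℝ) ∂(μ : Measure unitInterval) = L p := by
    have hintg : ∀ p : Polynomial ℝ,
        Integrable (fun x : unitInterval => p.eval (x : ℝ)) (μ : Measure unitInterval) := fun p =>
      (BoundedContinuousFunction.mkOfCompact
        (⟨fun x : unitInterval => p.eval (x:ℝ), by fun_prop⟩ : C(unitInterval, ℝ))).integrable _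
    intro p
    induction p using Polynomial.induction_on' with
    | add p q hp hq =>
      simp only [Polynomial.eval_add]
      rw [integral_add (hintg p) (hintg q), hp, hq, map_add]
    | monomial n a =>
      simp only [Polynomial.eval_monomial]
      rw [integral_const_mul, hμ, ← smul_eq_mul, ← map_smul, Polynomial.smul_X_eq_monomial]
  let g : unitInterval → ℝ := fun x => 2 * R * x - R
  have hg : Measurable g := by fun_prop
  refine ⟨(μ : Measure unitInterval).map g, Measure.isProbabilityMeasure_map hg.aemeasurable, ?_, ?_⟩
  · rw [Measure.map_apply hg measurableSet_Icc.compl]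
    convert measure_empty (μ := (μ : Measure unitInterval))
    ext x
    simp only [g, Set.mem_preimage, Set.mem_compl_iff, Set.mem_Icc, Set.mem_empty_iff_false,
      iff_false, not_not]
    have := x.2.1
    have := x.2.2
    constructor <;> nlinarith
  · intro n
    rw [integral_map hg.aemeasurable (by fun_prop)]
    have := hall ((Polynomial.C (2 * R) * Polynomial.X - Polynomial.C R) ^ n)
    simp only [Polynomial.eval_pow, Polynomial.eval_sub, Polynomial.eval_mul, Polynomial.eval_C,
      Polynomial.eval_X] at this
    simp only [g]
    rw [this, hL]
    simp only [map_pow, map_sub, map_mul, Polynomial.aeval_X, Polynomial.aeval_C]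
    rw [← momL_X_pow s n]
    congr 2
    simp only [A, Polynomial.algebraMap_eq]
    have hCC : Polynomial.C (2 * R) * Polynomial.C (2 * R)⁻¹ = 1 := by
      rw [← Polynomial.C_mul, mul_inv_cancel₀ (by positivity), Polynomial.C_1]
    rw [← mul_assoc, ← Polynomial.C_mul (a := 2), hCC]
    ring

theorem PSD.sum_shift {s : ℕ → ℝ} (hs : PSD s) (n : ℕ) (a : ℕ → ℝ) (k : ℕ) :
    0 ≤ ∑ i ∈ Finset.range n, ∑ j ∈ Finset.range n, a i * a j * s (i + j + 2 * k) := by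
  have h := hs.momL_sq (∑ i ∈ Finset.range n, a i • (Polynomial.X ^ (i + k) : Polynomial ℝ))
  convert h using 1
  rw [Finset.sum_mul_sum, map_sum]
  refine Finset.sum_congr rfl fun i _ => ?_
  rw [map_sum]
  refine Finset.sum_congr rfl fun j _ => ?_
  rw [smul_mul_smul_comm, ← pow_add, map_smul, momL_X_pow, smul_eq_mul]
  congr 2; ring

theorem mk_tail (b : ℕ → ℝ) (n : ℕ) :
    (PowerSeries.mk fun k => b (n + k)) = C (b n) + X * (PowerSeries.mk fun k => b (n + 1 + k)) := by
  ext k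
  rcases k with _ | k
  · simp
  · simp [coeff_succ_X_mul, add_assoc, add_comm 1 k]

/-- the polynomials in the Boolean (Schur step) inversion -/
def schurP (b : ℕ → ℝ) : ℕ → Polynomial ℝ
  | 0 => Polynomial.X
  | n + 1 => Polynomial.X * schurP b n - Polynomial.C (b n)

theorem PSD.boolean_inv {M : PowerSeries ℝ} {b : ℕ → ℝ} (hM : PSD fun n => coeff n M)
    (h : M = 1 + X * (X * PowerSeries.mk b * M)) : PSD b := by
  set L := momL (fun n => coeff n M) with hL
  have M0 : coeff 0 M = 1 := by rw [h]; simp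
  have claim : ∀ n k, L (Polynomial.X ^ k * schurP b n)
      = coeff k (X * (PowerSeries.mk fun k => b (n + k)) * M) := by
    intro n
    induction n with
    | zero =>
      intro k
      rw [schurP, ← pow_succ, hL, momL_X_pow]
      conv_lhs => rw [h]
      simp [coeff_one, coeff_succ_X_mul]
    | succ n ih =>
      intro k
      have e : Polynomial.X ^ k * schurP b (n + 1)
          = Polynomial.X ^ (k + 1) * schurP b n - b n • Polynomial.X ^ k := by
        rw [schurP, Polynomial.smul_eq_C_mul]; ring
      rw [e, map_sub, ih, map_smul, hL, momL_X_pow, mk_tail b n, mul_assoc, coeff_succ_X_mul,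
        add_mul, map_add, coeff_C_mul, smul_eq_mul, add_sub_cancel_left]
  have l0 : ∀ n, L (schurP b n) = 0 := fun n => by
    have := claim n 0
    rw [pow_zero, one_mul] at this
    rw [this, mul_assoc]; simp
  have l1 : ∀ n, L (Polynomial.X * schurP b n) = b n := fun n => by
    have := claim n 1
    rw [pow_one] at this
    rw [this, mul_assoc, show (1:ℕ) = 0 + 1 from rfl, coeff_succ_X_mul]
    simp only [coeff_zero_eq_constantCoeff] at M0 ⊢
    simp [M0]
  have hC : ∀ (c : ℝ) p, L (Polynomial.C c * p) = c * L p := fun c p => by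
    rw [← Polynomial.smul_eq_C_mul, map_smul, smul_eq_mul]
  have key : ∀ i j, L (schurP b i * schurP b j) = b (i + j) := by
    intro i
    induction i with
    | zero => intro j; rw [schurP, l1, zero_add]
    | succ i ih =>
      intro j
      have e1 := ih (j + 1)
      rw [schurP, mul_sub, map_sub, mul_comm (schurP b i) (Polynomial.C _), hC, l0] at e1
      rw [schurP, sub_mul, map_sub, hC, l0, show i + 1 + j = i + (j + 1) by ring, ← e1,
        mul_zero, mul_zero,
        show Polynomial.X * schurP b i * schurP b j = schurP b i * (Polynomial.X * schurP b j) by ring]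
  intro n a
  have h := hM.momL_sq (∑ i ∈ Finset.range n, a i • schurP b i)
  convert h using 1
  rw [Finset.sum_mul_sum, map_sum]
  refine Finset.sum_congr rfl fun i _ => ?_
  rw [map_sum]
  refine Finset.sum_congr rfl fun j _ => ?_
  rw [smul_mul_smul_comm, map_smul, ← hL, key, smul_eq_mul]

/-- quadratic form attached to a kernel -/
def kerQ {S : Type} (K : Matrix S S ℝ) : (S →₀ ℝ) →ₗ[ℝ] (S →₀ ℝ) →ₗ[ℝ] ℝ :=
  Finsupp.linearCombination ℝ (fun e => Finsupp.linearCombination ℝ (fun f => K e f))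

theorem kerQ_single {S : Type} (K : Matrix S S ℝ) (e f : S) :
    kerQ K (Finsupp.single e 1) (Finsupp.single f 1) = K e f := by
  simp [kerQ]

theorem kerQ_nonneg {S : Type} {K : Matrix S S ℝ} (hK : K.PosSemidef) (v : S →₀ ℝ) :
    0 ≤ kerQ K v v := by
  have := hK.2 v
  refine le_of_le_of_eq this (Eq.symm ?_)
  simp only [kerQ, Finsupp.linearCombination_apply, Finsupp.sum, LinearMap.sum_apply,
    LinearMap.smul_apply, smul_eq_mul, Finset.mul_sum, star_trivial]
  refine Finset.sum_congr rfl fun i _ => Finset.sum_congr rfl fun j _ => ?_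
  ring

theorem psd_of_kernel {S : Type} {K : Matrix S S ℝ} (hK : K.PosSemidef)
    (T : (S →₀ ℝ) →ₗ[ℝ] (S →₀ ℝ))
    (hT : ∀ e f, kerQ K (T (Finsupp.single e 1)) (Finsupp.single f 1)
      = kerQ K (Finsupp.single e 1) (T (Finsupp.single f 1))) (ω : S →₀ ℝ) :
    PSD (fun n => kerQ K ((T ^ n) ω) ω) := by
  have sym : ∀ u v, kerQ K (T u) v = kerQ K u (T v) := by
    have : (kerQ K).comp T = (LinearMap.lcomp ℝ ℝ T).comp (kerQ K) := by
      refine Finsupp.lhom_ext' fun e => LinearMap.ext_ring ?_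
      refine Finsupp.lhom_ext' fun f => LinearMap.ext_ring ?_
      exact hT e f
    intro u v
    exact congrArg (fun g => g u v) this
  have key : ∀ i j, kerQ K ((T ^ (i + j)) ω) ω = kerQ K ((T ^ i) ω) ((T ^ j) ω) := by
    intro i j
    induction j generalizing i with
    | zero => simp
    | succ j ih =>
      rw [show i + (j + 1) = (i + 1) + j by ring, ih, pow_succ' T i, pow_succ' T j,
        Module.End.mul_apply, Module.End.mul_apply, sym]
  intro n a
  have := kerQ_nonneg hK (∑ i ∈ Finset.range n, a i • (T ^ i) ω)
  convert this using 1
  rw [map_sum (kerQ K), LinearMap.sum_apply]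
  refine Finset.sum_congr rfl fun i _ => ?_
  rw [map_sum]
  refine Finset.sum_congr rfl fun j _ => ?_
  beta_reduce
  rw [key, map_smul, map_smul, LinearMap.smul_apply, smul_eq_mul, smul_eq_mul]; ring

theorem posSemidef_outer {S : Type} (u : S → ℝ) :
    (Matrix.of fun e f => u e * u f : Matrix S S ℝ).PosSemidef := by
  refine ⟨?_, fun x => ?_⟩
  · ext i j; simp [mul_comm]
  · have : 0 ≤ (x.sum fun i a => a * u i) ^ 2 := sq_nonneg _
    refine le_of_le_of_eq this (Eq.symm ?_)
    rw [sq]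
    simp only [Finsupp.sum, star_trivial, Matrix.of_apply, Finset.sum_mul_sum]
    refine Finset.sum_congr rfl fun i _ => Finset.sum_congr rfl fun j _ => ?_
    ring

theorem PSD.posSemidef {b : ℕ → ℝ} (hb : PSD b) :
    (Matrix.of fun i j => b (i + j) : Matrix ℕ ℕ ℝ).PosSemidef := by
  refine ⟨?_, fun x => ?_⟩
  · ext i j; simp [add_comm]
  · obtain ⟨n, hn⟩ := x.support.bddAbove
    have := hb (n + 1) x
    refine le_of_le_of_eq this (Eq.symm ?_)
    have hsub : x.support ⊆ Finset.range (n + 1) := fun i hi =>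
      Finset.mem_range.2 (Nat.lt_succ_of_le (hn hi))
    rw [Finsupp.sum_of_support_subset x hsub _ (by simp)]
    refine Finset.sum_congr rfl fun i _ => ?_
    rw [Finsupp.sum_of_support_subset x hsub _ (by simp)]
    refine Finset.sum_congr rfl fun j _ => ?_
    simp only [star_trivial, Matrix.of_apply]; ring

/-- Fock space kernel -/
def fockK (b : ℕ → ℝ) : List ℕ → List ℕ → ℝ
  | [], [] => 1
  | i :: e, j :: f => b (i + j) * fockK b e f
  | _, _ => 0

/-- truncated Fock space kernel -/
def fockKn (b : ℕ → ℝ) : ℕ → Matrix (List ℕ) (List ℕ) ℝ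
  | 0 => Matrix.of fun e f => (if e = [] then 1 else 0) * (if f = [] then 1 else 0)
  | n + 1 => (Matrix.of fun e f => (if e = [] then 1 else 0) * (if f = [] then 1 else 0)) +
      Matrix.hadamard (Matrix.of fun e f => (if e = [] then 0 else 1) * (if f = [] then 0 else 1))
        (Matrix.hadamard ((Matrix.of fun i j => b (i + j) : Matrix ℕ ℕ ℝ).submatrix
          (fun e : List ℕ => e.headD 0) (fun e : List ℕ => e.headD 0))
          ((fockKn b n).submatrix List.tail List.tail))

theorem fockKn_posSemidef {b : ℕ → ℝ} (hb : PSD b) (n : ℕ) : (fockKn b n).PosSemidef := by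
  induction n with
  | zero => exact posSemidef_outer _
  | succ n ih =>
    exact (posSemidef_outer _).add ((posSemidef_outer _).hadamard
      ((hb.posSemidef.submatrix _).hadamard (ih.submatrix _)))

theorem fockKn_eq (b : ℕ → ℝ) (n : ℕ) (e f : List ℕ) (he : e.length ≤ n) :
    fockKn b n e f = fockK b e f := by
  induction n generalizing e f with
  | zero =>
    obtain rfl : e = [] := by simpa using he
    rcases f with _ | ⟨j, f⟩ <;> simp [fockKn, fockK]
  | succ n ih =>
    rcases e with _ | ⟨i, e⟩ <;> rcases f with _ | ⟨j, f⟩ <;>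
      simp [fockKn, fockK, Matrix.hadamard]
    left
    exact ih e f (by simpa using he)

theorem fockK_posSemidef {b : ℕ → ℝ} (hb : PSD b) :
    (Matrix.of (fockK b) : Matrix (List ℕ) (List ℕ) ℝ).PosSemidef := by
  have hle : ∀ x : List ℕ →₀ ℝ, ∃ n, ∀ e ∈ x.support, e.length ≤ n := fun x =>
    ⟨x.support.sup List.length, fun e he => Finset.le_sup (f := List.length) he⟩
  refine ⟨?_, fun x => ?_⟩
  · ext e f
    have h1 := fockKn_eq b (max e.length f.length) e f (le_max_left _ _)
    have h2 := fockKn_eq b (max e.length f.length) f e (le_max_right _ _)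
    have h3 := (fockKn_posSemidef hb (max e.length f.length)).1.apply e f
    simp only [star_trivial] at h3
    simp only [Matrix.conjTranspose_apply, star_trivial, Matrix.of_apply]
    rw [← h1, ← h2, h3]
  · obtain ⟨n, hn⟩ := hle x
    have := (fockKn_posSemidef hb n).2 x
    refine le_of_le_of_eq this (Eq.symm ?_)
    refine Finset.sum_congr rfl fun e he => Finset.sum_congr rfl fun f hf => ?_
    change star (x e) * fockK b e f * x f = star (x e) * fockKn b n e f * x f
    rw [fockKn_eq b n e f (hn e he)]

/-- the sum of creation, annihilation and gauge operators on basis vectors -/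
def fockT0 (b : ℕ → ℝ) : List ℕ → (List ℕ →₀ ℝ)
  | [] => Finsupp.single [0] 1
  | i :: e => Finsupp.single (0 :: i :: e) 1 + b i • Finsupp.single e 1
      + Finsupp.single ((i + 1) :: e) 1

/-- the operator on the Fock space -/
def fockT (b : ℕ → ℝ) : (List ℕ →₀ ℝ) →ₗ[ℝ] (List ℕ →₀ ℝ) :=
  Finsupp.linearCombination ℝ (fockT0 b)

theorem fockK_symm_aux (b : ℕ → ℝ) (e f : List ℕ) :
    kerQ (Matrix.of (fockK b)) (fockT0 b e) (Finsupp.single f 1)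
      = kerQ (Matrix.of (fockK b)) (Finsupp.single e 1) (fockT0 b f) := by
  rcases e with _ | ⟨i, e⟩ <;> rcases f with _ | ⟨j, f⟩ <;>
    simp only [fockT0, map_add, map_smul, LinearMap.add_apply, LinearMap.smul_apply, kerQ_single,
      Matrix.of_apply, smul_eq_mul, fockK]
  · rcases f with _ | ⟨k, f⟩ <;> simp [fockK]
  · rcases e with _ | ⟨k, e⟩ <;> simp [fockK]
  · have : i + 1 + j = i + (j + 1) := by ring
    rw [this]
    simp only [zero_add, add_zero]
    ring

theorem PSD.fock {M : PowerSeries ℝ} {D : ℕ → PowerSeries ℝ} {b : ℕ → ℝ} (hb : PSD b)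
    (hM : M = 1 + X * (M * D 0)) (hD : ∀ e, D e = X * (M * (C (b e) + D (e + 1)))) :
    PSD fun n => coeff n M := by
  have hD' : ∀ e, D e = X * (D 0 * D e + C (b e) + D (e + 1)) := by
    intro e
    have h1 : M * (1 - X * D 0) = 1 := by linear_combination hM
    have h2 := hD e
    linear_combination (1 - X * D 0) * h2 + X * (C (b e) + D (e + 1)) * h1
  set Φ : List ℕ → PowerSeries ℝ := fun l => M * (l.map D).prod with hΦ
  have claim : ∀ n l, kerQ (Matrix.of (fockK b)) ((fockT b ^ n) (Finsupp.single l 1))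
      (Finsupp.single [] 1) = coeff n (Φ l) := by
    intro n
    induction n with
    | zero =>
      intro l
      rw [pow_zero, Module.End.one_apply, kerQ_single, Matrix.of_apply]
      rcases l with _ | ⟨i, l⟩
      · simp only [fockK, hΦ, List.map_nil, List.prod_nil, mul_one]; rw [hM]; simp
      · simp only [fockK, hΦ, List.map_cons, List.prod_cons]; rw [hD i]; simp
    | succ n ih =>
      intro l
      have hT : fockT b (Finsupp.single l 1) = fockT0 b l := by simp [fockT]
      rw [pow_succ, Module.End.mul_apply, hT]
      rcases l with _ | ⟨i, l⟩
      · rw [fockT0, ih]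
        simp only [hΦ, List.map_cons, List.prod_cons, List.map_nil, List.prod_nil, mul_one]
        conv_rhs => rw [hM]
        simp [coeff_one, coeff_succ_X_mul]
      · rw [fockT0]
        simp only [map_add, map_smul, LinearMap.add_apply, LinearMap.smul_apply, ih, smul_eq_mul]
        simp only [hΦ, List.map_cons, List.prod_cons]
        have : M * (D i * (l.map D).prod) = X * (M * (D 0 * (D i * (l.map D).prod))
          + C (b i) * (M * (l.map D).prod) + M * (D (i + 1) * (l.map D).prod)) := by
          linear_combination M * (l.map D).prod * hD' i
        rw [this, coeff_succ_X_mul, map_add, map_add, coeff_C_mul]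
  have := psd_of_kernel (fockK_posSemidef hb) (fockT b) (fun e f => by
    have hT : ∀ l, fockT b (Finsupp.single l 1) = fockT0 b l := fun l => by simp [fockT]
    rw [hT, hT]; exact fockK_symm_aux b e f) (Finsupp.single [] 1)
  convert this using 2 with n
  rw [claim]; simp [hΦ]

/-- Boolean kernel -/
def boolK (b : ℕ → ℝ) : Option ℕ → Option ℕ → ℝ
  | none, none => 1
  | some i, some j => b (i + j)
  | _, _ => 0

theorem boolK_posSemidef {b : ℕ → ℝ} (hb : PSD b) :
    (Matrix.of (boolK b) : Matrix (Option ℕ) (Option ℕ) ℝ).PosSemidef := by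
  have e : (Matrix.of (boolK b) : Matrix (Option ℕ) (Option ℕ) ℝ) =
      (Matrix.of fun e f => (if e = none then 1 else 0) * (if f = none then 1 else 0)) +
      Matrix.hadamard (Matrix.of fun e f => (if e = none then 0 else 1) * (if f = none then 0 else 1))
        ((Matrix.of fun i j => b (i + j) : Matrix ℕ ℕ ℝ).submatrix
          (fun e : Option ℕ => e.getD 0) (fun e : Option ℕ => e.getD 0)) := by
    ext e f
    rcases e with _ | e <;> rcases f with _ | f <;> simp [boolK, Matrix.hadamard]
  rw [e]
  exact (posSemidef_outer _).add ((posSemidef_outer _).hadamard (hb.posSemidef.submatrix _))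

/-- the Boolean operator on basis vectors -/
def boolT0 (b : ℕ → ℝ) : Option ℕ → (Option ℕ →₀ ℝ)
  | none => Finsupp.single (some 0) 1
  | some e => b e • Finsupp.single none 1 + Finsupp.single (some (e + 1)) 1

/-- the Boolean operator -/
def boolT (b : ℕ → ℝ) : (Option ℕ →₀ ℝ) →ₗ[ℝ] (Option ℕ →₀ ℝ) :=
  Finsupp.linearCombination ℝ (boolT0 b)

theorem boolT_single (b : ℕ → ℝ) (l : Option ℕ) :
    boolT b (Finsupp.single l 1) = boolT0 b l := by simp [boolT]

theorem boolK_symm_aux (b : ℕ → ℝ) (e f : Option ℕ) :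
    kerQ (Matrix.of (boolK b)) (boolT0 b e) (Finsupp.single f 1)
      = kerQ (Matrix.of (boolK b)) (Finsupp.single e 1) (boolT0 b f) := by
  rcases e with _ | e <;> rcases f with _ | f <;>
    simp only [boolT0, map_add, map_smul, LinearMap.add_apply, LinearMap.smul_apply, kerQ_single,
      Matrix.of_apply, smul_eq_mul, boolK]
  · simp
  · simp
  · have : e + 1 + f = e + (f + 1) := by ring
    rw [this]; ring

theorem PSD.boolean_fwd {M : PowerSeries ℝ} {b : ℕ → ℝ} (hb : PSD b)
    (h : M = 1 + X * (X * PowerSeries.mk b * M)) : PSD fun n => coeff n M := by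
  have claim : ∀ n, kerQ (Matrix.of (boolK b)) ((boolT b ^ n) (Finsupp.single none 1))
      (Finsupp.single none 1) = coeff n M ∧ ∀ e, 
      kerQ (Matrix.of (boolK b)) ((boolT b ^ n) (Finsupp.single (some e) 1))
      (Finsupp.single none 1) = coeff n (X * ((PowerSeries.mk fun k => b (e + k)) * M)) := by
    intro n
    induction n with
    | zero =>
      simp only [pow_zero, Module.End.one_apply, kerQ_single, Matrix.of_apply, boolK]
      refine ⟨?_, fun e => ?_⟩
      · rw [h]; simp
      · simp
    | succ n ih =>
      simp only [pow_succ, Module.End.mul_apply, boolT_single, boolT0, map_add, map_smul,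
        LinearMap.add_apply, LinearMap.smul_apply, ih.1, ih.2, smul_eq_mul]
      refine ⟨?_, fun e => ?_⟩
      · conv_rhs => rw [h]
        simp [coeff_one, coeff_succ_X_mul, mul_assoc]
      · rw [coeff_succ_X_mul, mk_tail b e, add_mul, map_add, coeff_C_mul, mul_assoc]
  have := psd_of_kernel (boolK_posSemidef hb) (boolT b) (fun e f => by
    rw [boolT_single, boolT_single]; exact boolK_symm_aux b e f) (Finsupp.single none 1)
  convert this using 2 with n
  rw [(claim n).1]

theorem integral_geom {ν : Measure ℝ} [IsProbabilityMeasure ν] {R : ℝ} (hR : 0 < R)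
    (hν : ν (Set.Icc (-R) R)ᶜ = 0) {w : ℝ} (hw : |w| * R < 1) :
    HasSum (fun n => (∫ x, x ^ n ∂ν) * w ^ n) (∫ x, 1 / (1 - w * x) ∂ν) := by
  have hae : ∀ᵐ x ∂ν, |x| ≤ R := by
    filter_upwards [compl_mem_ae_iff.2 hν] with x hx
    rw [compl_compl] at hx
    exact abs_le.2 hx
  have hw0 : 0 ≤ |w| * R := by positivity
  have := hasSum_integral_of_dominated_convergence (μ := ν)
    (F := fun (n : ℕ) x => x ^ n * w ^ n) (f := fun x => 1 / (1 - w * x))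
    (fun n _ => (|w| * R) ^ n) (fun n => by fun_prop)
    (fun n => by
      filter_upwards [hae] with x hx
      rw [← mul_pow, norm_pow, norm_mul, Real.norm_eq_abs, Real.norm_eq_abs, mul_comm]
      gcongr)
    (Eventually.of_forall fun x => summable_geometric_of_lt_one hw0 hw)
    (by simp)
    (by
      filter_upwards [hae] with x hx
      have h1 : |w * x| < 1 := by
        rw [abs_mul]; exact lt_of_le_of_lt (by gcongr) hw
      have := hasSum_geometric_of_abs_lt_one h1
      rw [one_div]
      exact hasSum_of_eq this fun n => by rw [mul_pow, mul_comm])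
  refine hasSum_of_eq this fun n => ?_
  rw [integral_mul_const]

theorem psd_moments {ν : Measure ℝ} [IsProbabilityMeasure ν] {R : ℝ}
    (hν : ν (Set.Icc (-R) R)ᶜ = 0) : PSD fun n => ∫ x, x ^ n ∂ν := by
  have hae : ∀ᵐ x ∂ν, |x| ≤ R := by
    filter_upwards [compl_mem_ae_iff.2 hν] with x hx
    rw [compl_compl] at hx
    exact abs_le.2 hx
  have hintg : ∀ n : ℕ, Integrable (fun x : ℝ => x ^ n) ν := fun n =>
    Integrable.of_bound (by fun_prop) (R ^ n) (by
      filter_upwards [hae] with x hx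
      rw [norm_pow, Real.norm_eq_abs]; gcongr)
  intro n a
  have h : 0 ≤ ∫ x, (∑ i ∈ Finset.range n, a i * x ^ i) * (∑ i ∈ Finset.range n, a i * x ^ i) ∂ν :=
    integral_nonneg fun x => mul_self_nonneg _
  refine le_of_le_of_eq h ?_
  simp only [Finset.sum_mul_sum]
  have hi : ∀ i j, Integrable (fun x : ℝ => a i * x ^ i * (a j * x ^ j)) ν := fun i j =>
    ((hintg (i + j)).const_mul (a i * a j)).congr (Eventually.of_forall fun x => by
      simp only; ring)
  rw [integral_finsetSum _ fun i _ => integrable_finsetSum _ fun j _ => hi i j]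
  refine Finset.sum_congr rfl fun i _ => ?_
  rw [integral_finsetSum _ fun j _ => hi i j]
  refine Finset.sum_congr rfl fun j _ => ?_
  rw [← integral_const_mul]
  congr 1; ext x; ring

theorem lim_eq_csk {f g : ℝ → ℝ} (hf : ContinuousAt f 0) (hg : ContinuousAt g 0)
    (h : ∀ᶠ m in 𝓝 0, m ≠ 0 → f m = g m) : f 0 = g 0 := by
  have h1 : Tendsto f (𝓝[≠] 0) (𝓝 (f 0)) := hf.tendsto.mono_left nhdsWithin_le_nhds
  have h2 : Tendsto g (𝓝[≠] 0) (𝓝 (g 0)) := hg.tendsto.mono_left nhdsWithin_le_nhds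
  have h3 : f =ᶠ[𝓝[≠] 0] g := eventually_nhdsWithin_iff.2 h
  exact tendsto_nhds_unique h1 (h2.congr' h3.symm)

/-- analytic characterisation data -/
def MData (W : ℝ → ℝ) (Mf : ℝ → ℝ) (M : PowerSeries ℝ) : Prop :=
  HasPS Mf M ∧ ∀ᶠ m in 𝓝 (0:ℝ), Mf (m / (W m + m ^ 2)) = 1 + m ^ 2 / W m

theorem w_tendsto {W : ℝ → ℝ} (hW : AnalyticAt ℝ W 0) (h0 : 0 < W 0) :
    AnalyticAt ℝ (fun m => m / (W m + m ^ 2)) 0 ∧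
    Tendsto (fun m => m / (W m + m ^ 2)) (𝓝 0) (𝓝 0) ∧ ∀ᶠ m in 𝓝 0, 0 < W m := by
  have ha : AnalyticAt ℝ (fun m => m / (W m + m ^ 2)) 0 :=
    analyticAt_id.div (hW.add (analyticAt_id.pow 2)) (by simpa using h0.ne')
  refine ⟨ha, ?_, hW.continuousAt.eventually (lt_mem_nhds h0)⟩
  have := ha.continuousAt.tendsto
  simpa using this

theorem kernel_eq {W : ℝ → ℝ} {m x : ℝ} (h : 0 < W m) :
    cskKernel W m x = W m / (W m + m ^ 2) * (1 / (1 - m / (W m + m ^ 2) * x)) := by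
  have h1 : W m + m ^ 2 ≠ 0 := by positivity
  have e : 1 - m / (W m + m ^ 2) * x = (W m + m * (m - x)) / (W m + m ^ 2) := by
    field_simp; ring
  rw [cskKernel, e, one_div_div, div_mul_div_comm, mul_comm (W m + m ^ 2), mul_div_mul_right _ _ h1]

theorem mdata_tail {W Mf : ℝ → ℝ} {s : ℕ → ℝ} (hW : AnalyticAt ℝ W 0) (h0 : 0 < W 0)
    (h : MData W Mf (PowerSeries.mk s)) : s 0 = 1 ∧ s 1 = 0 ∧ s 2 * W 0 = W 0 ^ 2 := by
  obtain ⟨ha, ht, hpos⟩ := w_tendsto hW h0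
  obtain ⟨hM, hE⟩ := h
  have s0 : s 0 = 1 := by
    have := hE.self_of_nhds
    have h2 := hM.zero
    simp at this h2
    rw [← h2, this]
  obtain ⟨F, hF0, hF⟩ := hM.tails
  have z : ∀ e, F e 0 = s e := fun e => by
    have := (hF e).1.zero
    simpa using this
  have hc : ∀ e, ContinuousAt (fun m => F e (m / (W m + m ^ 2))) 0 := fun e => by
    have h1 : ContinuousAt (F e) ((fun m => m / (W m + m ^ 2)) 0) := by
      simpa using (hF e).1.analyticAt.continuousAt
    exact ContinuousAt.comp (f := fun m => m / (W m + m ^ 2)) h1 ha.continuousAt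
  have hWc := hW.continuousAt
  have key1 : ∀ᶠ m in 𝓝 0, m ≠ 0 → F 1 (m / (W m + m ^ 2)) = m * (W m + m ^ 2) / W m := by
    filter_upwards [hpos, hE, ht.eventually (hF 0).2] with m h1 h2 h3 hm
    rw [hF0, h2, s0] at h3
    have h4 : W m + m ^ 2 ≠ 0 := by positivity
    field_simp at h3 ⊢
    have h5 : m * (F 1 (m / (W m + m ^ 2)) * W m) = m * (m * (W m + m ^ 2)) := by
      linear_combination -h3
    have := mul_left_cancel₀ hm h5
    linear_combination this
  have s1 : s 1 = 0 := by
    have := lim_eq_csk (hc 1) (g := fun m => m * (W m + m ^ 2) / W m)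
      (by refine ContinuousAt.div (by fun_prop) hWc h0.ne') key1
    simpa [z] using this
  have key2 : ∀ᶠ m in 𝓝 0, m ≠ 0 → F 2 (m / (W m + m ^ 2)) = (W m + m ^ 2) ^ 2 / W m := by
    filter_upwards [hpos, key1, ht.eventually (hF 1).2] with m h1 h2 h3 hm
    rw [h2 hm, s1] at h3
    have h4 : W m + m ^ 2 ≠ 0 := by positivity
    field_simp at h3 ⊢
    refine mul_left_cancel₀ hm ?_
    linear_combination -h3
  have s2 : s 2 = W 0 ^ 2 / W 0 := by
    have := lim_eq_csk (hc 2) (g := fun m => (W m + m ^ 2) ^ 2 / W m)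
      (by refine ContinuousAt.div (by fun_prop) hWc h0.ne') key2
    simpa [z] using this
  refine ⟨s0, s1, ?_⟩
  rw [s2]; field_simp

theorem memV.char {W : ℝ → ℝ} (h : memV W) : AnalyticAt ℝ W 0 ∧ W 0 = 1 ∧
    ∃ Mf M, MData W Mf M ∧ PSD fun n => coeff n M := by
  obtain ⟨ν, ⟨hp, ⟨R0, hR0⟩, -, hmean⟩, hvar, hW, hpos, ε, hε, hker⟩ := h
  obtain ⟨R, hR, hν⟩ : ∃ R : ℝ, 0 < R ∧ ν (Set.Icc (-R) R)ᶜ = 0 := by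
    refine ⟨max R0 1, by positivity, measure_mono_null ?_ hR0⟩
    refine Set.compl_subset_compl.2 (Set.Icc_subset_Icc ?_ (le_max_left _ _))
    exact neg_le_neg (le_max_left _ _)
  obtain ⟨ha, ht, hWpos⟩ := w_tendsto hW hpos
  have hsmall : ∀ᶠ w : ℝ in 𝓝 0, |w| * R < 1 := by
    have : Tendsto (fun w : ℝ => |w| * R) (𝓝 0) (𝓝 (|0| * R)) := by
      exact (Continuous.tendsto (by fun_prop) 0)
    exact this.eventually (gt_mem_nhds (by simp))
  have hd : MData W (fun w => ∫ x, 1 / (1 - w * x) ∂ν)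
      (PowerSeries.mk fun n => ∫ x, x ^ n ∂ν) := by
    refine ⟨?_, ?_⟩
    · filter_upwards [hsmall] with w hw
      simpa using integral_geom hR hν hw
    · have hm : ∀ᶠ m : ℝ in 𝓝 0, |m| < ε := by
        have : Tendsto (fun w : ℝ => |w|) (𝓝 0) (𝓝 |0|) := continuous_abs.tendsto 0
        exact this.eventually (gt_mem_nhds (by simpa using hε))
      filter_upwards [hWpos, hm] with m h1 h2
      have h3 := (hker m h2).2.1
      simp only [kernel_eq h1] at h3
      rw [integral_const_mul] at h3
      have h4 : W m + m ^ 2 ≠ 0 := by positivity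
      field_simp at h3 ⊢
      linear_combination h3
  refine ⟨hW, ?_, _, _, hd, by simpa using psd_moments hν⟩
  have h2 := (mdata_tail hW hpos hd).2.2
  rw [hvar, one_mul] at h2
  have := hpos.ne'
  rw [sq] at h2
  exact (mul_left_cancel₀ this (by linarith)).symm

theorem memV.of_char {W : ℝ → ℝ} (hW : AnalyticAt ℝ W 0) (h0 : W 0 = 1) {Mf M}
    (hd : MData W Mf M) (hM : PSD fun n => coeff n M) : memV W := by
  have hpos : 0 < W 0 := by rw [h0]; exact one_pos
  obtain ⟨ha, ht, hWpos⟩ := w_tendsto hW hpos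
  have hd' : MData W Mf (PowerSeries.mk fun n => coeff n M) := by
    have : (PowerSeries.mk fun n => coeff n M) = M := by ext n; simp
    rwa [this]
  obtain ⟨s0, s1, s2⟩ := mdata_tail hW hpos hd'
  rw [h0, one_pow, mul_one] at s2
  obtain ⟨K, R, hR, hb⟩ := hd.1.bound
  obtain ⟨ν, hp, hν, hmom⟩ := hM.exists_measure s0 hR hb
  have hmean : ∫ x, x ∂ν = 0 := by simpa [s1] using hmom 1
  have hvar : ∫ x, x ^ 2 ∂ν = 1 := by rw [hmom 2, s2]
  have hae : ∀ᵐ x ∂ν, |x| ≤ R := by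
    filter_upwards [compl_mem_ae_iff.2 hν] with x hx
    rw [compl_compl] at hx
    exact abs_le.2 hx
  refine ⟨ν, ⟨hp, ⟨R, hν⟩, ?_, hmean⟩, hvar, hW, hpos, ?_⟩
  · rintro a rfl
    simp at hmean hvar
    rw [hmean] at hvar
    norm_num at hvar
  have hsmall : ∀ᶠ w : ℝ in 𝓝 0, |w| * R < 1 := by
    have : Tendsto (fun w : ℝ => |w| * R) (𝓝 0) (𝓝 (|0| * R)) := by
      exact (Continuous.tendsto (by fun_prop) 0)
    exact this.eventually (gt_mem_nhds (by simp))
  have hall : ∀ᶠ m in 𝓝 0, 0 < W m ∧ |m / (W m + m ^ 2)| * R < 1 ∧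
      ∫ x, 1 / (1 - m / (W m + m ^ 2) * x) ∂ν = 1 + m ^ 2 / W m := by
    filter_upwards [hWpos, ht.eventually hsmall, hd.2, ht.eventually hd.1] with m h1 h2 h3 h4
    refine ⟨h1, h2, ?_⟩
    rw [← h3]
    have h5 := integral_geom hR hν h2
    simp only [hmom] at h5
    exact h5.unique h4
  obtain ⟨ε, hε, hall⟩ := Metric.eventually_nhds_iff.1 hall
  refine ⟨ε, hε, fun m hm => ?_⟩
  obtain ⟨h1, h2, h3⟩ := hall (show dist m 0 < ε by simpa using hm)
  have h4 : 0 < W m + m ^ 2 := by positivity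
  have hden : ∀ᵐ x ∂ν, 0 < 1 - m / (W m + m ^ 2) * x := by
    filter_upwards [hae] with x hx
    have : |m / (W m + m ^ 2) * x| < 1 := by
      rw [abs_mul]; exact lt_of_le_of_lt (by gcongr) h2
    linarith [le_abs_self (m / (W m + m ^ 2) * x)]
  have hone : ∫ x, cskKernel W m x ∂ν = 1 := by
    simp only [kernel_eq h1]
    rw [integral_const_mul, h3]
    field_simp
  refine ⟨?_, hone, ?_⟩
  · filter_upwards [hden] with x hx
    rw [kernel_eq h1]
    positivity
  · rcases eq_or_ne m 0 with rfl | hm0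
    · have : ∀ x, x * cskKernel W 0 x = x := fun x => by simp [cskKernel, h0]
      simp only [this]; exact hmean
    · have hintg : Integrable (fun x => cskKernel W m x) ν := by
        by_contra hc
        rw [integral_undef hc] at hone
        norm_num at hone
      have e : ∀ᵐ x ∂ν, x * cskKernel W m x
          = (W m + m ^ 2) / m * cskKernel W m x - W m / m := by
        filter_upwards [hden] with x hx
        rw [kernel_eq h1]
        have h5 := hx.ne'
        set w := m / (W m + m ^ 2) with hw
        have h6 : m = w * (W m + m ^ 2) := by rw [hw]; field_simp
        have h7 : (1 - w * x) * (1 / (1 - w * x)) = 1 := by field_simp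
        set q := 1 / (1 - w * x)
        have h8 : m * (x * (W m / (W m + m ^ 2) * q))
          = m * ((W m + m ^ 2) / m * (W m / (W m + m ^ 2) * q) - W m / m) := by
          have e1 : m * ((W m + m ^ 2) / m * (W m / (W m + m ^ 2) * q) - W m / m)
            = W m * q - W m := by
            have := h4.ne'
            field_simp
          have e2 : m * (x * (W m / (W m + m ^ 2) * q)) = w * x * W m * q := by
            rw [hw]; ring
          rw [e1, e2]
          linear_combination -(W m) * h7
        exact mul_left_cancel₀ hm0 h8
      rw [integral_congr_ae e, integral_sub (hintg.const_mul _) (integrable_const _),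
        integral_const_mul, hone]
      simp
      field_simp
      ring

theorem csk_inv_div {V : ℝ → ℝ} (hV : AnalyticAt ℝ V 0) (h0 : V 0 = 1) :
    AnalyticAt ℝ (fun m => m / V m) 0 ∧ Tendsto (fun m => m / V m) (𝓝 0) (𝓝 0) ∧
    ∃ ψ : ℝ → ℝ, AnalyticAt ℝ ψ 0 ∧ ψ 0 = 0 ∧ (∀ᶠ z in 𝓝 0, ψ z / V (ψ z) = z) ∧
      (∀ᶠ m in 𝓝 0, ψ (m / V m) = m) := by
  have ha : AnalyticAt ℝ (fun m => m / V m) 0 :=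
    analyticAt_id.div hV (by rw [h0]; exact one_ne_zero)
  refine ⟨ha, by simpa using ha.continuousAt.tendsto, ?_⟩
  refine exists_local_inverse ha (by simp) ?_
  have := (hasDerivAt_id (0:ℝ)).div hV.differentiableAt.hasDerivAt (by rw [h0]; exact one_ne_zero)
  simp only [h0, id, zero_mul, sub_zero, mul_one, one_pow, div_one] at this
  exact this

theorem transfer {V : ℝ → ℝ} (hV : AnalyticAt ℝ V 0) (h0 : V 0 = 1) {p : ℝ → Prop}
    (h : ∀ᶠ m in 𝓝 0, p (m / V m)) : ∀ᶠ z in 𝓝 0, p z := by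
  obtain ⟨_, _, ψ, hψ, hψ0, h1, _⟩ := csk_inv_div hV h0
  have ht : Tendsto ψ (𝓝 0) (𝓝 0) := by simpa [hψ0] using hψ.continuousAt.tendsto
  filter_upwards [h1, ht.eventually h] with z h2 h3
  rwa [h2] at h3

/-- `b` is the sequence of coefficients of `B` where `B (m / V m) = V m`. -/
def CRel (V : ℝ → ℝ) (b : ℕ → ℝ) : Prop :=
  AnalyticAt ℝ V 0 ∧ V 0 = 1 ∧
    ∃ B : ℝ → ℝ, HasPS B (PowerSeries.mk b) ∧ ∀ᶠ m in 𝓝 0, B (m / V m) = V m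

theorem exists_rel {V : ℝ → ℝ} (hV : AnalyticAt ℝ V 0) (h0 : V 0 = 1) : ∃ b, CRel V b := by
  obtain ⟨_, _, ψ, hψ, hψ0, _, h2⟩ := csk_inv_div hV h0
  have hB : AnalyticAt ℝ (fun z => V (ψ z)) 0 :=
    AnalyticAt.fun_comp (by rwa [hψ0]) hψ
  obtain ⟨P, hP⟩ := hB.exists_hasPS
  refine ⟨fun n => coeff n P, hV, h0, fun z => V (ψ z), ?_, ?_⟩
  · have : (PowerSeries.mk fun n => coeff n P) = P := by ext n; simp
    rwa [this]
  · filter_upwards [h2] with m h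
    rw [h]

theorem CRel.scale {V : ℝ → ℝ} {b : ℕ → ℝ} (h : CRel V b) (c : ℝ) :
    CRel (fun m => V (c * m)) (fun n => c ^ n * b n) := by
  obtain ⟨hV, h0, B, hB, hE⟩ := h
  have ht : Tendsto (fun m : ℝ => c * m) (𝓝 0) (𝓝 0) := by
    simpa using (continuous_const_mul c).tendsto 0
  refine ⟨?_, by simpa using h0, fun z => B (c * z), ?_, ?_⟩
  · exact AnalyticAt.fun_comp (g := V) (f := fun m => c * m) (by simpa using hV)
      (analyticAt_const.mul analyticAt_id)
  · filter_upwards [ht.eventually hB] with z hz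
    exact hasSum_of_eq hz fun n => by simp; ring
  · filter_upwards [ht.eventually hE] with m hm
    rw [← mul_div_assoc]; exact hm

theorem PSD.scale {b : ℕ → ℝ} (h : PSD b) (c : ℝ) : PSD fun n => c ^ n * b n := by
  intro n a
  refine le_of_le_of_eq (h n fun i => a i * c ^ i) ?_
  refine Finset.sum_congr rfl fun i _ => Finset.sum_congr rfl fun j _ => ?_
  ring

theorem sub_sq_pos {V : ℝ → ℝ} (hV : AnalyticAt ℝ V 0) (h0 : V 0 = 1) :
    ∀ᶠ m in 𝓝 0, 0 < V m ∧ 0 < V m - m ^ 2 := by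
  have h1 : ContinuousAt (fun m => V m - m ^ 2) 0 := hV.continuousAt.sub (by fun_prop)
  have h2 := h1.eventually (lt_mem_nhds (a := 0) (by simp [h0]))
  filter_upwards [h2] with m hm
  exact ⟨by nlinarith, hm⟩

theorem CRel.psd_of_memV {V : ℝ → ℝ} {b : ℕ → ℝ} (h : CRel V b)
    (hW : memV fun m => V m - m ^ 2) : PSD b := by
  obtain ⟨hV, h0, B, hB, hE⟩ := h
  obtain ⟨-, -, Mf, M, ⟨hM, hME⟩, hpsd⟩ := hW.char
  refine hpsd.boolean_inv ?_
  refine hM.unique ((hasPS_one.add (hasPS_id.mul ((hasPS_id.mul hB).mul hM))).congr ?_)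
  refine transfer hV h0 ?_
  filter_upwards [sub_sq_pos hV h0, hE, hME] with m h1 h2 h3
  simp only [sub_add_cancel] at h3
  rw [h2, h3]
  have := h1.1.ne'
  have := h1.2.ne'
  field_simp
  ring

theorem CRel.memV_of_psd {V : ℝ → ℝ} {b : ℕ → ℝ} (h : CRel V b) (hb : PSD b) :
    memV fun m => V m - m ^ 2 := by
  obtain ⟨hV, h0, B, hB, hE⟩ := h
  have hden : AnalyticAt ℝ (fun g => 1 - g ^ 2 * B g) 0 :=
    analyticAt_const.sub ((analyticAt_id.pow 2).mul hB.analyticAt)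
  have ha : AnalyticAt ℝ (fun g => 1 / (1 - g ^ 2 * B g)) 0 :=
    analyticAt_const.div hden (by simp)
  obtain ⟨M, hM⟩ := ha.exists_hasPS
  have hne : ∀ᶠ g in 𝓝 0, 1 - g ^ 2 * B g ≠ 0 :=
    hden.continuousAt.eventually_ne (by simp)
  have eq : M = 1 + X * (X * PowerSeries.mk b * M) := by
    refine hM.unique ((hasPS_one.add (hasPS_id.mul ((hasPS_id.mul hB).mul hM))).congr ?_)
    filter_upwards [hne] with g hg
    field_simp
    ring
  refine memV.of_char (hV.sub (analyticAt_id.pow 2)) (by simp [h0]) ⟨hM, ?_⟩ (hb.boolean_fwd eq)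
  filter_upwards [sub_sq_pos hV h0, hE] with m h1 h2
  simp only [sub_add_cancel]
  rw [h2]
  have h3 := h1.1.ne'
  have h4 := h1.2.ne'
  have h5 : 1 - (m / V m) ^ 2 * V m = (V m - m ^ 2) / V m := by
    field_simp
  rw [h5]
  field_simp
  ring

theorem CRel.sys {V : ℝ → ℝ} {b : ℕ → ℝ} (h : CRel V b) {Mf M} (hd : MData V Mf M) :
    ∃ D : ℕ → PowerSeries ℝ, M = 1 + X * (M * D 0) ∧
      ∀ e, D e = X * (M * (C (b e) + D (e + 1))) := by
  obtain ⟨hV, h0, B, hB, hE⟩ := h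
  obtain ⟨hM, hME⟩ := hd
  obtain ⟨F, hF0, hF⟩ := hB.tails
  have hg : AnalyticAt ℝ (fun z => z * Mf z) 0 := analyticAt_id.mul hM.analyticAt
  have hgt : Tendsto (fun z => z * Mf z) (𝓝 0) (𝓝 0) := by simpa using hg.continuousAt.tendsto
  have hDa : ∀ e, AnalyticAt ℝ (fun z => z * Mf z * F e (z * Mf z)) 0 := fun e =>
    hg.mul (AnalyticAt.fun_comp (g := F e) (f := fun z => z * Mf z)
      (by simpa using (hF e).1.analyticAt) hg)
  choose D hD using fun e => (hDa e).exists_hasPS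
  refine ⟨D, ?_, fun e => ?_⟩
  · refine hM.unique ((hasPS_one.add (hasPS_id.mul (hM.mul (hD 0)))).congr ?_)
    refine transfer (V := fun m => V m + m ^ 2) (hV.add (analyticAt_id.pow 2)) (by simp [h0]) ?_
    filter_upwards [sub_sq_pos hV h0, hE, hME] with m h1 h2 h3
    have h4 := h1.1
    have h5 : V m + m ^ 2 ≠ 0 := by positivity
    have h6 : m / (V m + m ^ 2) * (1 + m ^ 2 / V m) = m / V m := by
      field_simp
    rw [h3, h6, hF0, h2, ← mul_assoc, h6]
    field_simp
  · refine (hD e).unique ((hasPS_id.mul (hM.mul ((hasPS_const (b e)).add (hD (e + 1))))).congr ?_)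
    filter_upwards [hgt.eventually (hF e).2] with z hz
    rw [hz]; ring

theorem CRel.memV_self {V : ℝ → ℝ} {b : ℕ → ℝ} (h : CRel V b) (hb : PSD b) : memV V := by
  have hV := h.1
  have h0 := h.2.1
  obtain ⟨_, _, ψ, hψ, hψ0, _, h2⟩ := csk_inv_div (V := fun m => V m + m ^ 2)
    (hV.add (analyticAt_id.pow 2)) (by simp [h0])
  have hVψ : AnalyticAt ℝ (fun z => V (ψ z)) 0 :=
    AnalyticAt.fun_comp (by rwa [hψ0]) hψ
  have hMa : AnalyticAt ℝ (fun z => 1 + ψ z ^ 2 / V (ψ z)) 0 :=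
    analyticAt_const.add ((hψ.pow 2).div hVψ (by simp [hψ0, h0]))
  obtain ⟨M, hM⟩ := hMa.exists_hasPS
  have hd : MData V (fun z => 1 + ψ z ^ 2 / V (ψ z)) M := by
    refine ⟨hM, ?_⟩
    filter_upwards [h2] with m hm
    rw [hm]
  obtain ⟨D, hD1, hD2⟩ := h.sys hd
  exact memV.of_char hV h0 hd (hb.fock hD1 hD2)

theorem tendsto_coeff_mul {P Q : ℕ → PowerSeries ℝ} {P' Q' : PowerSeries ℝ} {n : ℕ}
    (hP : ∀ i ≤ n, Tendsto (fun k => coeff i (P k)) atTop (𝓝 (coeff i P')))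
    (hQ : ∀ i ≤ n, Tendsto (fun k => coeff i (Q k)) atTop (𝓝 (coeff i Q'))) :
    Tendsto (fun k => coeff n (P k * Q k)) atTop (𝓝 (coeff n (P' * Q'))) := by
  simp only [coeff_mul]
  refine tendsto_finsetSum _ fun p hp => ?_
  have := Finset.HasAntidiagonal.mem_antidiagonal.1 hp
  exact (hP _ (by omega)).mul (hQ _ (by omega))

theorem CRel.psd_of_memVinf {V : ℝ → ℝ} {b : ℕ → ℝ} (h : CRel V b) (hV : memVinf V) : PSD b := by
  have key : ∀ t : ℝ, 0 < t → ∃ (M : PowerSeries ℝ) (D : ℕ → PowerSeries ℝ),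
      (PSD fun n => coeff n M) ∧ M = 1 + C (t ^ 2) * (X * (M * D 0)) ∧
      ∀ e, D e = X * (M * (C (b e) + D (e + 1))) := by
    intro t ht
    obtain ⟨-, -, Mf, M, hd, hpsd⟩ := (hV t⁻¹).char
    obtain ⟨D, hD1, hD2⟩ := (h.scale t⁻¹).sys hd
    have hCC : ∀ x y : ℝ, C x * C y = (C (x * y) : PowerSeries ℝ) := fun x y => (map_mul C x y).symm
    have hCr : ∀ x : ℝ, rescale t (C x) = C x := fun x => by
      ext n; rw [coeff_rescale, coeff_C]; split_ifs with hn <;> simp [hn]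
    have hXr : rescale t (X : PowerSeries ℝ) = C t * X := by
      ext n; rw [coeff_rescale, coeff_C_mul, coeff_X]; split_ifs with hn <;> simp [hn]
    refine ⟨rescale t M, fun e => C (t ^ e * t⁻¹) * rescale t (D e), ?_, ?_, fun e => ?_⟩
    · simpa only [coeff_rescale] using hpsd.scale t
    · conv_lhs => rw [hD1]
      rw [map_add, map_one, map_mul (rescale t), map_mul (rescale t), hXr]
      have : C (t ^ 2) * C (t ^ 0 * t⁻¹) = (C t : PowerSeries ℝ) := by
        rw [hCC]; congr 1; field_simp
      linear_combination -(X * rescale t M * rescale t (D 0)) * this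
    · beta_reduce
      conv_lhs => rw [hD2 e]
      rw [map_mul (rescale t), map_mul (rescale t), map_add, hXr, hCr]
      have h1 : C (t ^ e * t⁻¹) * C t * C (t⁻¹ ^ e * b e) = (C (b e) : PowerSeries ℝ) := by
        rw [hCC, hCC, inv_pow]; congr 1; field_simp
      have h2 : C (t ^ e * t⁻¹) * C t = (C (t ^ (e + 1) * t⁻¹) : PowerSeries ℝ) := by
        rw [hCC, pow_succ]; congr 1; ring
      linear_combination X * rescale t M * h1 + X * rescale t M * rescale t (D (e + 1)) * h2
  have tpos : ∀ k : ℕ, (0:ℝ) < 1 / ((k:ℝ) + 1) := fun k => by positivity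
  have tlim : Tendsto (fun k : ℕ => 1 / ((k:ℝ) + 1)) atTop (𝓝 0) :=
    tendsto_one_div_add_atTop_nhds_zero_nat
  choose M D hpsd hM hD using fun k : ℕ => key _ (tpos k)
  set t : ℕ → ℝ := fun k => 1 / ((k:ℝ) + 1) with ht
  have t2lim : Tendsto (fun k => t k ^ 2) atTop (𝓝 0) := by simpa using tlim.pow 2
  set D' : ℕ → PowerSeries ℝ := fun e => X * PowerSeries.mk fun k => b (e + k) with hD'
  have D'eq : ∀ e, D' e = X * (1 * (C (b e) + D' (e + 1))) := fun e => by
    simp only [hD']; rw [mk_tail b e, one_mul]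
  have conv : ∀ n, (∀ i < n, Tendsto (fun k => coeff i (M k)) atTop (𝓝 (coeff i (1 : PowerSeries ℝ))))
      ∧ ∀ e, ∀ i < n, Tendsto (fun k => coeff i (D k e)) atTop (𝓝 (coeff i (D' e))) := by
    intro n
    induction n with
    | zero => exact ⟨fun i hi => by omega, fun e i hi => by omega⟩
    | succ n ih =>
      rcases n with _ | n
      · refine ⟨fun i hi => ?_, fun e i hi => ?_⟩
        · obtain rfl : i = 0 := by omega
          refine Tendsto.congr (f₁ := fun _ => 1) (fun k => ?_) (by simp)
          rw [hM k]; simp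
        · obtain rfl : i = 0 := by omega
          refine Tendsto.congr (f₁ := fun _ => 0) (fun k => ?_) (by simp [hD'])
          rw [hD k e]; simp
      · have hm : ∀ i ≤ n, Tendsto (fun k => coeff i (M k)) atTop (𝓝 (coeff i (1 : PowerSeries ℝ))) :=
          fun i hi => ih.1 i (by omega)
        have hd : ∀ e, ∀ i ≤ n, Tendsto (fun k => coeff i (D k e)) atTop (𝓝 (coeff i (D' e))) :=
          fun e i hi => ih.2 e i (by omega)
        refine ⟨fun i hi => ?_, fun e i hi => ?_⟩
        · rcases Nat.lt_succ_iff_lt_or_eq.1 hi with hi | rfl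
          · exact ih.1 i hi
          · have h1 := t2lim.mul (tendsto_coeff_mul hm (hd 0))
            rw [zero_mul] at h1
            refine Tendsto.congr (fun k => ?_) (by simpa [coeff_one] using h1)
            conv_rhs => rw [hM k]
            rw [map_add, coeff_C_mul, coeff_succ_X_mul]
            simp [coeff_one, ht]
        · rcases Nat.lt_succ_iff_lt_or_eq.1 hi with hi | rfl
          · exact ih.2 e i hi
          · have h1 : ∀ i ≤ n, Tendsto (fun k => coeff i (C (b e) + D k (e + 1))) atTop
                (𝓝 (coeff i (C (b e) + D' (e + 1)))) := fun i hi => by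
              simp only [map_add]
              exact tendsto_const_nhds.add (hd (e + 1) i hi)
            have h2 := tendsto_coeff_mul hm h1
            rw [← coeff_succ_X_mul, ← D'eq] at h2
            refine Tendsto.congr (fun k => ?_) h2
            rw [← coeff_succ_X_mul, ← hD k e]
  have lim : ∀ n, Tendsto (fun k => coeff (n + 1) (M k * D k 0)) atTop (𝓝 (b n)) := by
    intro n
    have := tendsto_coeff_mul (n := n + 1) (fun i hi => (conv (n + 2)).1 i (by omega))
      (fun i hi => (conv (n + 2)).2 0 i (by omega))
    simpa [hD', coeff_succ_X_mul] using this
  intro n a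
  have hlim : Tendsto (fun k => ∑ i ∈ Finset.range n, ∑ j ∈ Finset.range n,
      a i * a j * coeff (i + j + 1) (M k * D k 0)) atTop
      (𝓝 (∑ i ∈ Finset.range n, ∑ j ∈ Finset.range n, a i * a j * b (i + j))) :=
    tendsto_finsetSum _ fun i _ => tendsto_finsetSum _ fun j _ => (lim (i + j)).const_mul _
  refine ge_of_tendsto' hlim fun k => ?_
  have h1 := (hpsd k).sum_shift n a 1
  have h2 : ∀ q, coeff (q + 2) (M k) = t k ^ 2 * coeff (q + 1) (M k * D k 0) := fun q => by
    conv_lhs => rw [hM k]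
    rw [map_add, coeff_C_mul, coeff_succ_X_mul]
    simp [coeff_one, ht]
  have h3 : ∑ i ∈ Finset.range n, ∑ j ∈ Finset.range n, a i * a j * coeff (i + j + 2 * 1) (M k)
      = t k ^ 2 * ∑ i ∈ Finset.range n, ∑ j ∈ Finset.range n,
        a i * a j * coeff (i + j + 1) (M k * D k 0) := by
    simp only [Finset.mul_sum, mul_one, h2]
    refine Finset.sum_congr rfl fun i _ => Finset.sum_congr rfl fun j _ => ?_
    ring
  rw [h3] at h1
  exact nonneg_of_mul_nonneg_right h1 (pow_pos (tpos k) 2)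

/-- The map `V ↦ (m ↦ V(m) − m²)` is a bijection of `𝒱∞` onto `𝒱`. -/
theorem bijOn_sub_sq :
    Set.BijOn (fun V : ℝ → ℝ => fun m => V m - m ^ 2)
      {V | memVinf V} {V | memV V} := by
  refine ⟨fun V hV => ?_, fun V _ W _ h => ?_, fun W hW => ?_⟩
  · have h1 : memV V := by simpa using hV 1
    obtain ⟨ha, h0, -⟩ := h1.char
    obtain ⟨b, hb⟩ := exists_rel ha h0
    exact hb.memV_of_psd (hb.psd_of_memVinf hV)
  · funext m
    have := congrFun h m
    simpa using this
  · obtain ⟨ha, h0, -⟩ := memV.char hW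
    obtain ⟨b, hb⟩ := exists_rel (V := fun m => W m + m ^ 2) (ha.add (analyticAt_id.pow 2))
      (by simp [h0])
    have hW' : (fun m => (W m + m ^ 2) - m ^ 2) = W := by funext m; ring
    have hp : PSD b := hb.psd_of_memV (by rw [hW']; exact hW)
    exact ⟨fun m => W m + m ^ 2, fun c => (hb.scale c).memV_self (hp.scale c), hW'⟩
end
end

section
/- Let ω be a probability measure on ℝ, let α > 0 and β ∈ ℝ. Then there exists a non-degenerate probability measure μ on ℝ such that for every z in the upper half-plane ℂ⁺, G_μ(z) = 1/(z − β − α·G_ω(z)); equivalently, F_μ(z) = z − β − α/F_ω(z) where F_μ = 1/G_μ. (Note that Im G_ω(z) < 0 for z ∈ ℂ⁺, so the denominator is nonzero.) -/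
open MeasureTheory

noncomputable section

/-- The Cauchy–Stieltjes transform `G_μ(z) = ∫ (z − x)⁻¹ dμ(x)`. -/
def cauchyG (μ : Measure ℝ) (z : ℂ) : ℂ := ∫ x, (z - (x : ℂ))⁻¹ ∂μ

open Filter Topology

lemma sub_ne_of_im {z : ℂ} (hz : 0 < z.im) (x : ℝ) : z - (x : ℂ) ≠ 0 := by
  intro h
  have := congrArg Complex.im h
  simp at this
  exact hz.ne' this

lemma norm_inv_sub_le {z : ℂ} (hz : 0 < z.im) (x : ℝ) : ‖(z - (x : ℂ))⁻¹‖ ≤ z.im⁻¹ := by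
  rw [norm_inv]
  apply inv_anti₀ hz
  have := Complex.abs_im_le_norm (z - (x : ℂ))
  simp only [Complex.sub_im, Complex.ofReal_im, sub_zero] at this
  exact (le_abs_self _).trans this

lemma continuous_inv_sub {z : ℂ} (hz : 0 < z.im) :
    Continuous (fun x : ℝ => (z - (x : ℂ))⁻¹) := by
  apply Continuous.inv₀ (by fun_prop)
  exact sub_ne_of_im hz

lemma integrable_inv_sub (μ : Measure ℝ) [IsFiniteMeasure μ] {z : ℂ} (hz : 0 < z.im) :
    Integrable (fun x : ℝ => (z - (x : ℂ))⁻¹) μ :=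
  Integrable.of_bound (continuous_inv_sub hz).aestronglyMeasurable z.im⁻¹
    (Eventually.of_forall (norm_inv_sub_le hz))

lemma im_inv_sub_neg {z : ℂ} (hz : 0 < z.im) (x : ℝ) : (z - (x : ℂ))⁻¹.im < 0 := by
  rw [Complex.inv_im]
  have := Complex.normSq_pos.2 (sub_ne_of_im hz x)
  simp only [Complex.sub_im, Complex.ofReal_im, sub_zero]
  exact div_neg_of_neg_of_pos (by linarith) this

lemma cauchyG_im_neg (μ : Measure ℝ) [IsProbabilityMeasure μ] {z : ℂ} (hz : 0 < z.im) :
    (cauchyG μ z).im < 0 := by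
  have h1 : (cauchyG μ z).im = ∫ x : ℝ, ((z - (x : ℂ))⁻¹).im ∂μ := by
    have := integral_im (integrable_inv_sub μ hz)
    simpa [cauchyG] using this.symm
  have hi : Integrable (fun x : ℝ => ((z - (x : ℂ))⁻¹).im) μ := (integrable_inv_sub μ hz).im
  have : 0 < ∫ x : ℝ, -((z - (x : ℂ))⁻¹).im ∂μ := by
    have hi' : Integrable (fun x : ℝ => -((z - (x : ℂ))⁻¹).im) μ := hi.neg
    have hnn : 0 ≤ (fun x : ℝ => -((z - (x : ℂ))⁻¹).im) := fun x =>
      (neg_pos.2 (im_inv_sub_neg hz x)).le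
    rw [integral_pos_iff_support_of_nonneg hnn hi']
    have : Function.support (fun x : ℝ => -((z - (x : ℂ))⁻¹).im) = Set.univ := by
      ext x
      simpa only [Function.mem_support, Set.mem_univ, iff_true, ne_eq, neg_eq_zero] using (im_inv_sub_neg hz x).ne
    rw [this]; simp
  rw [integral_neg] at this
  linarith

lemma spectral_measure {E : Type*} [NormedAddCommGroup E] [InnerProductSpace ℂ E]
    [FiniteDimensional ℂ E] (T : E →ₗ[ℂ] E) (hT : T.IsSymmetric) (e : E) (he : ‖e‖ = 1) :
    ∃ μ : Measure ℝ, IsProbabilityMeasure μ ∧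
      (∀ z : ℂ, 0 < z.im → ∀ h : E, z • h - T h = e → cauchyG μ z = inner ℂ e h) ∧
      ∫⁻ x, ‖x‖ₑ ^ 2 ∂μ = ENNReal.ofReal (‖T e‖ ^ 2) := by
  set b := hT.eigenvectorBasis rfl with hb
  set l := hT.eigenvalues rfl with hl
  have hTb : ∀ v i, b.repr (T v) i = l i * b.repr v i := fun v i =>
    hT.eigenvectorBasis_apply_self_apply rfl v i
  have hnorm : ∀ v : E, ∑ i, ‖b.repr v i‖ ^ 2 = ‖v‖ ^ 2 := fun v => by
    rw [← b.repr.norm_map v, EuclideanSpace.norm_sq_eq]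
  refine ⟨∑ i, ENNReal.ofReal (‖b.repr e i‖ ^ 2) • Measure.dirac (l i), ⟨?_⟩, ?_, ?_⟩
  · simp only [Measure.finsetSum_apply, Measure.smul_apply, measure_univ, smul_eq_mul, mul_one]
    rw [← ENNReal.ofReal_sum_of_nonneg (fun _ _ => by positivity), hnorm, he]; simp
  · intro z hz h hh
    have hc : ∀ i, b.repr h i = (z - l i)⁻¹ * b.repr e i := by
      intro i
      have := congrArg (fun v => b.repr v i) hh
      simp only [map_sub, map_smul, PiLp.sub_apply, PiLp.smul_apply, hTb, smul_eq_mul] at this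
      rw [← this]
      field_simp [sub_ne_of_im hz (l i)]
    rw [cauchyG, integral_finsetSum_measure]
    · rw [← b.repr.inner_map_map, PiLp.inner_apply]
      refine Finset.sum_congr rfl fun i _ => ?_
      rw [integral_smul_measure, integral_dirac, ENNReal.toReal_ofReal (by positivity), hc]
      simp only [RCLike.inner_apply, Complex.real_smul]
      rw [mul_assoc, Complex.mul_conj, Complex.normSq_eq_norm_sq, mul_comm]
    · intro i _
      exact (integrable_inv_sub _ hz).smul_measure (by simp)
  · rw [lintegral_finsetSum_measure, ← hnorm, ENNReal.ofReal_sum_of_nonneg (fun _ _ => by positivity)]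
    refine Finset.sum_congr rfl fun i _ => ?_
    rw [lintegral_smul_measure, lintegral_dirac, hTb, norm_mul, mul_pow,
      ENNReal.ofReal_mul (by positivity), smul_eq_mul, mul_comm]
    congr 1
    rw [ENNReal.ofReal_pow (by positivity)]
    simp [Real.enorm_eq_ofReal_abs]

/-- The Jacobi-type matrix. -/
def bordered {ι : Type*} [DecidableEq ι] (β : ℝ) (c x : ι → ℝ) : Matrix (Option ι) (Option ι) ℂ
  | none, none => β
  | none, some i => c i
  | some i, none => c i
  | some i, some j => if i = j then (x i : ℂ) else 0

lemma finite_case {ι : Type*} [Fintype ι] [DecidableEq ι] (α β : ℝ) (hα : 0 < α) (w x : ι → ℝ)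
    (hw : ∀ i, 0 ≤ w i) (hw1 : ∑ i, w i = 1) :
    ∃ μ : Measure ℝ, IsProbabilityMeasure μ ∧
      (∀ z : ℂ, 0 < z.im → z - β - α * ∑ i, w i * (z - x i)⁻¹ ≠ 0 →
        cauchyG μ z = 1 / (z - β - α * ∑ i, w i * (z - x i)⁻¹)) ∧
      ∫⁻ x, ‖x‖ₑ ^ 2 ∂μ = ENNReal.ofReal (β ^ 2 + α) := by
  set c : ι → ℝ := fun i => √(α * w i) with hc
  have hc2 : ∀ i, c i ^ 2 = α * w i := fun i => Real.sq_sqrt (mul_nonneg hα.le (hw i))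
  set A := bordered β c x with hA
  have hH : A.IsHermitian := by
    ext i j
    rcases i with _ | i <;> rcases j with _ | j <;> simp [hA, bordered, Matrix.conjTranspose_apply]
    by_cases h : i = j
    · subst h; simp
    · simp [h, Ne.symm h]
  have hS : (Matrix.toEuclideanLin A).IsSymmetric := Matrix.isSymmetric_toEuclideanLin_iff.2 hH
  obtain ⟨μ, h1, h2, h3⟩ := spectral_measure (Matrix.toEuclideanLin A) hS
    (EuclideanSpace.single none 1) (by simp)
  refine ⟨μ, h1, ?_, ?_⟩
  · intro z hz hne
    set g := 1 / (z - β - α * ∑ i, w i * (z - x i)⁻¹) with hg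
    rw [h2 z hz (WithLp.toLp 2 (fun o => o.elim g (fun i => c i * g * (z - x i)⁻¹)))]
    · rw [EuclideanSpace.inner_single_left]; simp
    · ext o
      have hg1 : z * g - β * g - α * (∑ i, w i * (z - x i)⁻¹) * g = 1 := by
        rw [hg, ← sub_mul, ← sub_mul]
        exact mul_one_div_cancel hne
      rcases o with _ | i
      · simp [Matrix.toLpLin_apply, Matrix.mulVec, dotProduct, hA, bordered]
        rw [← hg1, Finset.mul_sum, Finset.sum_mul, ← sub_sub]
        congr 1
        refine Finset.sum_congr rfl fun i _ => ?_
        have : (c i : ℂ) ^ 2 = α * w i := by exact_mod_cast hc2 i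
        linear_combination g * (z - x i)⁻¹ * this
      · simp [Matrix.toLpLin_apply, Matrix.mulVec, dotProduct, hA, bordered]
        field_simp [sub_ne_of_im hz (x i)]
        ring
  · rw [h3, EuclideanSpace.norm_sq_eq]
    congr 1
    simp [Matrix.toLpLin_apply, Matrix.mulVec, dotProduct, hA, bordered, Fintype.sum_option]
    simp [hc2, ← Finset.mul_sum, hw1]

lemma cauchyG_simple (ω : Measure ℝ) [IsProbabilityMeasure ω] (f : SimpleFunc ℝ ℝ) (z : ℂ) :
    ∫ t, (z - (f t : ℂ))⁻¹ ∂ω = ∑ y : f.range, (ω.real (f ⁻¹' {y.1}) : ℂ) * (z - (y.1 : ℂ))⁻¹ := by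
  rw [Finset.sum_coe_sort f.range (fun y : ℝ => (ω.real (f ⁻¹' {y}) : ℂ) * (z - (y : ℂ))⁻¹)]
  have : ∀ t, (z - (f t : ℂ))⁻¹ = ∑ y ∈ f.range, (f ⁻¹' {y}).indicator (fun _ => (z - (y : ℂ))⁻¹) t := by
    intro t
    rw [Finset.sum_eq_single (f t)]
    · simp
    · intro y _ hy
      simp [Set.indicator, hy.symm]
    · intro h; simp at h
  simp_rw [this]
  rw [integral_finsetSum]
  · refine Finset.sum_congr rfl fun y _ => ?_
    rw [integral_indicator_const _ (f.measurableSet_fiber y), Complex.real_smul]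
  · intro y _
    exact (integrable_const _).indicator (f.measurableSet_fiber y)

lemma simple_weights (ω : Measure ℝ) [IsProbabilityMeasure ω] (f : SimpleFunc ℝ ℝ) :
    ∑ y : f.range, ω.real (f ⁻¹' {y.1}) = 1 := by
  rw [Finset.sum_coe_sort f.range (fun y : ℝ => ω.real (f ⁻¹' {y}))]
  have := f.sum_range_measure_preimage_singleton ω
  rw [measure_univ] at this
  simp only [Measure.real]
  rw [← ENNReal.toReal_sum (by simp), this]; simp

lemma denom_im (ω : Measure ℝ) [IsProbabilityMeasure ω] {α : ℝ} (β : ℝ) (hα : 0 < α) {z : ℂ}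
    (hz : 0 < z.im) : z - (β : ℂ) - (α : ℂ) * cauchyG ω z ≠ 0 := by
  intro h
  have := congrArg Complex.im h
  simp at this
  nlinarith [cauchyG_im_neg ω hz]

lemma tight_of_moment (ν : ℕ → ProbabilityMeasure ℝ) (C : ENNReal) (hC : C ≠ ⊤)
    (h : ∀ n, ∫⁻ x, ‖x‖ₑ ^ 2 ∂(ν n : Measure ℝ) ≤ C) :
    IsTightMeasureSet {((μ : ProbabilityMeasure ℝ) : Measure ℝ) | μ ∈ Set.range ν} := by
  apply isTightMeasureSet_of_tendsto_measure_norm_gt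
  have hlim : Tendsto (fun r : ℝ => C / ENNReal.ofReal r ^ 2) atTop (𝓝 0) := by
    have : Tendsto (fun r : ℝ => ENNReal.ofReal r ^ 2) atTop (𝓝 ⊤) := by
      have := (ENNReal.continuous_pow 2).tendsto ⊤ |>.comp ENNReal.tendsto_ofReal_atTop
      simpa [Function.comp_def] using this
    have := ENNReal.Tendsto.const_div this (a := C) (Or.inr hC)
    simpa using this
  refine tendsto_of_tendsto_of_tendsto_of_le_of_le' tendsto_const_nhds hlim
    (Eventually.of_forall fun _ => zero_le) ?_
  filter_upwards [eventually_gt_atTop 0] with r hr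
  refine iSup₂_le ?_
  rintro _ ⟨_, ⟨n, rfl⟩, rfl⟩
  have hr' : ENNReal.ofReal r ^ 2 ≠ 0 := by simpa using hr
  rw [ENNReal.le_div_iff_mul_le (Or.inl hr') (Or.inl (by simp)), mul_comm]
  refine le_trans ?_ (h n)
  refine le_trans ?_ (mul_meas_ge_le_lintegral₀ (by fun_prop) (ENNReal.ofReal r ^ 2))
  refine mul_le_mul_right (measure_mono ?_) _
  intro x hx
  simp only [Set.mem_setOf_eq] at hx ⊢
  rw [← ofReal_norm_eq_enorm]
  gcongr

theorem exists_measure_F_transform (ω : Measure ℝ) (hω : IsProbabilityMeasure ω)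
    (α β : ℝ) (hα : 0 < α) :
    ∃ μ : Measure ℝ, IsProbabilityMeasure μ ∧ (∀ a : ℝ, μ ≠ Measure.dirac a) ∧
      ∀ z : ℂ, 0 < z.im →
        cauchyG μ z = 1 / (z - (β : ℂ) - (α : ℂ) * cauchyG ω z) := by
  let f : ℕ → SimpleFunc ℝ ℝ := (measurable_id.stronglyMeasurable : StronglyMeasurable (id : ℝ → ℝ)).approx
  have hf : ∀ t : ℝ, Tendsto (fun n => f n t) atTop (𝓝 t) :=
    (measurable_id.stronglyMeasurable : StronglyMeasurable (id : ℝ → ℝ)).tendsto_approx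
  have key : ∀ n, ∃ μ : Measure ℝ, IsProbabilityMeasure μ ∧
      (∀ z : ℂ, 0 < z.im → cauchyG μ z = 1 / (z - β - α * cauchyG (ω.map (f n)) z)) ∧
      ∫⁻ x, ‖x‖ₑ ^ 2 ∂μ = ENNReal.ofReal (β ^ 2 + α) := by
    intro n
    have : IsProbabilityMeasure (ω.map (f n)) :=
      Measure.isProbabilityMeasure_map (f n).measurable.aemeasurable
    obtain ⟨μ, h1, h2, h3⟩ := finite_case α β hα (fun y : (f n).range => ω.real (f n ⁻¹' {y.1}))
      (fun y => y.1) (fun _ => measureReal_nonneg) (simple_weights ω (f n))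
    refine ⟨μ, h1, fun z hz => ?_, h3⟩
    have e : cauchyG (ω.map (f n)) z =
        ∑ y : (f n).range, (ω.real (f n ⁻¹' {y.1}) : ℂ) * (z - (y.1 : ℂ))⁻¹ := by
      rw [← cauchyG_simple, cauchyG, integral_map (f n).measurable.aemeasurable
        (continuous_inv_sub hz).aestronglyMeasurable]
    have hd := denom_im (ω.map (f n)) β hα hz
    rw [e] at hd ⊢
    exact h2 z hz hd
  choose m hm1 hm2 hm3 using key
  let ν : ℕ → ProbabilityMeasure ℝ := fun n => ⟨m n, hm1 n⟩
  have hcomp := isCompact_closure_of_isTightMeasureSet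
    (tight_of_moment ν _ ENNReal.ofReal_ne_top (fun n => (hm3 n).le))
  let U : Ultrafilter ℕ := Ultrafilter.of atTop
  have hU : (U : Filter ℕ) ≤ atTop := Ultrafilter.of_le atTop
  obtain ⟨μ, -, hμ⟩ := hcomp.ultrafilter_le_nhds (U.map ν) (by
    rw [le_principal_iff]
    exact Filter.mem_of_superset (Filter.range_mem_map) subset_closure)
  have hμ' : Tendsto ν U (𝓝 μ) := hμ
  rw [ProbabilityMeasure.tendsto_iff_forall_integral_rclike_tendsto ℂ] at hμ'
  have hG : ∀ z : ℂ, 0 < z.im →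
      cauchyG μ z = 1 / (z - (β : ℂ) - (α : ℂ) * cauchyG ω z) := by
    intro z hz
    have t1 := hμ' (BoundedContinuousFunction.ofNormedAddCommGroup _ (continuous_inv_sub hz) _
      (norm_inv_sub_le hz))
    have t1' : Tendsto (fun n => cauchyG (m n) z) U (𝓝 (cauchyG μ z)) := t1
    have t2 : Tendsto (fun n => cauchyG (ω.map (f n)) z) atTop (𝓝 (cauchyG ω z)) := by
      have : ∀ n, cauchyG (ω.map (f n)) z = ∫ t, (z - (f n t : ℂ))⁻¹ ∂ω := fun n => by
        rw [cauchyG, integral_map (f n).measurable.aemeasurable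
          (continuous_inv_sub hz).aestronglyMeasurable]
      simp_rw [this]
      apply tendsto_integral_of_dominated_convergence (fun _ => z.im⁻¹)
      · intro n
        exact ((continuous_inv_sub hz).measurable.comp (f n).measurable).aestronglyMeasurable
      · exact integrable_const _
      · intro n
        exact Eventually.of_forall fun t => norm_inv_sub_le hz _
      · exact Eventually.of_forall fun t => ((continuous_inv_sub hz).tendsto t).comp (hf t)
    have t3 : Tendsto (fun n => cauchyG (m n) z) U
        (𝓝 (1 / (z - (β : ℂ) - (α : ℂ) * cauchyG ω z))) := by
      simp_rw [fun n => hm2 n z hz]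
      exact (tendsto_const_nhds.div (tendsto_const_nhds.sub (tendsto_const_nhds.mul t2))
        (denom_im ω β hα hz)).mono_left hU
    exact tendsto_nhds_unique t1' t3
  refine ⟨μ, inferInstance, ?_, hG⟩
  intro a ha
  have hI : 0 < Complex.I.im := by simp
  have h := hG Complex.I hI
  rw [ha, cauchyG, integral_dirac, one_div] at h
  have h' := inv_injective h
  have := congrArg Complex.im h'
  simp at this
  nlinarith [cauchyG_im_neg ω hI]
end
end
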